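/- arXiv:1207.0391 — 2 statements merged into one kernel-verified Lean document; each statement's English description precedes it below -/
import Mathlib

section
/- Let {𝔞_i}_{i ∈ I} be a family of saturated ideals of the ring O(ℝⁿ) of real-analytic functions on ℝⁿ that is locally finite, meaning that the family of zero sets {Z(𝔞_i)}_{i ∈ I} is locally finite in ℝⁿ (every point of ℝⁿ has a neighbourhood meeting Z(𝔞_i) for only finitely many i). Let 𝔭 be a prime saturated ideal of O(ℝⁿ) such that ⋂_{i ∈ I} 𝔞_i ⊆ 𝔭. Then there exists i ∈ I with 𝔞_i ⊆ 𝔭. -/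
/-!
Pick `x ∈ Z(𝔭)`, which exists because a saturated ideal without zeros contains `1`. Only finitely
many `Z(𝔞_i)` contain `x`. If none of the ideals were contained in `𝔭`, multiply elements
`f_i ∈ 𝔞_i` outside `𝔭` for these finitely many `i`, and multiply further by one analytic function
`H` with `H(x) ≠ 0` lying in all the other `𝔞_i` (`exists_mem_iInter_ne_zero`). The result lies in `⋂ 𝔞_i ⊆ 𝔭`,
so by primality `H ∈ 𝔭`, contradicting `H(x) ≠ 0`.

The substance is the existence of `H`, a real-analytic Weierstrass product
(`exists_infinite_product`). The ideals are grouped into finite groups by the radius at which their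
zero sets first appear; the `k`-th group has a common element `g_k` (a product of sums of squares)
that is positive on the closed ball of radius `k + 2` and at `x`. It has to be corrected by a factor
`exp (-u_k)`, with `u_k` analytic on `ℝⁿ`, so that the infinite product converges to an analytic
function. Convergence in the real domain is not enough, so the correction is made in the complex
domain, by the Bochner–Martinelli formula with a damped kernel.

Let `Φ` be a holomorphic extension of `log g_k` to a tube around the ball (`complexify`), cut off by
`χ₁(Re ζ) χ₂(Im ζ)`. The kernel with pole at the real point `x` is multiplied by
`(1 + ∑ (ζ_j - x_j)²) ^ (-N)`, which is holomorphic in `ζ` near `ℝⁿ`, equals `1` at the pole, and is at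
most `(2/3) ^ N` in modulus when `|ζ - x| ≥ 1` and `|Im ζ| ≤ 1/2`. The formula splits `log g_k` into two
integrals (`splitting`). The one coming from the derivative of `χ₂` is supported off `ℝⁿ` and analytic
on all of `ℝⁿ`; its real part is `u_k`. The one coming from the derivative of `χ₁` lives over real parts
of norm at least `k + 1`, so for `N = N_k` large it is uniformly small at the points `x` of norm less
than `k`. (Balls are those of the sup norm.)

Analyticity of the resulting sum of transforms (`exists_exponents`) is obtained without complexifying
`x`: on a region far from the pole, `(1 + ∑ (ζ_j - x_j)²)⁻¹` is an analytic function of `x` with values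
in the Banach algebra of bounded continuous functions there, of norm at most `2/3`. For strictly
increasing `N_k` growing fast enough the sum is a lacunary power series in this element with operator
coefficients and radius of convergence at least `4/5` (`analyticAt_lacunary`), composed with that
analytic function.
-/

/-- The ring of real-analytic functions on `ℝⁿ`, as a subring of the pointwise function ring. -/
noncomputable def ORn (n : ℕ) : Subring ((Fin n → ℝ) → ℝ) where
  carrier := {f | ∀ x, AnalyticAt ℝ f x}
  mul_mem' hf hg x := (hf x).mul (hg x)
  one_mem' _ := analyticAt_const
  add_mem' hf hg x := (hf x).add (hg x)
  zero_mem' _ := analyticAt_const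
  neg_mem' hf x := (hf x).neg

/-- The saturation of a set of global real-analytic functions on `ℝⁿ`. -/
def saturation (n : ℕ) (a : Set (ORn n)) : Set (ORn n) :=
  {g | ∀ x : Fin n → ℝ, ∃ U : Set (Fin n → ℝ), IsOpen U ∧ x ∈ U ∧
    ∃ (r : ℕ) (A : Fin r → ORn n) (c : Fin r → ((Fin n → ℝ) → ℝ)),
      (∀ i, A i ∈ a) ∧ (∀ i, ∀ y ∈ U, AnalyticAt ℝ (c i) y) ∧
      ∀ y ∈ U, (g : (Fin n → ℝ) → ℝ) y = ∑ i, c i y * (A i : (Fin n → ℝ) → ℝ) y}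

/-- The common zero set of an ideal of real-analytic functions on `ℝⁿ`. -/
def ZR (n : ℕ) (a : Ideal (ORn n)) : Set (Fin n → ℝ) :=
  {x | ∀ f ∈ a, (f : (Fin n → ℝ) → ℝ) x = 0}

section Preparation
open MeasureTheory Topology
open scoped BoundedContinuousFunction ComplexConjugate

/-! ### The damped Bochner–Martinelli kernel as an analytic family -/

/-- The squared Euclidean norm `|ζ|²` on `ℂⁿ` (the norm instance on `Fin n → ℂ` is the sup norm). -/
noncomputable def nsq {n : ℕ} (ζ : Fin n → ℂ) : ℝ := ∑ j, Complex.normSq (ζ j)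

/-- `|ζ - x|²`, the squared Euclidean distance from `ζ ∈ ℂⁿ` to the real point `x`. -/
noncomputable def qf {n : ℕ} (x : Fin n → ℝ) (ζ : Fin n → ℂ) : ℝ :=
  ∑ j, Complex.normSq (ζ j - x j)

/-- `1 + ∑ (ζ_j - x_j)²`: entire in `ζ`, equal to `1` at `ζ = x`, and larger than `|ζ - x|²` in
modulus when `Im ζ` is small. Dividing by its powers damps the kernel away from `x`. -/
noncomputable def ef {n : ℕ} (x : Fin n → ℝ) (ζ : Fin n → ℂ) : ℂ :=
  1 + ∑ j, (ζ j - x j) ^ 2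

/-- The squared Euclidean norm of the imaginary part. -/
noncomputable def imsq {n : ℕ} (ζ : Fin n → ℂ) : ℝ := ∑ j, (ζ j).im ^ 2

/-- The `j`-th component of the (unnormalised) Bochner–Martinelli kernel with pole at `x`, damped by
the factor `ef x ζ ^ (-N)`, which is holomorphic in `ζ` near `ℝⁿ` and equal to `1` at the pole. -/
noncomputable def bmKer {n : ℕ} (N : ℕ) (x : Fin n → ℝ) (j : Fin n) (ζ : Fin n → ℂ) : ℂ :=
  (conj (ζ j) - x j) * ((qf x ζ : ℂ)⁻¹) ^ n * ((ef x ζ)⁻¹) ^ N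

lemma nsq_nonneg {n : ℕ} (ζ : Fin n → ℂ) : 0 ≤ nsq ζ :=
  Finset.sum_nonneg fun _ _ => Complex.normSq_nonneg _

lemma continuous_nsq {n : ℕ} : Continuous (nsq (n := n)) := by
  unfold nsq
  exact continuous_finsetSum _ fun j _ => Complex.continuous_normSq.comp (continuous_apply j)

lemma normSq_le_nsq {n : ℕ} (ζ : Fin n → ℂ) (j : Fin n) : ‖ζ j‖ ^ 2 ≤ nsq ζ := by
  rw [← Complex.normSq_eq_norm_sq]
  exact Finset.single_le_sum (f := fun j => Complex.normSq (ζ j))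
    (fun _ _ => Complex.normSq_nonneg _) (Finset.mem_univ j)

lemma norm_le_one_add_nsq {n : ℕ} (ζ : Fin n → ℂ) (j : Fin n) : ‖ζ j‖ ≤ 1 + nsq ζ := by
  have := normSq_le_nsq ζ j
  nlinarith [sq_nonneg (‖ζ j‖ - 1)]

lemma qf_eq {n : ℕ} (x : Fin n → ℝ) (ζ : Fin n → ℂ) :
    (qf x ζ : ℂ) = nsq ζ - ∑ j, (x j : ℂ) * (ζ j + conj (ζ j)) + ∑ j, (x j : ℂ) ^ 2 := by
  unfold qf nsq
  push_cast
  rw [← Finset.sum_sub_distrib, ← Finset.sum_add_distrib]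
  refine Finset.sum_congr rfl fun j _ => ?_
  rw [Complex.normSq_eq_conj_mul_self, Complex.normSq_eq_conj_mul_self, map_sub,
    Complex.conj_ofReal]
  ring

lemma ef_eq {n : ℕ} (x : Fin n → ℝ) (ζ : Fin n → ℂ) :
    ef x ζ = (1 + ∑ j, ζ j ^ 2) - ∑ j, (2 * x j : ℂ) * ζ j + ∑ j, (x j : ℂ) ^ 2 := by
  unfold ef
  rw [add_sub_assoc, add_assoc, ← Finset.sum_sub_distrib, ← Finset.sum_add_distrib]
  congr 1
  refine Finset.sum_congr rfl fun j _ => ?_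
  ring

/-- On the tube `|Im ζ| ≤ 1/2` the damping factor `ef x ζ` is bounded away from zero: its real part
is `1 + |ζ - x|² - 2 |Im ζ|²`. -/
lemma ef_lower {n : ℕ} (x : Fin n → ℝ) (ζ : Fin n → ℂ) (h : imsq ζ ≤ 1 / 4) :
    qf x ζ + 1 / 2 ≤ ‖ef x ζ‖ := by
  refine le_trans ?_ (Complex.re_le_norm _)
  have h1 : (ef x ζ).re = 1 + qf x ζ - 2 * imsq ζ := by
    unfold ef qf imsq
    rw [Finset.mul_sum, Complex.add_re, Complex.one_re, Complex.re_sum, add_sub_assoc,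
      ← Finset.sum_sub_distrib]
    congr 1
    refine Finset.sum_congr rfl fun j _ => ?_
    rw [pow_two, Complex.mul_re, Complex.normSq_apply]
    simp
    ring
  rw [h1]; linarith

lemma nsq_le_qf {n : ℕ} (x : Fin n → ℝ) (ζ : Fin n → ℂ) :
    nsq ζ ≤ 2 * qf x ζ + 2 * ∑ j, x j ^ 2 := by
  unfold nsq qf
  rw [Finset.mul_sum, Finset.mul_sum, ← Finset.sum_add_distrib]
  refine Finset.sum_le_sum fun j _ => ?_
  rw [Complex.normSq_apply, Complex.normSq_apply]
  simp
  nlinarith [sq_nonneg ((ζ j).re - 2 * x j), sq_nonneg ((ζ j).im)]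

section algebra
variable {n : ℕ} (S : Set (Fin n → ℂ))

/-- The weight `(1 + |ζ|²)⁻¹`, which makes the polynomials below bounded. -/
noncomputable def wInv (ζ : Fin n → ℂ) : ℂ := ((1 + nsq ζ : ℝ) : ℂ)⁻¹

lemma continuous_wInv : Continuous (wInv (n := n)) := by
  unfold wInv
  refine Continuous.inv₀ (Complex.continuous_ofReal.comp (continuous_const.add continuous_nsq)) ?_
  intro ζ
  have := nsq_nonneg ζ
  exact_mod_cast (by positivity : (1 + nsq ζ) ≠ 0)

lemma norm_wInv (ζ : Fin n → ℂ) : ‖wInv ζ‖ = (1 + nsq ζ)⁻¹ := by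
  have := nsq_nonneg ζ
  unfold wInv
  rw [norm_inv, Complex.norm_real, Real.norm_of_nonneg (by positivity)]

/-- A continuous function of growth at most `1 + |ζ|²`, divided by `1 + |ζ|²`. -/
noncomputable def wBdd (f : (Fin n → ℂ) → ℂ) (hf : Continuous f) (hb : ∀ ζ, ‖f ζ‖ ≤ 1 + nsq ζ) :
    S →ᵇ ℂ :=
  BoundedContinuousFunction.ofNormedAddCommGroup (fun ζ : S => f ζ * wInv (ζ : Fin n → ℂ))
    ((hf.mul continuous_wInv).comp continuous_subtype_val) 1 (by
      intro ζ
      have h0 := nsq_nonneg (ζ : Fin n → ℂ)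
      rw [norm_mul, norm_wInv, ← div_eq_mul_inv, div_le_one (by positivity)]
      exact hb ζ)

/-- The weighted constant `1` on `S`. -/
noncomputable def bOne : S →ᵇ ℂ := wBdd S (fun _ => 1) continuous_const
  (fun ζ => by simpa using nsq_nonneg ζ)
/-- The weighted coordinate `ζ_j` on `S`. -/
noncomputable def bCoord (j : Fin n) : S →ᵇ ℂ := wBdd S (fun ζ => ζ j) (continuous_apply j)
  (fun ζ => norm_le_one_add_nsq ζ j)
/-- The weighted conjugate coordinate on `S`. -/
noncomputable def bConj (j : Fin n) : S →ᵇ ℂ := wBdd S (fun ζ => conj (ζ j))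
  (Complex.continuous_conj.comp (continuous_apply j))
  (fun ζ => by simpa using norm_le_one_add_nsq ζ j)
/-- The weighted `|ζ|²` on `S`. -/
noncomputable def bNsq : S →ᵇ ℂ := wBdd S (fun ζ => (nsq ζ : ℂ))
  (Complex.continuous_ofReal.comp continuous_nsq)
  (fun ζ => by
    rw [Complex.norm_real, Real.norm_of_nonneg (nsq_nonneg ζ)]; linarith)
/-- The weighted `1 + ∑ ζ_j²` on `S`. -/
noncomputable def bSq : S →ᵇ ℂ := wBdd S (fun ζ => 1 + ∑ j, ζ j ^ 2) (by fun_prop)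
  (fun ζ => by
    refine (norm_add_le _ _).trans ?_
    simp only [norm_one]
    gcongr
    refine (norm_sum_le _ _).trans (Finset.sum_le_sum fun j _ => ?_)
    rw [norm_pow, Complex.normSq_eq_norm_sq])

/-- The weighted `qf x`, as a polynomial in `x` with values in the Banach algebra of bounded
continuous functions on `S`. -/
noncomputable def bQ (x : Fin n → ℝ) : S →ᵇ ℂ :=
  bNsq S - ∑ j, x j • (bCoord S j + bConj S j) + (∑ j, x j ^ 2) • bOne S
/-- The weighted `ef x`, as a polynomial in `x` with values in bounded continuous functions. -/
noncomputable def bE (x : Fin n → ℝ) : S →ᵇ ℂ :=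
  bSq S - ∑ j, (2 * x j) • bCoord S j + (∑ j, x j ^ 2) • bOne S

lemma bcf_sum_apply {ι : Type*} (s : Finset ι) (f : ι → (S →ᵇ ℂ)) (ζ : S) :
    (∑ i ∈ s, f i) ζ = ∑ i ∈ s, f i ζ := by
  rw [BoundedContinuousFunction.coe_sum, Finset.sum_apply]

lemma bQ_apply (x : Fin n → ℝ) (ζ : S) : bQ S x ζ = qf x ζ * wInv (ζ : Fin n → ℂ) := by
  rw [qf_eq]
  simp only [bQ, BoundedContinuousFunction.coe_add, BoundedContinuousFunction.coe_sub, Pi.add_apply,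
    Pi.sub_apply, bcf_sum_apply, BoundedContinuousFunction.coe_smul, Complex.real_smul]
  simp only [bNsq, bCoord, bConj, bOne, wBdd, BoundedContinuousFunction.coe_ofNormedAddCommGroup]
  rw [add_mul, sub_mul, Finset.sum_mul]
  push_cast
  congr 1
  · congr 1
    exact Finset.sum_congr rfl fun j _ => by ring
  · ring

lemma bE_apply (x : Fin n → ℝ) (ζ : S) : bE S x ζ = ef x ζ * wInv (ζ : Fin n → ℂ) := by
  rw [ef_eq]
  simp only [bE, BoundedContinuousFunction.coe_add, BoundedContinuousFunction.coe_sub, Pi.add_apply,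
    Pi.sub_apply, bcf_sum_apply, BoundedContinuousFunction.coe_smul, Complex.real_smul]
  simp only [bSq, bCoord, bOne, wBdd, BoundedContinuousFunction.coe_ofNormedAddCommGroup]
  rw [add_mul (_ - _), sub_mul, Finset.sum_mul (f := fun j => 2 * (x j : ℂ) * (ζ : Fin n → ℂ) j)]
  push_cast
  congr 1
  · congr 1
    exact Finset.sum_congr rfl fun j _ => by ring
  · ring

lemma analyticAt_coord (j : Fin n) (x : Fin n → ℝ) : AnalyticAt ℝ (fun x : Fin n → ℝ => x j) x :=
  (ContinuousLinearMap.proj (R := ℝ) (φ := fun _ : Fin n => ℝ) j).analyticAt x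

lemma analyticAt_bQ (x : Fin n → ℝ) : AnalyticAt ℝ (bQ S) x := by
  refine (analyticAt_const.sub ?_).add (AnalyticAt.fun_smul ?_ analyticAt_const)
  · exact Finset.analyticAt_fun_sum _ fun j _ => (analyticAt_coord j x).smul analyticAt_const
  · exact Finset.analyticAt_fun_sum _ fun j _ => (analyticAt_coord j x).pow 2

lemma analyticAt_bE (x : Fin n → ℝ) : AnalyticAt ℝ (bE S) x := by
  refine (analyticAt_const.sub ?_).add (AnalyticAt.fun_smul ?_ analyticAt_const)
  · exact Finset.analyticAt_fun_sum _ fun j _ =>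
      (analyticAt_const.mul (analyticAt_coord j x)).smul analyticAt_const
  · exact Finset.analyticAt_fun_sum _ fun j _ => (analyticAt_coord j x).pow 2

variable {S}

lemma isUnit_bcf {f : S →ᵇ ℂ} {δ : ℝ} (hδ : 0 < δ) (h : ∀ ζ, δ ≤ ‖f ζ‖) : IsUnit f := by
  have h0 : ∀ ζ, f ζ ≠ 0 := fun ζ => norm_pos_iff.1 (hδ.trans_le (h ζ))
  let g : S →ᵇ ℂ := BoundedContinuousFunction.ofNormedAddCommGroup (fun ζ => (f ζ)⁻¹)
    (f.continuous.inv₀ h0) δ⁻¹ (fun ζ => by rw [norm_inv]; gcongr; exact h ζ)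
  refine IsUnit.of_mul_eq_one g ?_
  ext ζ
  simp [g, h0 ζ]

lemma inverse_apply {f : S →ᵇ ℂ} (h : IsUnit f) (ζ : S) : Ring.inverse f ζ = (f ζ)⁻¹ := by
  have := congrArg (fun g : S →ᵇ ℂ => g ζ) (Ring.mul_inverse_cancel f h)
  simp only [BoundedContinuousFunction.coe_mul, Pi.mul_apply, BoundedContinuousFunction.coe_one,
    Pi.one_apply] at this
  exact eq_inv_of_mul_eq_one_right this

variable (S)
/-- The function `(ef x)⁻¹` on `S`, as an element of the Banach algebra; meaningful when `bE S x`
is a unit. -/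
noncomputable def bM (x : Fin n → ℝ) : S →ᵇ ℂ := bOne S * Ring.inverse (bE S x)
/-- The undamped kernel on `S`, as an element of the Banach algebra; meaningful when `bQ S x` is a
unit. -/
noncomputable def bK (j : Fin n) (x : Fin n → ℝ) : S →ᵇ ℂ :=
  (bConj S j - x j • bOne S) * bOne S ^ (n - 1) * Ring.inverse (bQ S x) ^ n

lemma wInv_ne (ζ : Fin n → ℂ) : wInv ζ ≠ 0 := by
  rw [← norm_pos_iff, norm_wInv]
  have := nsq_nonneg ζ
  positivity

lemma bM_apply {x : Fin n → ℝ} (h : IsUnit (bE S x)) (ζ : S) : bM S x ζ = (ef x ζ)⁻¹ := by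
  simp only [bM, BoundedContinuousFunction.coe_mul, Pi.mul_apply]
  rw [inverse_apply h, bE_apply]
  simp only [bOne, wBdd, BoundedContinuousFunction.coe_ofNormedAddCommGroup]
  have := wInv_ne (ζ : Fin n → ℂ)
  rw [mul_inv, one_mul, mul_comm, mul_assoc, inv_mul_cancel₀ this, mul_one]

lemma bK_apply {x : Fin n → ℝ} (h : IsUnit (bQ S x)) (j : Fin n) (ζ : S) :
    bK S j x ζ = (conj ((ζ : Fin n → ℂ) j) - x j) * ((qf x ζ : ℂ)⁻¹) ^ n := by
  simp only [bK, BoundedContinuousFunction.coe_mul, Pi.mul_apply, BoundedContinuousFunction.coe_pow,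
    Pi.pow_apply, BoundedContinuousFunction.coe_sub, Pi.sub_apply,
    BoundedContinuousFunction.coe_smul, Complex.real_smul]
  rw [inverse_apply h, bQ_apply]
  simp only [bOne, bConj, wBdd, BoundedContinuousFunction.coe_ofNormedAddCommGroup]
  have := wInv_ne (ζ : Fin n → ℂ)
  have hn : (n - 1) + 1 = n := by have := j.2; omega
  generalize wInv (ζ : Fin n → ℂ) = w at *
  have e : w * w ^ (n - 1) = w ^ n := by rw [← pow_succ', hn]
  calc _ = (conj ((ζ : Fin n → ℂ) j) - x j) * (w * w ^ (n - 1)) * ((qf x ζ : ℂ) * w)⁻¹ ^ n := by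
        rw [one_mul]; ring
    _ = _ := by
        rw [e, mul_inv, mul_pow, inv_pow w, mul_comm (_ ^ n) (w ^ n)⁻¹, mul_assoc, ← mul_assoc (w ^ n),
          mul_inv_cancel₀ (pow_ne_zero _ this), one_mul]

/-- Assumptions under which the damped kernel is an analytic function of `x` near `x₀` with values
in the bounded continuous functions on `S`: `S` lies in the tube `|Im ζ| ≤ 1/2` and keeps a positive
distance from `x₀`. -/
structure GoodSet (x₀ : Fin n → ℝ) : Prop where
  meas : MeasurableSet S
  im : ∀ ζ ∈ S, imsq ζ ≤ 1 / 4
  far : ∃ c > 0, ∀ ζ ∈ S, c ≤ qf x₀ ζ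

variable {S}

lemma GoodSet.lower {x₀ : Fin n → ℝ} (h : GoodSet S x₀) :
    ∃ δ > 0, ∀ ζ ∈ S, δ * (1 + nsq ζ) ≤ qf x₀ ζ := by
  obtain ⟨c, hc, hq⟩ := h.far
  have hx : 0 ≤ ∑ j, x₀ j ^ 2 := Finset.sum_nonneg fun _ _ => sq_nonneg _
  set A := ∑ j, x₀ j ^ 2
  refine ⟨(2 + (1 + 2 * A) / c)⁻¹, by positivity, fun ζ hζ => ?_⟩
  rw [inv_mul_le_iff₀ (by positivity)]
  have h1 := nsq_le_qf x₀ ζ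
  have h2 := hq ζ hζ
  have : (1 + 2 * A) ≤ (1 + 2 * A) / c * qf x₀ ζ := by
    rw [div_mul_eq_mul_div, le_div_iff₀ hc]; gcongr
  linarith

lemma GoodSet.isUnit_bQ {x₀ : Fin n → ℝ} (h : GoodSet S x₀) : IsUnit (bQ S x₀) := by
  obtain ⟨δ, hδ, hl⟩ := h.lower
  refine isUnit_bcf hδ fun ζ => ?_
  have h0 := nsq_nonneg (ζ : Fin n → ℂ)
  have h1 := hl ζ ζ.2
  rw [bQ_apply, norm_mul, norm_wInv, Complex.norm_real,
    Real.norm_of_nonneg (le_trans (by positivity) h1), ← div_eq_mul_inv, le_div_iff₀ (by positivity)]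
  exact h1

lemma GoodSet.isUnit_bE {x₀ : Fin n → ℝ} (h : GoodSet S x₀) : IsUnit (bE S x₀) := by
  obtain ⟨δ, hδ, hl⟩ := h.lower
  refine isUnit_bcf hδ fun ζ => ?_
  have h0 := nsq_nonneg (ζ : Fin n → ℂ)
  have h1 := hl ζ ζ.2
  have h2 := ef_lower x₀ ζ (h.im ζ ζ.2)
  rw [bE_apply, norm_mul, norm_wInv, ← div_eq_mul_inv, le_div_iff₀ (by positivity)]
  linarith

lemma analyticAt_ringInverse {R : Type*} [NormedRing R] [NormedAlgebra ℝ R] [CompleteSpace R] {a : R}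
    (h : IsUnit a) : AnalyticAt ℝ (Ring.inverse : R → R) a := by
  obtain ⟨u, rfl⟩ := h
  exact analyticAt_inverse u

lemma GoodSet.analyticAt_bM {x₀ : Fin n → ℝ} (h : GoodSet S x₀) : AnalyticAt ℝ (bM S) x₀ := by
  have := (analyticAt_ringInverse h.isUnit_bE).comp (analyticAt_bE S x₀)
  exact analyticAt_const.mul this

lemma GoodSet.analyticAt_bK {x₀ : Fin n → ℝ} (h : GoodSet S x₀) (j : Fin n) :
    AnalyticAt ℝ (bK S j) x₀ := by
  have := (analyticAt_ringInverse h.isUnit_bQ).comp (analyticAt_bQ S x₀)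
  unfold bK
  refine AnalyticAt.mul ?_ (this.pow n)
  exact (analyticAt_const.sub ((analyticAt_coord j x₀).smul analyticAt_const)).mul analyticAt_const

/-- Near `x₀` the kernel `bmKer N x j` restricted to `S` is `bK S j x * bM S x ^ N`. -/
lemma GoodSet.eventually {x₀ : Fin n → ℝ} (h : GoodSet S x₀) :
    ∀ᶠ x in 𝓝 x₀, ∀ (N : ℕ) (j : Fin n) (ζ : S), (bK S j x * bM S x ^ N) ζ = bmKer N x j ζ := by
  have h1 := (analyticAt_bQ S x₀).continuousAt.eventually (Units.isOpen.mem_nhds h.isUnit_bQ)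
  have h2 := (analyticAt_bE S x₀).continuousAt.eventually (Units.isOpen.mem_nhds h.isUnit_bE)
  filter_upwards [h1, h2] with x hx1 hx2 N j ζ
  simp only [BoundedContinuousFunction.coe_mul, Pi.mul_apply, BoundedContinuousFunction.coe_pow,
    Pi.pow_apply]
  rw [bK_apply S hx1, bM_apply S hx2, bmKer]

/-- Integration against an integrable weight, as a functional on bounded continuous functions. -/
noncomputable def intFun (S : Set (Fin n → ℂ)) (hS : MeasurableSet S) (W : (Fin n → ℂ) → ℂ)
    (hW : Integrable W) : (S →ᵇ ℂ) →L[ℝ] ℂ :=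
  LinearMap.mkContinuous
    { toFun := fun f => ∫ ζ : S, W ζ * f ζ ∂(volume.comap Subtype.val)
      map_add' := fun f g => by
        have hi : ∀ f : S →ᵇ ℂ, Integrable (fun ζ : S => W ζ * f ζ) (volume.comap Subtype.val) := by
          intro f
          refine Integrable.mul_bdd (c := ‖f‖) ?_ ?_ ?_
          · exact ((MeasurableEmbedding.subtype_coe hS).integrable_map_iff).1
              (by rw [map_comap_subtype_coe hS]; exact hW.restrict)
          · exact f.continuous.aestronglyMeasurable
          · exact Filter.Eventually.of_forall fun ζ => f.norm_coe_le_norm ζ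
        rw [← integral_add (hi f) (hi g)]
        simp only [BoundedContinuousFunction.coe_add, Pi.add_apply, mul_add]
      map_smul' := fun c f => by
        simp only [BoundedContinuousFunction.coe_smul, RingHom.id_apply]
        rw [← integral_smul]
        simp only [mul_smul_comm] }
    (∫ ζ, ‖W ζ‖) (fun f => by
      have hi : Integrable (fun ζ : S => W ζ) (volume.comap Subtype.val) :=
        ((MeasurableEmbedding.subtype_coe hS).integrable_map_iff).1
              (by rw [map_comap_subtype_coe hS]; exact hW.restrict)
      calc ‖∫ ζ : S, W ζ * f ζ ∂(volume.comap Subtype.val)‖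
          ≤ ∫ ζ : S, ‖W ζ‖ * ‖f‖ ∂(volume.comap Subtype.val) := by
            refine norm_integral_le_of_norm_le (hi.norm.mul_const _) ?_
            refine Filter.Eventually.of_forall fun ζ => ?_
            rw [norm_mul]
            gcongr
            exact f.norm_coe_le_norm ζ
        _ = (∫ ζ in S, ‖W ζ‖) * ‖f‖ := by
            rw [integral_mul_const, integral_subtype_comap hS (fun ζ => ‖W ζ‖)]
        _ ≤ (∫ ζ, ‖W ζ‖) * ‖f‖ := by
            gcongr
            · exact Filter.Eventually.of_forall fun _ => norm_nonneg _
            · exact hW.norm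
            · exact Measure.restrict_le_self)

lemma norm_intFun_le (hS : MeasurableSet S) (W : (Fin n → ℂ) → ℂ) (hW : Integrable W) :
    ‖intFun S hS W hW‖ ≤ ∫ ζ, ‖W ζ‖ :=
  LinearMap.mkContinuous_norm_le _ (integral_nonneg fun _ => norm_nonneg _) _

lemma intFun_apply (hS : MeasurableSet S) (W : (Fin n → ℂ) → ℂ) (hW : Integrable W)
    (hWS : ∀ ζ ∉ S, W ζ = 0) (f : S →ᵇ ℂ) (F : (Fin n → ℂ) → ℂ) (hF : ∀ ζ : S, f ζ = F ζ) :
    intFun S hS W hW f = ∫ ζ, W ζ * F ζ := by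
  change ∫ ζ : S, W ζ * f ζ ∂(volume.comap Subtype.val) = _
  simp only [hF]
  rw [integral_subtype_comap hS (fun ζ => W ζ * F ζ)]
  exact setIntegral_eq_integral_of_forall_compl_eq_zero fun ζ hζ => by rw [hWS ζ hζ, zero_mul]

/-- Integrals of the damped kernel against weights supported in a good set are real analytic in the
pole. -/
lemma GoodSet.analyticAt_integral {x₀ : Fin n → ℝ} (h : GoodSet S x₀) (W : (Fin n → ℂ) → ℂ)
    (hW : Integrable W) (hWS : ∀ ζ ∉ S, W ζ = 0) (N : ℕ) (j : Fin n) :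
    AnalyticAt ℝ (fun x => ∫ ζ, W ζ * bmKer N x j ζ) x₀ := by
  have h1 : AnalyticAt ℝ (fun x => intFun S h.meas W hW (bK S j x * bM S x ^ N)) x₀ :=
    ((intFun S h.meas W hW).analyticAt _).comp ((h.analyticAt_bK j).mul (h.analyticAt_bM.pow N))
  refine h1.congr ?_
  filter_upwards [h.eventually] with x hx
  exact intFun_apply h.meas W hW hWS _ _ (hx N j)

end algebra

/-! ### Convergent series of transforms -/

/-- The real part `ℂⁿ → ℝⁿ`. -/
noncomputable def reL (n : ℕ) : (Fin n → ℂ) →L[ℝ] (Fin n → ℝ) :=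
  ContinuousLinearMap.pi fun j => Complex.reCLM.comp (ContinuousLinearMap.proj j)
/-- The imaginary part `ℂⁿ → ℝⁿ`. -/
noncomputable def imL (n : ℕ) : (Fin n → ℂ) →L[ℝ] (Fin n → ℝ) :=
  ContinuousLinearMap.pi fun j => Complex.imCLM.comp (ContinuousLinearMap.proj j)

lemma reL_apply {n : ℕ} (ζ : Fin n → ℂ) (j : Fin n) : reL n ζ j = (ζ j).re := rfl
lemma imL_apply {n : ℕ} (ζ : Fin n → ℂ) (j : Fin n) : imL n ζ j = (ζ j).im := rfl

lemma qf_nonneg {n : ℕ} (x : Fin n → ℝ) (ζ : Fin n → ℂ) : 0 ≤ qf x ζ :=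
  Finset.sum_nonneg fun _ _ => Complex.normSq_nonneg _

lemma continuous_imsq {n : ℕ} : Continuous (imsq (n := n)) := by
  unfold imsq
  exact continuous_finsetSum _ fun j _ =>
    (Complex.continuous_im.comp (continuous_apply j)).pow 2

lemma norm_coord_sq_le_qf {n : ℕ} (x : Fin n → ℝ) (ζ : Fin n → ℂ) (j : Fin n) :
    ((ζ j).re - x j) ^ 2 + (ζ j).im ^ 2 ≤ qf x ζ := by
  refine le_trans (le_of_eq ?_) (Finset.single_le_sum (f := fun j => Complex.normSq (ζ j - x j))
    (fun _ _ => Complex.normSq_nonneg _) (Finset.mem_univ j))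
  simp [Complex.normSq_apply]; ring

lemma re_sq_le_qf {n : ℕ} (x : Fin n → ℝ) (ζ : Fin n → ℂ) : ‖reL n ζ - x‖ ^ 2 ≤ qf x ζ := by
  rw [← Real.le_sqrt (norm_nonneg _) (qf_nonneg _ _), pi_norm_le_iff_of_nonneg (Real.sqrt_nonneg _)]
  intro j
  refine Real.le_sqrt_of_sq_le ?_
  have := norm_coord_sq_le_qf x ζ j
  rw [Real.norm_eq_abs, sq_abs, Pi.sub_apply, reL_apply]
  nlinarith [sq_nonneg (ζ j).im]

lemma im_sq_le_qf {n : ℕ} (x : Fin n → ℝ) (ζ : Fin n → ℂ) : ‖imL n ζ‖ ^ 2 ≤ qf x ζ := by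
  rw [← Real.le_sqrt (norm_nonneg _) (qf_nonneg _ _), pi_norm_le_iff_of_nonneg (Real.sqrt_nonneg _)]
  intro j
  refine Real.le_sqrt_of_sq_le ?_
  have := norm_coord_sq_le_qf x ζ j
  rw [Real.norm_eq_abs, sq_abs, imL_apply]
  nlinarith [sq_nonneg ((ζ j).re - x j)]

/-- The part of the tube `|Im ζ| ≤ 1/2` whose real part has sup norm at least `k + 1`. -/
def OmegaSet (n k : ℕ) : Set (Fin n → ℂ) := {ζ | (k : ℝ) + 1 ≤ ‖reL n ζ‖ ∧ imsq ζ ≤ 1 / 4}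

lemma isClosed_OmegaSet (n k : ℕ) : IsClosed (OmegaSet n k) :=
  (isClosed_le continuous_const (reL n).continuous.norm).inter
    (isClosed_le continuous_imsq continuous_const)

lemma one_le_qf {n k : ℕ} {x : Fin n → ℝ} (hx : ‖x‖ < k) {ζ : Fin n → ℂ} (h : ζ ∈ OmegaSet n k) :
    1 ≤ qf x ζ := by
  refine le_trans ?_ (re_sq_le_qf x ζ)
  have h1 : (1 : ℝ) ≤ ‖reL n ζ - x‖ := by
    have := norm_sub_norm_le (reL n ζ) x
    have := h.1
    linarith
  nlinarith

lemma goodSet_Omega {n k : ℕ} {x : Fin n → ℝ} (hx : ‖x‖ < k) : GoodSet (OmegaSet n k) x :=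
  ⟨(isClosed_OmegaSet n k).measurableSet, fun _ h => h.2, 1, one_pos, fun _ h => one_le_qf hx h⟩

/-- For poles in the ball of radius `k`, the damping factor is at most `2/3` on `OmegaSet n k`. -/
lemma norm_bM_le {n k : ℕ} {x : Fin n → ℝ} (hx : ‖x‖ < k) : ‖bM (OmegaSet n k) x‖ ≤ 2 / 3 := by
  rw [BoundedContinuousFunction.norm_le (by norm_num)]
  intro ζ
  rw [bM_apply _ (goodSet_Omega hx).isUnit_bE, norm_inv]
  have h1 := one_le_qf hx ζ.2
  have h2 := ef_lower x ζ ζ.2.2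
  rw [inv_le_comm₀ (by linarith) (by norm_num)]
  norm_num
  linarith

/-- A power series with operator coefficients in a Banach algebra, with exponents `N k` so sparse
that the coefficients satisfy `‖L k‖ (4/5) ^ N k ≤ 1`, is analytic on the ball of radius `4/5`. -/
lemma analyticAt_lacunary {R F : Type*} [NormedCommRing R] [NormedAlgebra ℝ R] [CompleteSpace R]
    [NormOneClass R]
    [NormedAddCommGroup F] [NormedSpace ℝ F] [CompleteSpace F] (L : ℕ → R →L[ℝ] F) (N : ℕ → ℕ)
    (hN : Function.Injective N) (hL : ∀ k, ‖L k‖ * (4 / 5 : ℝ) ^ N k ≤ 1) {m : R} (hm : ‖m‖ < 4 / 5) :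
    AnalyticAt ℝ (fun m => ∑' k, L k (m ^ N k)) m ∧ Summable (fun k => L k (m ^ N k)) := by
  classical
  -- The sparse family of coefficients, extended by zero to all exponents.
  let a : ℕ → R →L[ℝ] F := Function.extend N L 0
  have ha : ∀ k, a (N k) = L k := fun k => hN.extend_apply _ _ _
  have ha0 : ∀ i, i ∉ Set.range N → a i = 0 := fun i hi => Function.extend_apply' _ _ _ hi
  let p : FormalMultilinearSeries ℝ R F := fun i =>
    (a i).compContinuousMultilinearMap (ContinuousMultilinearMap.mkPiAlgebraFin ℝ i R)
  have hp : ∀ i, ‖p i‖ * ((4 / 5 : NNReal) : ℝ) ^ i ≤ 1 := by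
    intro i
    have h1 : ‖p i‖ ≤ ‖a i‖ := by
      refine ((a i).norm_compContinuousMultilinearMap_le _).trans ?_
      rw [ContinuousMultilinearMap.norm_mkPiAlgebraFin, mul_one]
    have h2 : ‖a i‖ * (4 / 5 : ℝ) ^ i ≤ 1 := by
      by_cases hi : i ∈ Set.range N
      · obtain ⟨k, rfl⟩ := hi
        rw [ha]; exact hL k
      · rw [ha0 i hi]; simp
    refine le_trans ?_ h2
    push_cast
    gcongr
  have hr : ((4 / 5 : NNReal) : ENNReal) ≤ p.radius := p.le_radius_of_bound 1 hp
  have hpos : 0 < p.radius := lt_of_lt_of_le (by norm_num) hr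
  have hmem : ∀ m : R, ‖m‖ < 4 / 5 → m ∈ Metric.eball (0 : R) p.radius := by
    intro m hm
    rw [Metric.mem_eball, edist_zero_right]
    refine lt_of_lt_of_le ?_ hr
    rw [enorm_eq_nnnorm, ENNReal.coe_lt_coe, ← NNReal.coe_lt_coe]
    simpa using hm
  have happ : ∀ (m : R) (i : ℕ), p i (fun _ => m) = a i (m ^ i) := by
    intro m i
    simp [p]
  have hsum : p.sum = fun m => ∑' k, L k (m ^ N k) := by
    funext m
    unfold FormalMultilinearSeries.sum
    simp only [happ]
    rw [← hN.tsum_eq]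
    · simp only [ha]
    · intro i hi
      by_contra h
      exact hi (by simp [ha0 i h])
  refine ⟨?_, ?_⟩
  · rw [← hsum]
    exact (p.hasFPowerSeriesOnBall hpos).analyticAt_of_mem (hmem m hm)
  · have h1 := p.summable (hmem m hm)
    simp only [happ] at h1
    have h2 := h1.comp_injective hN
    simpa only [Function.comp_def, ha] using h2

/-- The lacunary series of the analytic map `M`, with each term multiplied by the analytic map `κ`
before the functional is applied. -/
lemma lacunary_mul {R E : Type*} [NormedCommRing R] [NormedAlgebra ℝ R] [CompleteSpace R]
    [NormOneClass R] [NormedAddCommGroup E] [NormedSpace ℝ E] (ℓ : ℕ → R →L[ℝ] ℂ) (N : ℕ → ℕ)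
    (hN : Function.Injective N) (hℓ : ∀ k, ‖ℓ k‖ * (4 / 5 : ℝ) ^ N k ≤ 1) {M κ : E → R} {x₀ : E}
    (hM : AnalyticAt ℝ M x₀) (hκ : AnalyticAt ℝ κ x₀) (hm : ‖M x₀‖ < 4 / 5) :
    AnalyticAt ℝ (fun x => ∑' k, ℓ k (κ x * M x ^ N k)) x₀ ∧
      ∀ᶠ x in 𝓝 x₀, Summable (fun k => ℓ k (κ x * M x ^ N k)) := by
  let L : ℕ → R →L[ℝ] R →L[ℝ] ℂ := fun k =>
    (ContinuousLinearMap.compL ℝ _ _ _ (ℓ k)).comp (ContinuousLinearMap.mul ℝ _)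
  have hLa : ∀ k f g, L k f g = ℓ k (g * f) := fun k f g => by
    rw [mul_comm]; rfl
  have hLn : ∀ k, ‖L k‖ * (4 / 5 : ℝ) ^ N k ≤ 1 := by
    intro k
    refine le_trans ?_ (hℓ k)
    gcongr
    refine ContinuousLinearMap.opNorm_le_bound₂ _ (norm_nonneg _) fun f g => ?_
    refine ((ℓ k).le_opNorm (f * g)).trans ?_
    rw [mul_assoc]
    gcongr
    exact norm_mul_le f g
  have hev : ∀ᶠ x in 𝓝 x₀, ‖M x‖ < 4 / 5 := hM.continuousAt.norm.eventually_lt_const hm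
  have hS : ∀ᶠ x in 𝓝 x₀, HasSum (fun k => ℓ k (κ x * M x ^ N k))
      ((∑' k, L k (M x ^ N k)) (κ x)) := by
    filter_upwards [hev] with x hx
    have := ((analyticAt_lacunary L N hN hLn hx).2).hasSum.mapL
      (ContinuousLinearMap.apply ℝ ℂ (κ x))
    simpa only [ContinuousLinearMap.apply_apply, hLa] using this
  refine ⟨?_, hS.mono fun x hx => hx.summable⟩
  have h1 : AnalyticAt ℝ (fun x => (∑' k, L k (M x ^ N k)) (κ x)) x₀ :=
    AnalyticAt.comp₂ ((ContinuousLinearMap.id ℝ (R →L[ℝ] ℂ)).analyticAt_bilinear (_, _))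
      (AnalyticAt.comp (g := fun f => ∑' k, L k (f ^ N k))
        (analyticAt_lacunary L N hN hLn hm).1 hM) hκ
  refine h1.congr ?_
  filter_upwards [hS] with x hx
  exact hx.tsum_eq.symm

/-- The transform of a vector of weights by the damped kernel. -/
noncomputable def outer {n : ℕ} (W : Fin n → (Fin n → ℂ) → ℂ) (N : ℕ) (x : Fin n → ℝ) : ℂ :=
  ∑ j, ∫ ζ, W j ζ * bmKer N x j ζ

/-- If the weights `W k` live on `OmegaSet n k`, the damping exponents `N k` can be chosen so that
every tail of the series of transforms converges to a real-analytic function on the ball on which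
all its terms are analytic. -/
lemma exists_exponents (n : ℕ) (W : ℕ → Fin n → (Fin n → ℂ) → ℂ)
    (hW : ∀ k j, Integrable (W k j)) (hWS : ∀ k j, ∀ ζ ∉ OmegaSet n k, W k j ζ = 0) :
    ∃ N : ℕ → ℕ, ∀ (m : ℕ) (x : Fin n → ℝ), ‖x‖ < m →
      AnalyticAt ℝ (fun x => ∑' k, outer (W (m + k)) (N (m + k)) x) x ∧
      Summable (fun k => outer (W (m + k)) (N (m + k)) x) := by
  have hev : ∀ k, ∀ᶠ i : ℕ in Filter.atTop, ∀ j, (∫ ζ, ‖W k j ζ‖) * (4 / 5 : ℝ) ^ i ≤ 1 := by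
    intro k
    rw [Filter.eventually_all]
    intro j
    have := (tendsto_pow_atTop_nhds_zero_of_lt_one (r := (4 / 5 : ℝ)) (by norm_num)
      (by norm_num)).const_mul (∫ ζ, ‖W k j ζ‖)
    rw [mul_zero] at this
    exact this.eventually_le_const one_pos
  obtain ⟨N, hmono, hN⟩ := Filter.extraction_forall_of_eventually hev
  refine ⟨N, fun m x₀ hx₀ => ?_⟩
  -- If the region is empty (e.g. `n = 0`), the algebra of functions on it is trivial and has no
  -- normalised unit, so this case is treated apart.
  rcases isEmpty_or_nonempty (OmegaSet n m) with hE | hE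
  · have h0 : ∀ k j ζ, W (m + k) j ζ = 0 := by
      intro k j ζ
      refine hWS _ _ _ fun h => hE.false (⟨ζ, ?_, h.2⟩ : OmegaSet n m)
      have := h.1
      push_cast at this
      have : (0 : ℝ) ≤ k := Nat.cast_nonneg k
      linarith
    simp only [outer, h0, zero_mul, integral_zero, Finset.sum_const_zero, tsum_zero]
    exact ⟨analyticAt_const, summable_zero⟩
  have hg := goodSet_Omega hx₀
  have hsub : ∀ k j, ∀ ζ ∉ OmegaSet n m, W (m + k) j ζ = 0 := by
    intro k j ζ hζ
    refine hWS _ _ _ fun h => hζ ⟨?_, h.2⟩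
    have := h.1
    push_cast at this
    have : (0 : ℝ) ≤ k := Nat.cast_nonneg k
    linarith
  have hinj : Function.Injective fun k => N (m + k) := fun a b h => by
    have := hmono.injective h
    omega
  have hLn : ∀ j k, ‖intFun (OmegaSet n m) hg.meas (W (m + k) j) (hW (m + k) j)‖ *
      (4 / 5 : ℝ) ^ N (m + k) ≤ 1 := by
    intro j k
    refine le_trans ?_ (hN (m + k) j)
    gcongr
    exact norm_intFun_le hg.meas (W (m + k) j) (hW (m + k) j)
  have key := fun j => lacunary_mul (fun k => intFun (OmegaSet n m) hg.meas (W (m + k) j)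
    (hW (m + k) j)) (fun k => N (m + k)) hinj (hLn j) hg.analyticAt_bM (hg.analyticAt_bK j)
    (lt_of_le_of_lt (norm_bM_le hx₀) (by norm_num))
  have hval : ∀ᶠ x in 𝓝 x₀, ∀ j k, intFun (OmegaSet n m) hg.meas (W (m + k) j) (hW (m + k) j)
      (bK (OmegaSet n m) j x * bM (OmegaSet n m) x ^ N (m + k)) =
      ∫ ζ, W (m + k) j ζ * bmKer (N (m + k)) x j ζ := by
    filter_upwards [hg.eventually] with x hx j k
    exact intFun_apply hg.meas _ _ (hsub k j) _ _ (hx (N (m + k)) j)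
  have hS : ∀ᶠ x in 𝓝 x₀, ∀ j, Summable
      (fun k => ∫ ζ, W (m + k) j ζ * bmKer (N (m + k)) x j ζ) := by
    rw [Filter.eventually_all]
    intro j
    filter_upwards [hval, (key j).2] with x hx hs
    simpa only [hx] using hs
  constructor
  · have h1 := Finset.analyticAt_fun_sum Finset.univ fun j _ => (key j).1
    refine h1.congr ?_
    filter_upwards [hS, hval] with x hx hv
    simp only [hv]
    exact (Summable.tsum_finsetSum fun j _ => hx j).symm
  · exact (hasSum_sum fun j _ => (hS.self_of_nhds j).hasSum).summable

/-! ### Holomorphic extension of real-analytic functions -/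

/-- The inclusion `ℝⁿ ⊆ ℂⁿ`. -/
noncomputable def ofR {n : ℕ} (x : Fin n → ℝ) : Fin n → ℂ := fun j => (x j : ℂ)

lemma continuous_ofR {n : ℕ} : Continuous (ofR (n := n)) :=
  continuous_pi fun j => Complex.continuous_ofReal.comp (continuous_apply j)

lemma norm_ofR {n : ℕ} (x : Fin n → ℝ) : ‖ofR x‖ = ‖x‖ := by
  simp [ofR, Pi.norm_def]

lemma norm_reL_le {n : ℕ} (z : Fin n → ℂ) : ‖reL n z‖ ≤ ‖z‖ := by
  rw [pi_norm_le_iff_of_nonneg (norm_nonneg _)]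
  exact fun j => (Complex.abs_re_le_norm _).trans (norm_le_pi_norm z j)

lemma norm_imL_le {n : ℕ} (z : Fin n → ℂ) : ‖imL n z‖ ≤ ‖z‖ := by
  rw [pi_norm_le_iff_of_nonneg (norm_nonneg _)]
  exact fun j => (Complex.abs_im_le_norm _).trans (norm_le_pi_norm z j)

lemma reL_ofR {n : ℕ} (x : Fin n → ℝ) : reL n (ofR x) = x := by
  ext j; simp [reL_apply, ofR]

lemma imL_ofR {n : ℕ} (x : Fin n → ℝ) : imL n (ofR x) = 0 := by
  ext j; simp [imL_apply, ofR]

lemma eq_re_add_im {n : ℕ} (z : Fin n → ℂ) : z = ofR (reL n z) + Complex.I • ofR (imL n z) := by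
  ext j
  simp [ofR, reL_apply, imL_apply, mul_comm Complex.I]

lemma ofR_sub {n : ℕ} (x y : Fin n → ℝ) : ofR (x - y) = ofR x - ofR y := by
  ext j; simp [ofR]

/-- A real-analytic germ extends holomorphically: complexify the Taylor coefficients. -/
lemma complexify_local {n : ℕ} {φ : (Fin n → ℝ) → ℝ} {x₀ : Fin n → ℝ} (h : AnalyticAt ℝ φ x₀) :
    ∃ r > 0, ∃ Ψ : (Fin n → ℂ) → ℂ, AnalyticOnNhd ℂ Ψ (Metric.ball (ofR x₀) r) ∧
      ∀ x ∈ Metric.ball x₀ r, Ψ (ofR x) = φ x := by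
  obtain ⟨p, ρ, hp⟩ := h
  obtain ⟨C, r, hC, hr, hb⟩ := p.le_mul_pow_of_radius_pos hp.radius_pos
  let P : FormalMultilinearSeries ℂ (Fin n → ℂ) ℂ := fun k => ∑ j : Fin k → Fin n,
    ((p k fun l => Pi.single (j l) 1 : ℝ) : ℂ) •
      (ContinuousMultilinearMap.mkPiAlgebra ℂ (Fin k) ℂ).compContinuousLinearMap
        (fun l => ContinuousLinearMap.proj (R := ℂ) (φ := fun _ : Fin n => ℂ) (j l))
  have hPn : ∀ k, ‖P k‖ ≤ C * (n * r) ^ k := by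
    intro k
    have h1 : ∀ j : Fin k → Fin n, ‖((p k fun l => Pi.single (j l) 1 : ℝ) : ℂ) •
      (ContinuousMultilinearMap.mkPiAlgebra ℂ (Fin k) ℂ).compContinuousLinearMap
        (fun l => ContinuousLinearMap.proj (R := ℂ) (φ := fun _ : Fin n => ℂ) (j l))‖ ≤ C * r ^ k := by
      intro j
      rw [norm_smul, Complex.norm_real]
      have h2 : ‖p k fun l => Pi.single (j l) (1 : ℝ)‖ ≤ C * r ^ k := by
        refine ((p k).le_opNorm _).trans ?_
        simp only [Pi.norm_single, norm_one, Finset.prod_const_one, mul_one]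
        exact hb k
      have h3 : ‖(ContinuousMultilinearMap.mkPiAlgebra ℂ (Fin k) ℂ).compContinuousLinearMap
        (fun l => ContinuousLinearMap.proj (R := ℂ) (φ := fun _ : Fin n => ℂ) (j l))‖ ≤ 1 := by
        refine ContinuousMultilinearMap.opNorm_le_bound zero_le_one fun m => ?_
        simp only [ContinuousMultilinearMap.compContinuousLinearMap_apply,
          ContinuousMultilinearMap.mkPiAlgebra_apply, ContinuousLinearMap.proj_apply, norm_prod,
          one_mul]
        exact Finset.prod_le_prod (fun _ _ => norm_nonneg _) fun l _ => norm_le_pi_norm (m l) (j l)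
      calc _ ≤ (C * r ^ k) * 1 := by gcongr
        _ = _ := mul_one _
    refine (norm_sum_le _ _).trans ((Finset.sum_le_sum fun j _ => h1 j).trans (le_of_eq ?_))
    simp [mul_pow]
    ring
  let ρ' : NNReal := ⟨(n * r + 1)⁻¹, by positivity⟩
  have hρ' : 0 < ρ' := by
    rw [← NNReal.coe_pos]; change 0 < ((n : ℝ) * r + 1)⁻¹; positivity
  have hrad : (ρ' : ENNReal) ≤ P.radius := by
    refine P.le_radius_of_bound C fun k => ?_
    calc ‖P k‖ * (ρ' : ℝ) ^ k ≤ (C * (n * r) ^ k) * (ρ' : ℝ) ^ k := by gcongr; exact hPn k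
      _ = C * (n * r * (n * r + 1)⁻¹) ^ k := by rw [mul_assoc, ← mul_pow]; rfl
      _ ≤ C * 1 := by
        gcongr
        refine pow_le_one₀ (by positivity) ?_
        rw [← div_eq_mul_inv, div_le_one (by positivity)]
        linarith
      _ = C := mul_one _
  have hpos : 0 < P.radius := lt_of_lt_of_le (by exact_mod_cast hρ') hrad
  have hPeq : ∀ k (y : Fin n → ℝ), P k (fun _ => ofR y) = ((p k fun _ => y : ℝ) : ℂ) := by
    intro k y
    have hy : y = ∑ j, y j • Pi.single j (1 : ℝ) := by
      conv_lhs => rw [pi_eq_sum_univ' y]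
    have e : (p k fun _ => y) = ∑ j : Fin k → Fin n, (∏ l, y (j l)) *
        (p k fun l => Pi.single (j l) (1 : ℝ)) := by
      conv_lhs => rw [hy]
      rw [(p k).map_sum]
      refine Finset.sum_congr rfl fun j _ => ?_
      rw [(p k).map_smul_univ (fun l => y (j l)) (fun l => Pi.single (j l) (1 : ℝ)), smul_eq_mul]
    rw [e]
    simp [P, ofR, mul_comm]
  obtain ⟨R, hR0, hR⟩ : ∃ R : NNReal, 0 < R ∧ (R : ENNReal) ≤ min ρ P.radius := by
    obtain ⟨R, h1, h2⟩ := ENNReal.lt_iff_exists_nnreal_btwn.1 (lt_min hp.r_pos hpos)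
    exact ⟨R, by exact_mod_cast h1, h2.le⟩
  refine ⟨R, by exact_mod_cast hR0, fun z => P.sum (z - ofR x₀), ?_, ?_⟩
  · intro z hz
    have h1 : AnalyticAt ℂ P.sum (z - ofR x₀) := by
      refine (P.hasFPowerSeriesOnBall hpos).analyticAt_of_mem ?_
      rw [Metric.mem_eball, edist_zero_right, ← edist_eq_enorm_sub]
      refine lt_of_lt_of_le ?_ (hR.trans (min_le_right _ _))
      rw [edist_nndist, ENNReal.coe_lt_coe, ← NNReal.coe_lt_coe]
      simpa using hz
    exact AnalyticAt.fun_comp h1 (analyticAt_id.sub analyticAt_const)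
  · intro x hx
    have hmem : x - x₀ ∈ Metric.eball (0 : Fin n → ℝ) ρ := by
      rw [Metric.mem_eball, edist_zero_right, ← edist_eq_enorm_sub]
      refine lt_of_lt_of_le ?_ (hR.trans (min_le_left _ _))
      rw [edist_nndist, ENNReal.coe_lt_coe, ← NNReal.coe_lt_coe]
      simpa using hx
    have h1 := hp.hasSum hmem
    rw [add_sub_cancel] at h1
    have h2 : HasSum (fun k => ((p k fun _ => x - x₀ : ℝ) : ℂ)) (φ x : ℂ) := by exact_mod_cast h1
    simp only [← hPeq] at h2
    rw [ofR_sub] at h2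
    exact h2.tsum_eq

/-- Two local holomorphic extensions of `φ` on balls with real centres agree where both are defined:
restrict to the complex line through `z` with real direction `Im z` and apply the identity theorem
on the convex planar set cut out by the two balls. -/
lemma complexify_agree {n : ℕ} {φ : (Fin n → ℝ) → ℝ} {c₁ c₂ : Fin n → ℝ} {r₁ r₂ : ℝ}
    {Ψ₁ Ψ₂ : (Fin n → ℂ) → ℂ} (h₁ : AnalyticOnNhd ℂ Ψ₁ (Metric.ball (ofR c₁) r₁))
    (h₂ : AnalyticOnNhd ℂ Ψ₂ (Metric.ball (ofR c₂) r₂))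
    (e₁ : ∀ x ∈ Metric.ball c₁ r₁, Ψ₁ (ofR x) = φ x)
    (e₂ : ∀ x ∈ Metric.ball c₂ r₂, Ψ₂ (ofR x) = φ x) {z : Fin n → ℂ}
    (hz₁ : z ∈ Metric.ball (ofR c₁) r₁) (hz₂ : z ∈ Metric.ball (ofR c₂) r₂) : Ψ₁ z = Ψ₂ z := by
  set a := reL n z
  set b := imL n z
  let γ : ℂ → (Fin n → ℂ) := fun s => ofR a + s • ofR b
  have hγc : Continuous γ := by fun_prop
  have hγa : ∀ s, AnalyticAt ℂ γ s := fun s =>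
    analyticAt_const.add (analyticAt_id.smul analyticAt_const)
  have hγ0 : γ 0 = ofR a := by simp [γ]
  have hγI : γ Complex.I = z := (eq_re_add_im z).symm
  have hconv : ∀ c r, Convex ℝ (γ ⁻¹' Metric.ball c r) := by
    intro c r s hs t ht α β hα hβ hαβ
    have : γ (α • s + β • t) = α • γ s + β • γ t := by
      have : (ofR a : Fin n → ℂ) = (α + β) • ofR a := by rw [hαβ, one_smul]
      simp only [γ]
      conv_lhs => rw [this]
      simp only [add_smul, smul_add, smul_assoc]
      abel
    rw [Set.mem_preimage, this]
    exact convex_ball c r hs ht hα hβ hαβ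
  have hmem : ∀ c : Fin n → ℝ, ∀ r, z ∈ Metric.ball (ofR c) r → a ∈ Metric.ball c r := by
    intro c r hz
    rw [mem_ball_iff_norm] at hz ⊢
    refine lt_of_le_of_lt ?_ hz
    have := norm_reL_le (z - ofR c)
    rwa [map_sub, reL_ofR] at this
  have hmem' : ∀ c : Fin n → ℝ, ∀ r, a ∈ Metric.ball c r → ofR a ∈ Metric.ball (ofR c) r := by
    intro c r hz
    rwa [mem_ball_iff_norm, ← ofR_sub, norm_ofR, ← mem_ball_iff_norm]
  let D := γ ⁻¹' Metric.ball (ofR c₁) r₁ ∩ γ ⁻¹' Metric.ball (ofR c₂) r₂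
  have hD : IsPreconnected D := ((hconv _ _).inter (hconv _ _)).isPreconnected
  have ha1 := hmem _ _ hz₁
  have ha2 := hmem _ _ hz₂
  have h0 : (0 : ℂ) ∈ D := by
    constructor <;> rw [Set.mem_preimage, hγ0]
    exacts [hmem' _ _ ha1, hmem' _ _ ha2]
  have hI : Complex.I ∈ D := by
    constructor <;> rw [Set.mem_preimage, hγI] <;> assumption
  have hA : AnalyticOnNhd ℂ (fun s => Ψ₁ (γ s)) D := fun s hs => (h₁ _ hs.1).fun_comp (hγa s)
  have hB : AnalyticOnNhd ℂ (fun s => Ψ₂ (γ s)) D := fun s hs => (h₂ _ hs.2).fun_comp (hγa s)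
  have hreal : ∀ᶠ t : ℝ in 𝓝 0, Ψ₁ (γ t) = Ψ₂ (γ t) := by
    have hc : ContinuousAt (fun t : ℝ => a + t • b) 0 := by fun_prop
    have n1 := hc.eventually (Metric.isOpen_ball.mem_nhds (x := a + (0 : ℝ) • b) (by simpa using ha1))
    have n2 := hc.eventually (Metric.isOpen_ball.mem_nhds (x := a + (0 : ℝ) • b) (by simpa using ha2))
    filter_upwards [n1, n2] with t h1 h2
    have : γ t = ofR (a + t • b) := by ext j; simp [γ, ofR]
    rw [this, e₁ _ h1, e₂ _ h2]
  have hfreq : ∃ᶠ s in 𝓝[≠] (0 : ℂ), Ψ₁ (γ s) = Ψ₂ (γ s) := by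
    have ht : Filter.Tendsto (fun t : ℝ => (t : ℂ)) (𝓝[≠] 0) (𝓝[≠] 0) := by
      refine tendsto_nhdsWithin_iff.2 ⟨?_, ?_⟩
      · exact (Complex.continuous_ofReal.tendsto' 0 0 (by simp)).mono_left nhdsWithin_le_nhds
      · filter_upwards [self_mem_nhdsWithin] with t ht
        simpa using ht
    exact ht.frequently (hreal.filter_mono nhdsWithin_le_nhds).frequently
  have := hA.eqOn_of_preconnected_of_frequently_eq hB hD h0 hfreq hI
  simpa only [hγI] using this

/-- A function analytic near a closed ball of `ℝⁿ` extends holomorphically to a tube around it. -/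
lemma complexify {n : ℕ} {φ : (Fin n → ℝ) → ℝ} {R : ℝ}
    (h : AnalyticOnNhd ℝ φ (Metric.closedBall 0 R)) :
    ∃ ε > 0, ∃ Φ : (Fin n → ℂ) → ℂ,
      (∀ z, ‖reL n z‖ ≤ R → ‖imL n z‖ < ε → AnalyticAt ℂ Φ z) ∧
      ∀ x, ‖x‖ ≤ R → Φ (ofR x) = φ x := by
  classical
  have hloc : ∀ x : Metric.closedBall (0 : Fin n → ℝ) R, ∃ r > 0, ∃ Ψ : (Fin n → ℂ) → ℂ,
      AnalyticOnNhd ℂ Ψ (Metric.ball (ofR x.1) r) ∧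
      ∀ y ∈ Metric.ball x.1 r, Ψ (ofR y) = φ y := fun x => complexify_local (h x.1 x.2)
  choose r hr Ψ hΨ hΨe using hloc
  let V : Set (Fin n → ℂ) := ⋃ x : Metric.closedBall (0 : Fin n → ℝ) R, Metric.ball (ofR x.1) (r x)
  have hV : IsOpen V := isOpen_iUnion fun _ => Metric.isOpen_ball
  let Φ : (Fin n → ℂ) → ℂ := fun z =>
    if hz : ∃ x, z ∈ Metric.ball (ofR x.1) (r x) then Ψ hz.choose z else 0
  have hΦ : ∀ x, ∀ z ∈ Metric.ball (ofR x.1) (r x), Φ z = Ψ x z := by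
    intro x z hz
    have hex : ∃ x, z ∈ Metric.ball (ofR x.1) (r x) := ⟨x, hz⟩
    simp only [Φ, dif_pos hex]
    exact complexify_agree (hΨ _) (hΨ _) (hΨe _) (hΨe _) hex.choose_spec hz
  have hKV : ofR '' Metric.closedBall (0 : Fin n → ℝ) R ⊆ V := by
    rintro _ ⟨x, hx, rfl⟩
    exact Set.mem_iUnion.2 ⟨⟨x, hx⟩, Metric.mem_ball_self (hr _)⟩
  obtain ⟨ε, hε, hsub⟩ := ((isCompact_closedBall (0 : Fin n → ℝ) R).image
    continuous_ofR).exists_thickening_subset_open hV hKV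
  refine ⟨ε, hε, Φ, ?_, ?_⟩
  · intro z hz1 hz2
    have hzV : z ∈ V := by
      refine hsub (Metric.mem_thickening_iff.2 ⟨ofR (reL n z), ⟨_, by simpa using hz1, rfl⟩, ?_⟩)
      rw [dist_eq_norm]
      have : z - ofR (reL n z) = Complex.I • ofR (imL n z) := by
        conv_lhs => rw [eq_re_add_im z]
        simp [reL_ofR, map_add]
        ext j
        simp [reL_apply, ofR, imL_apply]
      rwa [this, norm_smul, Complex.norm_I, one_mul, norm_ofR]
    obtain ⟨x, hx⟩ := Set.mem_iUnion.1 hzV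
    refine (hΨ x z hx).congr ?_
    filter_upwards [Metric.isOpen_ball.mem_nhds hx] with w hw
    exact (hΦ x w hw).symm
  · intro x hx
    have hxm : x ∈ Metric.closedBall (0 : Fin n → ℝ) R := by simpa using hx
    rw [hΦ ⟨x, hxm⟩ _ (Metric.mem_ball_self (hr _))]
    exact hΨe ⟨x, hxm⟩ _ (Metric.mem_ball_self (hr _))

/-! ### The antiholomorphic derivative and the regularised kernel -/

/-- Twice the antiholomorphic derivative `∂/∂ζ̄_j`. -/
noncomputable def Dbar {n : ℕ} (j : Fin n) (f : (Fin n → ℂ) → ℂ) (ζ : Fin n → ℂ) : ℂ :=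
  fderiv ℝ f ζ (Pi.single j 1) + Complex.I * fderiv ℝ f ζ (Pi.single j Complex.I)

section Dbar
variable {n : ℕ} {j : Fin n} {f g : (Fin n → ℂ) → ℂ} {ζ : Fin n → ℂ}

lemma Dbar_mul (hf : DifferentiableAt ℝ f ζ) (hg : DifferentiableAt ℝ g ζ) :
    Dbar j (fun ζ => f ζ * g ζ) ζ = Dbar j f ζ * g ζ + f ζ * Dbar j g ζ := by
  unfold Dbar
  rw [fderiv_fun_mul hf hg]
  simp only [add_apply, smul_apply, smul_eq_mul]
  ring

lemma Dbar_sum {ι : Type*} {s : Finset ι} {f : ι → (Fin n → ℂ) → ℂ}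
    (hf : ∀ i ∈ s, DifferentiableAt ℝ (f i) ζ) :
    Dbar j (fun ζ => ∑ i ∈ s, f i ζ) ζ = ∑ i ∈ s, Dbar j (f i) ζ := by
  unfold Dbar
  rw [fderiv_fun_sum hf]
  simp only [sum_apply]
  rw [Finset.mul_sum, Finset.sum_add_distrib]

lemma Dbar_add_const (c : ℂ) : Dbar j (fun ζ => f ζ + c) ζ = Dbar j f ζ := by
  unfold Dbar
  rw [fderiv_add_const]

lemma Dbar_sub_const (c : ℂ) : Dbar j (fun ζ => f ζ - c) ζ = Dbar j f ζ := by
  unfold Dbar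
  rw [fderiv_sub_const]

lemma Dbar_holo (hf : DifferentiableAt ℂ f ζ) : Dbar j f ζ = 0 := by
  unfold Dbar
  rw [hf.fderiv_restrictScalars ℝ]
  have : (Pi.single j Complex.I : Fin n → ℂ) = Complex.I • Pi.single j 1 := by
    rw [← Pi.single_smul]; simp
  rw [this]
  simp only [ContinuousLinearMap.coe_restrictScalars', map_smul, smul_eq_mul]
  rw [← mul_assoc, Complex.I_mul_I]; ring

lemma Dbar_comp {h : ℂ → ℂ} {h' : ℂ} (hh : HasDerivAt h h' (f ζ)) (hf : DifferentiableAt ℝ f ζ) :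
    Dbar j (fun ζ => h (f ζ)) ζ = h' * Dbar j f ζ := by
  have := ((hh.hasFDerivAt.restrictScalars ℝ).comp ζ hf.hasFDerivAt).fderiv
  unfold Dbar
  rw [show (fun ζ => h (f ζ)) = h ∘ f from rfl, this]
  simp
  ring

lemma Dbar_congr (h : f =ᶠ[𝓝 ζ] g) : Dbar j f ζ = Dbar j g ζ := by
  unfold Dbar
  rw [h.fderiv_eq]

lemma continuous_Dbar (hf : ContDiff ℝ 1 f) : Continuous (Dbar j f) := by
  have h := hf.continuous_fderiv one_ne_zero
  unfold Dbar
  exact (h.clm_apply continuous_const).add (continuous_const.mul (h.clm_apply continuous_const))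

lemma hasCompactSupport_Dbar (hf : HasCompactSupport f) : HasCompactSupport (Dbar j f) := by
  refine hf.of_isClosed_subset (isClosed_tsupport _) (closure_minimal ?_ (isClosed_tsupport f))
  intro ζ hζ
  by_contra h
  refine hζ ?_
  rw [Dbar_congr (notMem_tsupport_iff_eventuallyEq.1 h)]
  simp [Dbar]

lemma Dbar_coord_conj (i : Fin n) : Dbar j (fun ζ : Fin n → ℂ => conj (ζ i)) ζ =
    if i = j then 2 else 0 := by
  have h : HasFDerivAt (fun ζ : Fin n → ℂ => conj (ζ i))
      (Complex.conjCLE.toContinuousLinearMap.comp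
        (ContinuousLinearMap.proj (R := ℝ) (φ := fun _ : Fin n => ℂ) i)) ζ :=
    (Complex.conjCLE.toContinuousLinearMap.comp
        (ContinuousLinearMap.proj (R := ℝ) (φ := fun _ : Fin n => ℂ) i)).hasFDerivAt
  unfold Dbar
  rw [h.fderiv]
  split_ifs with hij
  · subst hij
    simp
    norm_num
  · simp [hij]

lemma differentiableAt_coord (i : Fin n) : DifferentiableAt ℂ (fun ζ : Fin n → ℂ => ζ i) ζ :=
  (ContinuousLinearMap.proj (R := ℂ) (φ := fun _ : Fin n => ℂ) i).differentiableAt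

lemma contDiff_coord (i : Fin n) {k} : ContDiff ℝ k (fun ζ : Fin n → ℂ => ζ i) :=
  (ContinuousLinearMap.proj (R := ℝ) (φ := fun _ : Fin n => ℂ) i).contDiff

lemma contDiff_conj_coord (i : Fin n) {k} : ContDiff ℝ k (fun ζ : Fin n → ℂ => conj (ζ i)) :=
  (Complex.conjCLE.toContinuousLinearMap.comp
        (ContinuousLinearMap.proj (R := ℝ) (φ := fun _ : Fin n => ℂ) i)).contDiff

lemma qf_eq_mul (x : Fin n → ℝ) (ζ : Fin n → ℂ) :
    (qf x ζ : ℂ) = ∑ i, (ζ i - x i) * (conj (ζ i) - x i) := by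
  unfold qf
  push_cast
  refine Finset.sum_congr rfl fun i _ => ?_
  rw [← Complex.mul_conj, map_sub, Complex.conj_ofReal]

lemma contDiff_qf (x : Fin n → ℝ) {k} : ContDiff ℝ k (fun ζ : Fin n → ℂ => (qf x ζ : ℂ)) := by
  simp only [qf_eq_mul]
  exact ContDiff.sum fun i _ => ((contDiff_coord i).sub contDiff_const).mul
    ((contDiff_conj_coord i).sub contDiff_const)

lemma Dbar_qf (x : Fin n → ℝ) : Dbar j (fun ζ => (qf x ζ : ℂ)) ζ = 2 * (ζ j - x j) := by
  simp only [qf_eq_mul]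
  have h1 : ∀ i, DifferentiableAt ℝ (fun ζ : Fin n → ℂ => ζ i - x i) ζ := fun i =>
    ((contDiff_coord i).sub contDiff_const).differentiable one_ne_zero ζ
  have h2 : ∀ i, DifferentiableAt ℝ (fun ζ : Fin n → ℂ => conj (ζ i) - x i) ζ := fun i =>
    ((contDiff_conj_coord i).sub contDiff_const).differentiable one_ne_zero ζ
  rw [Dbar_sum fun i _ => (h1 i).fun_mul (h2 i)]
  have : ∀ i, Dbar j (fun ζ : Fin n → ℂ => (ζ i - x i) * (conj (ζ i) - x i)) ζ =
      if i = j then 2 * (ζ j - x j) else 0 := by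
    intro i
    rw [Dbar_mul (h1 i) (h2 i), Dbar_sub_const, Dbar_sub_const, Dbar_holo (differentiableAt_coord i),
      Dbar_coord_conj]
    split_ifs with h
    · subst h; ring
    · ring
  simp [this]

/-- The Bochner–Martinelli kernel regularised by replacing `|ζ - x|²` with `|ζ - x|² + s`. -/
noncomputable def kerS (s : ℝ) (x : Fin n → ℝ) (j : Fin n) (ζ : Fin n → ℂ) : ℂ :=
  (conj (ζ j) - x j) * ((qf x ζ + s : ℂ) ^ n)⁻¹

lemma qs_ne {s : ℝ} (hs : 0 < s) (x : Fin n → ℝ) (ζ : Fin n → ℂ) : (qf x ζ + s : ℂ) ≠ 0 := by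
  have := qf_nonneg x ζ
  have h : (qf x ζ + s) ≠ 0 := by positivity
  exact_mod_cast h

lemma contDiff_kerS {s : ℝ} (hs : 0 < s) (x : Fin n → ℝ) (j : Fin n) {k} :
    ContDiff ℝ k (kerS s x j) := by
  unfold kerS
  exact ((contDiff_conj_coord j).sub contDiff_const).mul
    ((((contDiff_qf x).add contDiff_const).pow n).inv fun ζ => pow_ne_zero _ (qs_ne hs x ζ))

/-- The divergence of the regularised kernel is an approximate identity at `x` as `s → 0`. -/
lemma sum_Dbar_kerS {s : ℝ} (hs : 0 < s) (x : Fin n → ℝ) (ζ : Fin n → ℂ) :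
    ∑ j, Dbar j (kerS s x j) ζ = 2 * n * s * ((qf x ζ + s : ℂ) ^ (n + 1))⁻¹ := by
  have hq := qs_ne hs x ζ
  have h1 : ∀ j, Dbar j (kerS s x j) ζ = 2 * ((qf x ζ + s : ℂ) ^ n)⁻¹ -
      2 * n * ((qf x ζ + s : ℂ) ^ (n + 1))⁻¹ * ((ζ j - x j) * (conj (ζ j) - x j)) := by
    intro j
    unfold kerS
    have hQ : DifferentiableAt ℝ (fun ζ : Fin n → ℂ => (qf x ζ + s : ℂ)) ζ :=
      ((contDiff_qf x).add contDiff_const).differentiable one_ne_zero ζ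
    have hd : HasDerivAt (fun z : ℂ => (z ^ n)⁻¹) (-(n * (qf x ζ + s : ℂ) ^ (n - 1)) /
        ((qf x ζ + s : ℂ) ^ n) ^ 2) (qf x ζ + s : ℂ) :=
      (hasDerivAt_pow n _).fun_inv (pow_ne_zero _ hq)
    have hI : DifferentiableAt ℝ (fun ζ : Fin n → ℂ => ((qf x ζ + s : ℂ) ^ n)⁻¹) ζ :=
      ((((contDiff_qf x).add contDiff_const).pow n).inv
        fun ζ => pow_ne_zero _ (qs_ne hs x ζ)).differentiable one_ne_zero ζ
    rw [Dbar_mul (((contDiff_conj_coord j).sub contDiff_const).differentiable one_ne_zero ζ) hI,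
      Dbar_sub_const, Dbar_coord_conj, if_pos rfl,
      Dbar_comp (f := fun ζ => (qf x ζ + s : ℂ)) (h := fun z : ℂ => (z ^ n)⁻¹) hd hQ,
      Dbar_add_const, Dbar_qf]
    have hn : n = n - 1 + 1 := by have := j.2; omega
    have e : (n * (qf x ζ + s : ℂ) ^ (n - 1)) / ((qf x ζ + s : ℂ) ^ n) ^ 2 =
        n * ((qf x ζ + s : ℂ) ^ (n + 1))⁻¹ := by
      generalize (qf x ζ + s : ℂ) = Q at *
      rw [mul_div_assoc]
      congr 1
      rw [div_eq_iff (by positivity), eq_inv_mul_iff_mul_eq₀ (by positivity), ← pow_add, ← pow_mul]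
      congr 1
      omega
    rw [neg_div, e]
    ring
  simp only [h1]
  rw [Finset.sum_sub_distrib, ← Finset.mul_sum, ← Finset.mul_sum, ← qf_eq_mul]
  simp only [Finset.sum_const, Finset.card_univ, Fintype.card_fin, nsmul_eq_mul]
  generalize (qf x ζ : ℂ) = q at *
  field_simp
  ring

lemma integral_Dbar_eq_zero (hf : ContDiff ℝ 1 f) (hc : HasCompactSupport f) :
    Integrable (Dbar j f) ∧ ∫ ζ, Dbar j f ζ = 0 := by
  have hintg : ∀ v, Integrable fun ζ => fderiv ℝ f ζ v := fun v =>
    ((hf.continuous_fderiv one_ne_zero).clm_apply continuous_const).integrable_of_hasCompactSupport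
      ((hc.fderiv_apply ℝ v))
  have hz : ∀ v, ∫ ζ, fderiv ℝ f ζ v = 0 := by
    intro v
    have := integral_mul_fderiv_eq_neg_fderiv_mul_of_integrable (μ := (volume : Measure (Fin n → ℂ)))
      (f := fun _ => (1 : ℂ)) (g := f) (v := v) (by simp) (by simpa using hintg v)
      (by simpa using hf.continuous.integrable_of_hasCompactSupport hc) (by simp)
      (fun x _ => hf.differentiable one_ne_zero x)
    simpa using this
  unfold Dbar
  refine ⟨(hintg _).add ((hintg _).const_mul _), ?_⟩
  rw [integral_add (hintg _) ((hintg _).const_mul _), integral_const_mul, hz, hz]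
  simp

end Dbar

/-! ### The Bochner–Martinelli formula -/

section peak
variable {n : ℕ}

/-- The profile of the approximate identity given by the divergence of the regularised kernel. -/
noncomputable def peak (w : Fin n → ℂ) : ℝ := 2 * n * ((1 + nsq w) ^ (n + 1))⁻¹

/-- The total mass of `peak`, which normalises the Bochner–Martinelli formula. -/
noncomputable def bmConst (n : ℕ) : ℝ := ∫ w : Fin n → ℂ, peak w

lemma norm_sq_le_nsq (w : Fin n → ℂ) : ‖w‖ ^ 2 ≤ nsq w := by
  rw [← Real.le_sqrt (norm_nonneg _) (nsq_nonneg _), pi_norm_le_iff_of_nonneg (Real.sqrt_nonneg _)]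
  exact fun j => Real.le_sqrt_of_sq_le (normSq_le_nsq w j)

lemma peak_nonneg (w : Fin n → ℂ) : 0 ≤ peak w := by
  have := nsq_nonneg w
  unfold peak; positivity

lemma peak_le (w : Fin n → ℂ) : peak w ≤ 2 * n * ((1 + ‖w‖ ^ 2) ^ (n + 1))⁻¹ := by
  unfold peak
  have := norm_sq_le_nsq w
  gcongr

lemma continuous_peak : Continuous (peak (n := n)) := by
  unfold peak
  refine continuous_const.mul (Continuous.inv₀ ((continuous_const.add continuous_nsq).pow _) ?_)
  intro w
  have := nsq_nonneg w
  positivity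

lemma finrank_Cn : Module.finrank ℝ (Fin n → ℂ) = 2 * n := by
  rw [Module.finrank_pi_fintype]
  simp [mul_comm]

lemma integrable_peak : Integrable (peak (n := n)) := by
  have h := (integrable_rpow_neg_one_add_norm_sq (E := Fin n → ℂ) (μ := volume)
    (r := 2 * ((n + 1 : ℕ) : ℝ)) (by
      rw [finrank_Cn]; push_cast; linarith)).const_mul (2 * n : ℝ)
  refine h.mono' continuous_peak.aestronglyMeasurable (Filter.Eventually.of_forall fun w => ?_)
  rw [Real.norm_of_nonneg (peak_nonneg w)]
  refine (peak_le w).trans (le_of_eq ?_)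
  congr 1
  rw [show -(2 * ((n + 1 : ℕ) : ℝ)) / 2 = -((n + 1 : ℕ) : ℝ) by ring,
    Real.rpow_neg (by positivity), Real.rpow_natCast]

lemma bmConst_pos (hn : 0 < n) : 0 < bmConst n := by
  refine integral_pos_of_integrable_nonneg_nonzero (x := 0) continuous_peak integrable_peak
    (fun w => peak_nonneg w) ?_
  have := nsq_nonneg (0 : Fin n → ℂ)
  unfold peak
  positivity

lemma tendsto_peak : Filter.Tendsto (fun w : Fin n → ℂ =>
    ‖w‖ ^ Module.finrank ℝ (Fin n → ℂ) * peak w) (Bornology.cobounded _) (𝓝 0) := by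
  have h1 : Filter.Tendsto (fun w : Fin n → ℂ => (2 * n : ℝ) * (1 + ‖w‖ ^ 2)⁻¹)
      (Bornology.cobounded _) (𝓝 0) := by
    have : Filter.Tendsto (fun w : Fin n → ℂ => 1 + ‖w‖ ^ 2) (Bornology.cobounded _) Filter.atTop :=
      Filter.tendsto_atTop_add_const_left _ _
        ((Filter.tendsto_pow_atTop two_ne_zero).comp tendsto_norm_cobounded_atTop)
    simpa using this.inv_tendsto_atTop.const_mul (2 * n : ℝ)
  refine squeeze_zero (fun w => mul_nonneg (by positivity) (peak_nonneg w)) (fun w => ?_) h1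
  rw [finrank_Cn]
  calc ‖w‖ ^ (2 * n) * peak w ≤ ‖w‖ ^ (2 * n) * (2 * n * ((1 + ‖w‖ ^ 2) ^ (n + 1))⁻¹) := by
        gcongr; exact peak_le w
    _ ≤ (1 + ‖w‖ ^ 2) ^ n * (2 * n * ((1 + ‖w‖ ^ 2) ^ (n + 1))⁻¹) := by
        rw [pow_mul]; gcongr; linarith
    _ = _ := by
        have : (1 + ‖w‖ ^ 2) ≠ 0 := by positivity
        field_simp
        ring

/-- Rescaling `peak` by `c` gives the divergence of the regularised kernel for `s = c⁻²`. -/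
lemma peak_scale (x : Fin n → ℝ) (ζ : Fin n → ℂ) {c : ℝ} (hc : 0 < c) :
    c ^ Module.finrank ℝ (Fin n → ℂ) * peak (c • (ofR x - ζ)) =
      2 * n * (c ^ 2)⁻¹ * ((qf x ζ + (c ^ 2)⁻¹) ^ (n + 1))⁻¹ := by
  have h1 : nsq (c • (ofR x - ζ)) = c ^ 2 * qf x ζ := by
    unfold nsq qf
    rw [Finset.mul_sum]
    refine Finset.sum_congr rfl fun j _ => ?_
    simp [ofR, Complex.normSq_apply]
    ring
  have h2 := qf_nonneg x ζ
  rw [finrank_Cn, peak, h1]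
  have e : 1 + c ^ 2 * qf x ζ = c ^ 2 * (qf x ζ + (c ^ 2)⁻¹) := by field_simp; ring
  rw [e]
  have h3 : 0 < qf x ζ + (c ^ 2)⁻¹ := by positivity
  generalize qf x ζ + (c ^ 2)⁻¹ = q at *
  field_simp
  ring

lemma tendsto_peak_integral (hn : 0 < n) {G : (Fin n → ℂ) → ℂ} (hG : Integrable G) (x : Fin n → ℝ)
    (hGc : ContinuousAt G (ofR x)) :
    Filter.Tendsto (fun c : ℝ => ∫ ζ, G ζ *
      (2 * n * (((c ^ 2)⁻¹ : ℝ) : ℂ) * ((qf x ζ + (((c ^ 2)⁻¹ : ℝ) : ℂ)) ^ (n + 1))⁻¹)) Filter.atTop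
      (𝓝 (bmConst n * G (ofR x))) := by
  have hc0 := bmConst_pos hn
  have h := tendsto_integral_comp_smul_smul_of_integrable' (μ := (volume : Measure (Fin n → ℂ)))
    (φ := fun w => (bmConst n)⁻¹ * peak w) (fun w => mul_nonneg (by positivity) (peak_nonneg w))
    (by rw [integral_const_mul]; exact inv_mul_cancel₀ hc0.ne')
    (by simpa [mul_left_comm] using (tendsto_peak (n := n)).const_mul (bmConst n)⁻¹) hG hGc
  refine (h.const_mul (bmConst n : ℂ)).congr' ?_
  filter_upwards [Filter.eventually_gt_atTop 0] with c hc
  rw [← integral_const_mul]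
  congr 1
  funext ζ
  have e := peak_scale x ζ hc
  rw [Complex.real_smul, mul_left_comm (c ^ _), e, mul_left_comm]
  push_cast
  have : (bmConst n : ℂ) ≠ 0 := by exact_mod_cast hc0.ne'
  field_simp

/-- The Bochner–Martinelli formula for a compactly supported `C¹` function that is holomorphic near
`x`: integrate by parts against the regularised kernel and let the regularisation tend to zero. -/
theorem bochner_martinelli (hn : 0 < n) {G : (Fin n → ℂ) → ℂ} (hG : ContDiff ℝ 1 G)
    (hGc : HasCompactSupport G) (x : Fin n → ℝ) {c : ℝ} (hc : 0 < c)
    (hfar : ∀ j ζ, qf x ζ < c → Dbar j G ζ = 0) :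
    (bmConst n : ℂ) * G (ofR x) =
      -∑ j, ∫ ζ, Dbar j G ζ * ((conj (ζ j) - x j) * ((qf x ζ : ℂ) ^ n)⁻¹) := by
  have hcont : ∀ j, Continuous (Dbar j G) := fun j => continuous_Dbar hG
  have hcs : ∀ j, HasCompactSupport (Dbar j G) := fun j => hasCompactSupport_Dbar hGc
  have hid : ∀ s : ℝ, 0 < s → ∫ ζ, G ζ * (2 * n * s * ((qf x ζ + s : ℂ) ^ (n + 1))⁻¹) =
      -∑ j, ∫ ζ, Dbar j G ζ * kerS s x j ζ := by
    intro s hs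
    have hk : ∀ j, ContDiff ℝ 1 (kerS s x j) := fun j => contDiff_kerS hs x j
    have h1 : ∀ j, Integrable (Dbar j fun ζ => G ζ * kerS s x j ζ) ∧
        ∫ ζ, Dbar j (fun ζ => G ζ * kerS s x j ζ) ζ = 0 := fun j =>
      integral_Dbar_eq_zero (hG.mul (hk j)) hGc.mul_right
    have h2 : ∀ j ζ, Dbar j (fun ζ => G ζ * kerS s x j ζ) ζ =
        Dbar j G ζ * kerS s x j ζ + G ζ * Dbar j (kerS s x j) ζ := fun j ζ =>
      Dbar_mul (hG.differentiable one_ne_zero ζ) ((hk j).differentiable one_ne_zero ζ)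
    have i1 : ∀ j, Integrable fun ζ => Dbar j G ζ * kerS s x j ζ := fun j =>
      ((hcont j).mul (hk j).continuous).integrable_of_hasCompactSupport (hcs j).mul_right
    have i2 : ∀ j, Integrable fun ζ => G ζ * Dbar j (kerS s x j) ζ := fun j =>
      (hG.continuous.mul (continuous_Dbar (hk j))).integrable_of_hasCompactSupport hGc.mul_right
    have h3 : ∀ j, ∫ ζ, G ζ * Dbar j (kerS s x j) ζ = -∫ ζ, Dbar j G ζ * kerS s x j ζ := by
      intro j
      have := (h1 j).2
      simp only [h2] at this
      rw [integral_add (i1 j) (i2 j)] at this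
      exact eq_neg_of_add_eq_zero_right this
    rw [← Finset.sum_neg_distrib]
    simp only [← h3]
    rw [← integral_finsetSum _ fun j _ => i2 j]
    congr 1
    funext ζ
    rw [← Finset.mul_sum, sum_Dbar_kerS hs]
  have hL := tendsto_peak_integral hn (hG.continuous.integrable_of_hasCompactSupport hGc) x
    hG.continuous.continuousAt
  have hs0 : Filter.Tendsto (fun c : ℝ => (c ^ 2)⁻¹) Filter.atTop (𝓝 0) :=
    (Filter.tendsto_pow_atTop two_ne_zero).inv_tendsto_atTop
  have hR : ∀ j, Filter.Tendsto (fun t : ℝ => ∫ ζ, Dbar j G ζ * kerS (t ^ 2)⁻¹ x j ζ) Filter.atTop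
      (𝓝 (∫ ζ, Dbar j G ζ * ((conj (ζ j) - x j) * ((qf x ζ : ℂ) ^ n)⁻¹))) := by
    intro j
    have hbd : Integrable fun ζ => ‖Dbar j G ζ‖ * ‖conj (ζ j) - x j‖ * (c ^ n)⁻¹ := by
      refine Integrable.mul_const ?_ _
      have : Continuous fun ζ : Fin n → ℂ => ‖conj (ζ j) - x j‖ :=
        ((Complex.continuous_conj.comp (continuous_apply j)).sub continuous_const).norm
      exact ((hcont j).norm.mul this).integrable_of_hasCompactSupport (hcs j).norm.mul_right
    refine tendsto_integral_filter_of_dominated_convergence _ ?_ ?_ hbd ?_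
    · filter_upwards [Filter.eventually_gt_atTop 0] with t ht
      exact ((hcont j).mul (contDiff_kerS (k := 1) (by positivity) x j).continuous).aestronglyMeasurable
    · filter_upwards [Filter.eventually_gt_atTop 0] with t ht
      refine Filter.Eventually.of_forall fun ζ => ?_
      by_cases hq : qf x ζ < c
      · rw [hfar j ζ hq]; simp
      · push Not at hq
        have hs : (0 : ℝ) < (t ^ 2)⁻¹ := by positivity
        rw [kerS, norm_mul, norm_mul, norm_inv, norm_pow, mul_assoc]
        gcongr
        rw [← Complex.ofReal_add, Complex.norm_real, Real.norm_of_nonneg (by linarith)]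
        linarith
    · refine Filter.Eventually.of_forall fun ζ => ?_
      by_cases hq : qf x ζ < c
      · rw [hfar j ζ hq]; simp
      · push Not at hq
        have hq0 : (qf x ζ : ℂ) ≠ 0 := by
          exact_mod_cast (lt_of_lt_of_le hc hq).ne'
        unfold kerS
        refine Filter.Tendsto.const_mul _ (Filter.Tendsto.const_mul _ (Filter.Tendsto.inv₀ ?_
          (pow_ne_zero _ hq0)))
        refine Filter.Tendsto.pow ?_ n
        have := ((Complex.continuous_ofReal.tendsto 0).comp hs0).const_add (qf x ζ : ℂ)
        simpa using this
  have hR' := (tendsto_finsetSum Finset.univ fun j _ => hR j).neg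
  refine tendsto_nhds_unique hL (hR'.congr' ?_)
  filter_upwards [Filter.eventually_gt_atTop 0] with t ht
  exact (hid _ (by positivity)).symm

end peak

/-! ### Splitting a real-analytic function -/

section cutoff
variable {n : ℕ}

lemma bump_fderiv_eq_zero {E : Type*} [NormedAddCommGroup E] [NormedSpace ℝ E] [HasContDiffBump E]
    (b : ContDiffBump (0 : E)) {y : E} (hy : ‖y‖ < b.rIn ∨ b.rOut < ‖y‖) : fderiv ℝ b y = 0 := by
  rcases hy with hy | hy
  · rw [(b.eventuallyEq_one_of_mem_ball (by simpa using hy)).fderiv_eq]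
    simp
  · have : b =ᶠ[𝓝 y] fun _ => 0 := by
      filter_upwards [continuous_norm.continuousAt.eventually_const_lt hy] with z hz
      exact b.zero_of_le_dist (by simpa using hz.le)
    rw [this.fderiv_eq]
    simp

lemma integrable_cutoff {κ g : (Fin n → ℂ) → ℂ} {T : Set (Fin n → ℂ)} (hT : IsCompact T)
    (hκ : Continuous κ) (hs : ∀ ζ ∉ T, κ ζ = 0) (hg : ∀ ζ ∈ T, ContinuousAt g ζ) :
    Integrable fun ζ => κ ζ * g ζ := by
  refine (integrableOn_iff_integrable_of_support_subset (s := T) ?_).1 ?_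
  · intro ζ hζ
    by_contra h
    exact hζ (by simp only [hs ζ h, zero_mul])
  · refine ContinuousOn.integrableOn_compact hT ?_
    exact hκ.continuousOn.mul fun ζ hζ => (hg ζ hζ).continuousWithinAt

/-- Comparison of the Euclidean and sup norms of the imaginary part. -/
lemma imsq_le (ζ : Fin n → ℂ) : imsq ζ ≤ n * ‖imL n ζ‖ ^ 2 := by
  unfold imsq
  refine (Finset.sum_le_sum fun j _ => (?_ : (ζ j).im ^ 2 ≤ ‖imL n ζ‖ ^ 2)).trans (by simp)
  rw [← sq_abs]
  gcongr
  exact norm_le_pi_norm (imL n ζ) j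

lemma norm_le_re_add_im (ζ : Fin n → ℂ) : ‖ζ‖ ≤ ‖reL n ζ‖ + ‖imL n ζ‖ := by
  conv_lhs => rw [eq_re_add_im ζ]
  refine (norm_add_le _ _).trans ?_
  rw [norm_smul, Complex.norm_I, one_mul, norm_ofR, norm_ofR]

lemma isCompact_tube (r s : ℝ) : IsCompact {ζ : Fin n → ℂ | ‖reL n ζ‖ ≤ r ∧ ‖imL n ζ‖ ≤ s} := by
  refine Metric.isCompact_of_isClosed_isBounded ?_ ?_
  · exact (isClosed_le (reL n).continuous.norm continuous_const).inter
      (isClosed_le (imL n).continuous.norm continuous_const)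
  · refine (Metric.isBounded_closedBall (x := (0 : Fin n → ℂ)) (r := r + s)).subset fun ζ hζ => ?_
    rw [mem_closedBall_zero_iff]
    exact (norm_le_re_add_im ζ).trans (add_le_add hζ.1 hζ.2)

lemma analyticAt_ef (x : Fin n → ℝ) (ζ : Fin n → ℂ) : AnalyticAt ℂ (ef x) ζ := by
  unfold ef
  refine analyticAt_const.add (Finset.analyticAt_fun_sum _ fun j _ => ?_)
  exact (((ContinuousLinearMap.proj (R := ℂ) (φ := fun _ : Fin n => ℂ) j).analyticAt ζ).sub
    analyticAt_const).pow 2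

lemma ef_ne_zero (x : Fin n → ℝ) {ζ : Fin n → ℂ} (h : imsq ζ ≤ 1 / 4) : ef x ζ ≠ 0 := by
  have := ef_lower x ζ h
  have := qf_nonneg x ζ
  exact norm_pos_iff.1 (by linarith)

lemma continuousAt_bmKer (N : ℕ) (x : Fin n → ℝ) (j : Fin n) {ζ : Fin n → ℂ} (h : imsq ζ ≤ 1 / 4)
    (hq : 0 < qf x ζ) : ContinuousAt (bmKer N x j) ζ := by
  have h1 : ContinuousAt (fun ζ : Fin n → ℂ => conj (ζ j) - x j) ζ :=
    ((Complex.continuous_conj.comp (continuous_apply j)).sub continuous_const).continuousAt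
  have h2 : ContinuousAt (fun ζ : Fin n → ℂ => (qf x ζ : ℂ)) ζ :=
    (contDiff_qf x (k := 0)).continuous.continuousAt
  have h3 := (analyticAt_ef x ζ).continuousAt
  exact (h1.mul ((h2.inv₀ (by exact_mod_cast hq.ne')).pow n)).mul ((h3.inv₀ (ef_ne_zero x h)).pow N)

variable (χ₁ χ₂ : ContDiffBump (0 : Fin n → ℝ))

/-- The product cutoff `χ₁(Re ζ) χ₂(Im ζ)`. -/
noncomputable def cutX (ζ : Fin n → ℂ) : ℂ := ((χ₁ (reL n ζ) * χ₂ (imL n ζ) : ℝ) : ℂ)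
/-- The part of `Dbar j (cutX χ₁ χ₂)` that comes from differentiating `χ₁`; it is supported away from
the ball in the real direction. -/
noncomputable def cutW (j : Fin n) (ζ : Fin n → ℂ) : ℂ :=
  ((χ₂ (imL n ζ) * fderiv ℝ χ₁ (reL n ζ) (Pi.single j 1) : ℝ) : ℂ)
/-- The part of `Dbar j (cutX χ₁ χ₂)` that comes from differentiating `χ₂`; it is supported away from
`ℝⁿ`. -/
noncomputable def cutV (j : Fin n) (ζ : Fin n → ℂ) : ℂ :=
  Complex.I * ((χ₁ (reL n ζ) * fderiv ℝ χ₂ (imL n ζ) (Pi.single j 1) : ℝ) : ℂ)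

lemma contDiff_cutX : ContDiff ℝ 1 (cutX χ₁ χ₂) :=
  Complex.ofRealCLM.contDiff.comp
    ((χ₁.contDiff.comp (reL n).contDiff).mul (χ₂.contDiff.comp (imL n).contDiff))

lemma continuous_cutW (j : Fin n) : Continuous (cutW χ₁ χ₂ j) :=
  Complex.continuous_ofReal.comp ((χ₂.continuous.comp (imL n).continuous).mul
    ((((χ₁.contDiff (n := 1)).continuous_fderiv one_ne_zero).comp (reL n).continuous).clm_apply
      continuous_const))

lemma continuous_cutV (j : Fin n) : Continuous (cutV χ₁ χ₂ j) :=
  continuous_const.mul (Complex.continuous_ofReal.comp ((χ₁.continuous.comp (reL n).continuous).mul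
    ((((χ₂.contDiff (n := 1)).continuous_fderiv one_ne_zero).comp (imL n).continuous).clm_apply
      continuous_const)))

lemma cutX_eq_zero {ζ : Fin n → ℂ} (h : χ₁.rOut < ‖reL n ζ‖ ∨ χ₂.rOut < ‖imL n ζ‖) :
    cutX χ₁ χ₂ ζ = 0 := by
  unfold cutX
  rcases h with h | h
  · rw [χ₁.zero_of_le_dist (by simpa using h.le)]; simp
  · rw [χ₂.zero_of_le_dist (by simpa using h.le)]; simp

lemma cutW_eq_zero {ζ : Fin n → ℂ} (j : Fin n)
    (h : ‖reL n ζ‖ < χ₁.rIn ∨ χ₁.rOut < ‖reL n ζ‖ ∨ χ₂.rOut < ‖imL n ζ‖) :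
    cutW χ₁ χ₂ j ζ = 0 := by
  unfold cutW
  rcases h with h | h | h
  · rw [bump_fderiv_eq_zero χ₁ (Or.inl h)]; simp
  · rw [bump_fderiv_eq_zero χ₁ (Or.inr h)]; simp
  · rw [χ₂.zero_of_le_dist (by simpa using h.le)]; simp

lemma cutV_eq_zero {ζ : Fin n → ℂ} (j : Fin n)
    (h : ‖imL n ζ‖ < χ₂.rIn ∨ χ₂.rOut < ‖imL n ζ‖ ∨ χ₁.rOut < ‖reL n ζ‖) :
    cutV χ₁ χ₂ j ζ = 0 := by
  unfold cutV
  rcases h with h | h | h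
  · rw [bump_fderiv_eq_zero χ₂ (Or.inl h)]; simp
  · rw [bump_fderiv_eq_zero χ₂ (Or.inr h)]; simp
  · rw [χ₁.zero_of_le_dist (by simpa using h.le)]; simp

lemma Dbar_cutX (j : Fin n) (ζ : Fin n → ℂ) :
    Dbar j (cutX χ₁ χ₂) ζ = cutW χ₁ χ₂ j ζ + cutV χ₁ χ₂ j ζ := by
  have h1 : HasFDerivAt (fun ζ => χ₁ (reL n ζ)) ((fderiv ℝ χ₁ (reL n ζ)).comp (reL n)) ζ :=
    (((χ₁.contDiff (n := 1)).differentiable one_ne_zero _).hasFDerivAt).comp ζ (reL n).hasFDerivAt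
  have h2 : HasFDerivAt (fun ζ => χ₂ (imL n ζ)) ((fderiv ℝ χ₂ (imL n ζ)).comp (imL n)) ζ :=
    (((χ₂.contDiff (n := 1)).differentiable one_ne_zero _).hasFDerivAt).comp ζ (imL n).hasFDerivAt
  have h3 : HasFDerivAt (cutX χ₁ χ₂) _ ζ :=
    (Complex.ofRealCLM.hasFDerivAt (x := χ₁ (reL n ζ) * χ₂ (imL n ζ))).comp ζ (h1.mul h2)
  have e1 : reL n (Pi.single j 1) = Pi.single j 1 := by
    ext i; rw [reL_apply]; by_cases h : i = j <;> simp [h]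
  have e2 : reL n (Pi.single j Complex.I) = 0 := by
    ext i; rw [reL_apply]; by_cases h : i = j <;> simp [h]
  have e3 : imL n (Pi.single j 1) = 0 := by
    ext i; rw [imL_apply]; by_cases h : i = j <;> simp [h]
  have e4 : imL n (Pi.single j Complex.I) = Pi.single j 1 := by
    ext i; rw [imL_apply]; by_cases h : i = j <;> simp [h]
  unfold Dbar cutW cutV
  rw [h3.fderiv]
  simp [e1, e2, e3, e4]

end cutoff

/-- The case `n > 0` of `splitting`: apply the Bochner–Martinelli formula to `χ₁(Re ζ) χ₂(Im ζ) Φ(ζ)`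
times the damping factor, `Φ` being a holomorphic extension of `φ`. The derivative of `χ₁` gives the
weights `W`, the derivative of `χ₂` gives `u`. -/
lemma splitting_pos {n : ℕ} (hn : 0 < n) (k : ℕ) {φ : (Fin n → ℝ) → ℝ}
    (hφ : AnalyticOnNhd ℝ φ (Metric.closedBall 0 ((k : ℝ) + 2))) :
    ∃ W : Fin n → (Fin n → ℂ) → ℂ, (∀ j, Integrable (W j)) ∧
      (∀ j, ∀ ζ ∉ OmegaSet n k, W j ζ = 0) ∧
      ∀ N : ℕ, ∃ u : (Fin n → ℝ) → ℝ, (∀ x, AnalyticAt ℝ u x) ∧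
        ∀ x, ‖x‖ < (k : ℝ) + 1 → φ x = u x + (outer W N x).re := by
  obtain ⟨ε, hε, Φ, hΦ, hΦφ⟩ := complexify hφ
  obtain ⟨δ, hδ, hδε, hδn⟩ : ∃ δ : ℝ, 0 < δ ∧ 2 * δ < ε ∧ n * (2 * δ) ^ 2 ≤ 1 / 4 := by
    refine ⟨min (ε / 4) (1 / (4 * (n + 1))), by positivity, ?_, ?_⟩
    · have := min_le_left (ε / 4) (1 / (4 * ((n : ℝ) + 1)))
      linarith
    · have h1 := min_le_right (ε / 4) (1 / (4 * ((n : ℝ) + 1)))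
      calc (n : ℝ) * (2 * min (ε / 4) (1 / (4 * ((n : ℝ) + 1)))) ^ 2
          ≤ n * (2 * (1 / (4 * ((n : ℝ) + 1)))) ^ 2 := by gcongr
        _ ≤ 1 / 4 := by
          field_simp
          nlinarith [(Nat.cast_nonneg n : (0 : ℝ) ≤ n)]
  let χ₁ : ContDiffBump (0 : Fin n → ℝ) := ⟨k + 1, k + 3 / 2, by positivity, by linarith⟩
  let χ₂ : ContDiffBump (0 : Fin n → ℝ) := ⟨δ, 2 * δ, hδ, by linarith⟩
  have r1 : χ₁.rIn = k + 1 := rfl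
  have r2 : χ₁.rOut = k + 3 / 2 := rfl
  have r3 : χ₂.rIn = δ := rfl
  have r4 : χ₂.rOut = 2 * δ := rfl
  let T : Set (Fin n → ℂ) := {ζ | ‖reL n ζ‖ ≤ k + 3 / 2 ∧ ‖imL n ζ‖ ≤ 2 * δ}
  have hT : IsCompact T := isCompact_tube _ _
  have him : ∀ ζ : Fin n → ℂ, ‖imL n ζ‖ ≤ 2 * δ → imsq ζ ≤ 1 / 4 := fun ζ h =>
    (imsq_le ζ).trans (le_trans (by gcongr) hδn)
  have hΦT : ∀ ζ ∈ T, AnalyticAt ℂ Φ ζ := fun ζ hζ => hΦ ζ (by linarith [hζ.1]) (by linarith [hζ.2])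
  have hTn : ∀ ζ ∉ T, χ₁.rOut < ‖reL n ζ‖ ∨ χ₂.rOut < ‖imL n ζ‖ := by
    intro ζ hζ
    by_contra! h
    exact hζ ⟨h.1, h.2⟩
  have hX0 : ∀ ζ ∉ T, cutX χ₁ χ₂ ζ = 0 := fun ζ hζ => cutX_eq_zero χ₁ χ₂ (hTn ζ hζ)
  have hW0 : ∀ j, ∀ ζ ∉ T, cutW χ₁ χ₂ j ζ = 0 := fun j ζ hζ =>
    cutW_eq_zero χ₁ χ₂ j (Or.inr (hTn ζ hζ))
  have hV0 : ∀ j, ∀ ζ ∉ T, cutV χ₁ χ₂ j ζ = 0 := fun j ζ hζ =>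
    cutV_eq_zero χ₁ χ₂ j (Or.inr (hTn ζ hζ).symm)
  have hc0 := bmConst_pos hn
  let W : Fin n → (Fin n → ℂ) → ℂ := fun j ζ => -(bmConst n : ℂ)⁻¹ * (cutW χ₁ χ₂ j ζ * Φ ζ)
  let V : Fin n → (Fin n → ℂ) → ℂ := fun j ζ => -(bmConst n : ℂ)⁻¹ * (cutV χ₁ χ₂ j ζ * Φ ζ)
  have hWi : ∀ j, Integrable (W j) := fun j => (integrable_cutoff hT (continuous_cutW χ₁ χ₂ j) (hW0 j)
    fun ζ hζ => (hΦT ζ hζ).continuousAt).const_mul _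
  have hVi : ∀ j, Integrable (V j) := fun j => (integrable_cutoff hT (continuous_cutV χ₁ χ₂ j) (hV0 j)
    fun ζ hζ => (hΦT ζ hζ).continuousAt).const_mul _
  refine ⟨W, hWi, ?_, fun N => ?_⟩
  · intro j ζ hζ
    have : cutW χ₁ χ₂ j ζ = 0 := by
      by_contra h
      have h' : ¬ (‖reL n ζ‖ < χ₁.rIn ∨ χ₁.rOut < ‖reL n ζ‖ ∨ χ₂.rOut < ‖imL n ζ‖) := fun h' =>
        h (cutW_eq_zero χ₁ χ₂ j h')
      push Not at h'
      exact hζ ⟨h'.1, him ζ h'.2.2⟩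
    simp [W, this]
  refine ⟨fun x => (outer V N x).re, fun x => ?_, fun x hx => ?_⟩
  -- The weights `V` are supported at distance at least `δ` from `ℝⁿ`, so their transform is
  -- analytic on all of `ℝⁿ`.
  · let S : Set (Fin n → ℂ) := {ζ | δ ≤ ‖imL n ζ‖ ∧ imsq ζ ≤ 1 / 4}
    have hS : GoodSet S x := by
      refine ⟨?_, fun ζ h => h.2, δ ^ 2, by positivity, fun ζ h => ?_⟩
      · exact ((isClosed_le continuous_const (imL n).continuous.norm).inter
          (isClosed_le continuous_imsq continuous_const)).measurableSet
      · refine le_trans ?_ (im_sq_le_qf x ζ)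
        have := h.1
        gcongr
    have hVS : ∀ j, ∀ ζ ∉ S, V j ζ = 0 := by
      intro j ζ hζ
      have : cutV χ₁ χ₂ j ζ = 0 := by
        by_contra h
        have h' : ¬ (‖imL n ζ‖ < χ₂.rIn ∨ χ₂.rOut < ‖imL n ζ‖ ∨ χ₁.rOut < ‖reL n ζ‖) := fun h' =>
          h (cutV_eq_zero χ₁ χ₂ j h')
        push Not at h'
        exact hζ ⟨h'.1, him ζ h'.2.1⟩
      simp [V, this]
    have h1 : AnalyticAt ℝ (fun x => outer V N x) x :=
      Finset.analyticAt_fun_sum _ fun j _ => hS.analyticAt_integral (V j) (hVi j) (hVS j) N j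
    exact (Complex.reCLM.analyticAt _).comp h1
  -- Multiplying by the holomorphic damping factor does not change the value at `x`.
  · let H : (Fin n → ℂ) → ℂ := fun ζ => Φ ζ * ((ef x ζ)⁻¹) ^ N
    have hH : ∀ ζ ∈ T, AnalyticAt ℂ H ζ := fun ζ hζ =>
      (hΦT ζ hζ).mul (((analyticAt_ef x ζ).inv (ef_ne_zero x (him ζ hζ.2))).pow N)
    let G : (Fin n → ℂ) → ℂ := fun ζ => cutX χ₁ χ₂ ζ * H ζ
    have hGout : ∀ ζ ∉ T, G =ᶠ[𝓝 ζ] fun _ => 0 := by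
      intro ζ hζ
      filter_upwards [hT.isClosed.isOpen_compl.mem_nhds hζ] with w hw
      simp only [G, hX0 w hw, zero_mul]
    have hGd : ContDiff ℝ 1 G := by
      rw [contDiff_iff_contDiffAt]
      intro ζ
      by_cases hζ : ζ ∈ T
      · exact (contDiff_cutX χ₁ χ₂).contDiffAt.mul ((hH ζ hζ).contDiffAt.restrict_scalars ℝ)
      · exact contDiffAt_const.congr_of_eventuallyEq (hGout ζ hζ)
    have hGc : HasCompactSupport G := by
      refine HasCompactSupport.intro hT fun ζ hζ => ?_
      simp only [G, hX0 ζ hζ, zero_mul]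
    have hDG : ∀ j ζ, Dbar j G ζ = (cutW χ₁ χ₂ j ζ + cutV χ₁ χ₂ j ζ) * H ζ := by
      intro j ζ
      by_cases hζ : ζ ∈ T
      · have hd : DifferentiableAt ℂ H ζ := (hH ζ hζ).differentiableAt
        rw [Dbar_mul ((contDiff_cutX χ₁ χ₂).differentiable one_ne_zero ζ) (hd.restrictScalars ℝ),
          Dbar_holo hd, Dbar_cutX, mul_zero, add_zero]
      · rw [Dbar_congr (hGout ζ hζ), hW0 j ζ hζ, hV0 j ζ hζ]
        simp [Dbar]
    let c := min ((k : ℝ) + 1 - ‖x‖) δ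
    have hc : 0 < c := lt_min (by linarith) hδ
    have hre : ∀ ζ, qf x ζ < c ^ 2 → ‖reL n ζ‖ < χ₁.rIn := by
      intro ζ hζ
      have h1 := lt_of_pow_lt_pow_left₀ 2 hc.le ((re_sq_le_qf x ζ).trans_lt hζ)
      have h2 := norm_sub_norm_le (reL n ζ) x
      have h3 : c ≤ (k : ℝ) + 1 - ‖x‖ := min_le_left _ _
      rw [r1]; linarith
    have him' : ∀ ζ, qf x ζ < c ^ 2 → ‖imL n ζ‖ < χ₂.rIn := by
      intro ζ hζ
      have h1 := lt_of_pow_lt_pow_left₀ 2 hc.le ((im_sq_le_qf x ζ).trans_lt hζ)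
      exact h1.trans_le (min_le_right _ _)
    have hBM := bochner_martinelli hn hGd hGc x (c := c ^ 2) (by positivity) fun j ζ hζ => by
      rw [hDG, cutW_eq_zero χ₁ χ₂ j (Or.inl (hre ζ hζ)), cutV_eq_zero χ₁ χ₂ j (Or.inl (him' ζ hζ))]
      simp
    have hGx : G (ofR x) = φ x := by
      have e1 : cutX χ₁ χ₂ (ofR x) = 1 := by
        unfold cutX
        rw [reL_ofR, imL_ofR, χ₁.one_of_mem_closedBall (by simpa [r1] using hx.le),
          χ₂.one_of_mem_closedBall (by simpa [r3] using hδ.le)]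
        simp
      have e2 : ef x (ofR x) = 1 := by simp [ef, ofR]
      simp only [G, H, e1, e2]
      rw [hΦφ x (by linarith)]
      simp
    let T' : Set (Fin n → ℂ) := T ∩ {ζ | c ^ 2 ≤ qf x ζ}
    have hT' : IsCompact T' := hT.inter_right (isClosed_le continuous_const (by
      have := (contDiff_qf x (k := 0)).continuous
      exact (Complex.continuous_re.comp this).congr fun ζ => by simp))
    have hintg : ∀ (κ : Fin n → (Fin n → ℂ) → ℂ), (∀ j, Continuous (κ j)) → (∀ j, ∀ ζ ∉ T, κ j ζ = 0) →
        (∀ j ζ, qf x ζ < c ^ 2 → κ j ζ = 0) → ∀ j,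
        Integrable fun ζ => κ j ζ * (Φ ζ * bmKer N x j ζ) := by
      intro κ h1 h2 h3 j
      refine integrable_cutoff hT' (h1 j) ?_ ?_
      · intro ζ hζ
        by_cases h : ζ ∈ T
        · exact h3 j ζ (not_le.1 fun h' => hζ ⟨h, h'⟩)
        · exact h2 j ζ h
      · intro ζ hζ
        exact (hΦT ζ hζ.1).continuousAt.mul (continuousAt_bmKer N x j (him ζ hζ.1.2)
          (lt_of_lt_of_le (by positivity) hζ.2))
    have iW := hintg (cutW χ₁ χ₂) (continuous_cutW χ₁ χ₂) hW0 fun j ζ hζ =>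
      cutW_eq_zero χ₁ χ₂ j (Or.inl (hre ζ hζ))
    have iV := hintg (cutV χ₁ χ₂) (continuous_cutV χ₁ χ₂) hV0 fun j ζ hζ =>
      cutV_eq_zero χ₁ χ₂ j (Or.inl (him' ζ hζ))
    have hsum : ∀ j, ∫ ζ, Dbar j G ζ * ((conj (ζ j) - x j) * ((qf x ζ : ℂ) ^ n)⁻¹) =
        (∫ ζ, cutW χ₁ χ₂ j ζ * (Φ ζ * bmKer N x j ζ)) +
          ∫ ζ, cutV χ₁ χ₂ j ζ * (Φ ζ * bmKer N x j ζ) := by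
      intro j
      rw [← integral_add (iW j) (iV j)]
      congr 1
      funext ζ
      rw [hDG, bmKer, inv_pow (qf x ζ : ℂ)]
      simp only [H]
      ring
    have ho : ∀ (κ : Fin n → (Fin n → ℂ) → ℂ),
        outer (fun j ζ => -(bmConst n : ℂ)⁻¹ * (κ j ζ * Φ ζ)) N x =
          -(bmConst n : ℂ)⁻¹ * ∑ j, ∫ ζ, κ j ζ * (Φ ζ * bmKer N x j ζ) := by
      intro κ
      unfold outer
      rw [Finset.mul_sum]
      refine Finset.sum_congr rfl fun j _ => ?_
      rw [← integral_const_mul]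
      congr 1
      funext ζ
      ring
    have key : (φ x : ℂ) = outer V N x + outer W N x := by
      have hne : (bmConst n : ℂ) ≠ 0 := by exact_mod_cast hc0.ne'
      rw [ho, ho, ← mul_add, add_comm, ← Finset.sum_add_distrib]
      simp only [hsum, hGx] at hBM
      rw [neg_mul, ← mul_neg, ← hBM, inv_mul_cancel_left₀ hne]
    have := congrArg Complex.re key
    simpa using this

/-- A function analytic near the closed ball of radius `k + 2` is, on the ball of radius `k + 1`, the
sum of a function `u` analytic on all of `ℝⁿ` and the real part of the transform of weights living on
`OmegaSet n k`. The weights do not depend on the damping exponent `N`. -/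
lemma splitting (n k : ℕ) {φ : (Fin n → ℝ) → ℝ}
    (hφ : AnalyticOnNhd ℝ φ (Metric.closedBall 0 ((k : ℝ) + 2))) :
    ∃ W : Fin n → (Fin n → ℂ) → ℂ, (∀ j, Integrable (W j)) ∧
      (∀ j, ∀ ζ ∉ OmegaSet n k, W j ζ = 0) ∧
      ∀ N : ℕ, ∃ u : (Fin n → ℝ) → ℝ, (∀ x, AnalyticAt ℝ u x) ∧
        ∀ x, ‖x‖ < (k : ℝ) + 1 → φ x = u x + (outer W N x).re := by
  rcases Nat.eq_zero_or_pos n with rfl | hn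
  · refine ⟨fun _ _ => 0, fun j => j.elim0, fun j => j.elim0, fun N => ⟨φ, fun x => ?_, ?_⟩⟩
    · refine hφ x ?_
      rw [Subsingleton.elim x 0]
      exact Metric.mem_closedBall_self (by positivity)
    · intro x _
      simp [outer]
  · exact splitting_pos hn k hφ

/-! ### Saturated ideals and the infinite product -/

section ideals
variable {n : ℕ}

/-- A finite sum of squares of elements of `a` is positive on a compact set that misses the zero set. -/
lemma exists_pos_on_compact (a : Ideal (ORn n)) {K : Set (Fin n → ℝ)} (hK : IsCompact K)
    (hd : ∀ y ∈ K, y ∉ ZR n a) :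
    ∃ g ∈ a, ∀ y ∈ K, 0 < (g : (Fin n → ℝ) → ℝ) y := by
  suffices h : ∃ g ∈ a, (∀ y ∈ K, 0 < (g : (Fin n → ℝ) → ℝ) y) ∧
      ∀ y, 0 ≤ (g : (Fin n → ℝ) → ℝ) y by
    obtain ⟨g, h1, h2, -⟩ := h
    exact ⟨g, h1, h2⟩
  refine hK.induction_on (p := fun s => ∃ g ∈ a, (∀ y ∈ s, 0 < (g : (Fin n → ℝ) → ℝ) y) ∧
      ∀ y, 0 ≤ (g : (Fin n → ℝ) → ℝ) y) ?_ ?_ ?_ ?_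
  · exact ⟨0, a.zero_mem, by simp, by simp⟩
  · rintro s t hst ⟨g, h1, h2, h3⟩
    exact ⟨g, h1, fun y hy => h2 y (hst hy), h3⟩
  · rintro s t ⟨g, h1, h2, h3⟩ ⟨f, k1, k2, k3⟩
    refine ⟨g + f, a.add_mem h1 k1, fun y hy => ?_, fun y => add_nonneg (h3 y) (k3 y)⟩
    rcases hy with hy | hy
    · exact add_pos_of_pos_of_nonneg (h2 y hy) (k3 y)
    · exact add_pos_of_nonneg_of_pos (h3 y) (k2 y hy)
  · intro y hy
    have := hd y hy
    simp only [ZR, Set.mem_ofPred_eq, not_forall] at this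
    obtain ⟨f, hf, hfy⟩ := this
    refine ⟨{z | (f : (Fin n → ℝ) → ℝ) z ≠ 0}, ?_, f * f, a.mul_mem_left _ hf, fun z hz => ?_,
      fun z => mul_self_nonneg _⟩
    · exact mem_nhdsWithin_of_mem_nhds ((f.2 y).continuousAt.eventually_ne hfy)
    · exact mul_self_pos.2 hz

lemma exists_common_pos {ι : Type*} (a : ι → Ideal (ORn n)) {s : Set ι} (hs : s.Finite)
    {K : Set (Fin n → ℝ)} (hK : IsCompact K) (hd : ∀ i ∈ s, ∀ y ∈ K, y ∉ ZR n (a i)) :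
    ∃ g : ORn n, (∀ i ∈ s, g ∈ a i) ∧ ∀ y ∈ K, 0 < (g : (Fin n → ℝ) → ℝ) y := by
  induction s, hs using Set.Finite.induction_on with
  | empty => exact ⟨1, by simp, fun y _ => one_pos⟩
  | @insert i s _ _ ih =>
    obtain ⟨g, h1, h2⟩ := ih fun j hj => hd j (Or.inr hj)
    obtain ⟨f, k1, k2⟩ := exists_pos_on_compact (a i) hK (hd i (Or.inl rfl))
    refine ⟨f * g, ?_, fun y hy => mul_pos (k2 y hy) (h2 y hy)⟩
    rintro j (rfl | hj)
    · exact (a j).mul_mem_right _ k1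
    · exact (a j).mul_mem_left _ (h1 j hj)

/-- A saturated ideal contains every function that is locally an analytic multiple of one of its
elements. -/
lemma mem_of_local {a : Ideal (ORn n)} (ha : saturation n (a : Set (ORn n)) = (a : Set (ORn n)))
    {H : ORn n} (h : ∀ x, ∃ g ∈ a, ∃ U : Set (Fin n → ℝ), IsOpen U ∧ x ∈ U ∧
      ∃ c : (Fin n → ℝ) → ℝ, (∀ y ∈ U, AnalyticAt ℝ c y) ∧
        ∀ y ∈ U, (H : (Fin n → ℝ) → ℝ) y = c y * (g : (Fin n → ℝ) → ℝ) y) : H ∈ a := by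
  rw [← SetLike.mem_coe, ← ha]
  intro x
  obtain ⟨g, hg, U, hU, hx, c, hc, hcg⟩ := h x
  exact ⟨U, hU, hx, 1, fun _ => g, fun _ => c, fun _ => hg, fun _ => hc, fun y hy => by
    simpa using hcg y hy⟩

lemma eq_top_of_ZR_empty {a : Ideal (ORn n)}
    (ha : saturation n (a : Set (ORn n)) = (a : Set (ORn n))) (h : ∀ x, x ∉ ZR n a) : a = ⊤ := by
  rw [Ideal.eq_top_iff_one]
  refine mem_of_local ha fun x => ?_
  obtain ⟨g, hg, hgx⟩ := exists_pos_on_compact a (isCompact_singleton (x := x))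
    (by simpa using h x)
  refine ⟨g, hg, {y | 0 < (g : (Fin n → ℝ) → ℝ) y}, ?_, hgx x rfl,
    fun y => ((g : (Fin n → ℝ) → ℝ) y)⁻¹, fun y hy => (g.2 y).inv (ne_of_gt hy), fun y hy => ?_⟩
  · exact isOpen_lt continuous_const
      (continuous_iff_continuousAt.2 fun y => (g.2 y).continuousAt)
  · exact (inv_mul_cancel₀ (ne_of_gt hy)).symm

/-- Given `g k` positive on the closed ball of radius `k + 2`, there is an analytic `H` which vanishes
at most where some `g k` vanishes and is locally an analytic multiple of each `g k`: a convergent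
infinite product of the `g k`, corrected by nowhere vanishing analytic factors. -/
lemma exists_infinite_product (g : ℕ → ORn n)
    (hg : ∀ k : ℕ, ∀ y ∈ Metric.closedBall 0 ((k : ℝ) + 2), 0 < (g k : (Fin n → ℝ) → ℝ) y) :
    ∃ H : ORn n, (∀ y, (∀ k, (g k : (Fin n → ℝ) → ℝ) y ≠ 0) → (H : (Fin n → ℝ) → ℝ) y ≠ 0) ∧
      ∀ k x, ∃ U : Set (Fin n → ℝ), IsOpen U ∧ x ∈ U ∧
        ∃ c : (Fin n → ℝ) → ℝ, (∀ y ∈ U, AnalyticAt ℝ c y) ∧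
          ∀ y ∈ U, (H : (Fin n → ℝ) → ℝ) y = c y * (g k : (Fin n → ℝ) → ℝ) y := by
  choose W hWi hWS hW using fun k => splitting n k
    (φ := fun y => Real.log ((g k : (Fin n → ℝ) → ℝ) y))
    fun y hy => (analyticAt_log (hg k y hy)).comp ((g k).2 y)
  obtain ⟨N, hN⟩ := exists_exponents n W hWi hWS
  choose u hu hφ using fun k => hW k (N k)
  -- The corrected factors: `F k` is the exponential of a transform on the ball of radius `k + 1`.
  let F : ℕ → (Fin n → ℝ) → ℝ := fun k y => (g k : (Fin n → ℝ) → ℝ) y * Real.exp (-u k y)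
  have hFan : ∀ k y, AnalyticAt ℝ (F k) y := fun k y => ((g k).2 y).mul (hu k y).neg.rexp
  have hF : ∀ (k : ℕ) y, ‖y‖ < (k : ℝ) + 1 → F k y = Real.exp (outer (W k) (N k) y).re := by
    intro k y hy
    have h0 : 0 < (g k : (Fin n → ℝ) → ℝ) y := hg k y (by
      rw [mem_closedBall_zero_iff]; linarith)
    simp only [F]
    nth_rewrite 1 [← Real.exp_log h0]
    rw [← Real.exp_add]
    have := hφ k y hy
    congr 1
    linarith
  -- `E m` stands for the tail product of the `F k`, `k ≥ m`, on the ball of radius `m`.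
  let E : ℕ → (Fin n → ℝ) → ℝ := fun m y =>
    Real.exp (∑' k, outer (W (m + k)) (N (m + k)) y).re
  have hE : ∀ (m : ℕ) y, ‖y‖ < m → AnalyticAt ℝ (E m) y := fun m y hy =>
    ((Complex.reCLM.analyticAt _).comp (hN m y hy).1).rexp
  let Hm : ℕ → (Fin n → ℝ) → ℝ := fun m y => (∏ k ∈ Finset.range m, F k y) * E m y
  have hstep : ∀ (m : ℕ) y, ‖y‖ < m → Hm m y = Hm (m + 1) y := by
    intro m y hy
    simp only [Hm, E]
    rw [Finset.prod_range_succ, hF m y (by linarith), mul_assoc, ← Real.exp_add,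
      ((hN m y hy).2).tsum_eq_zero_add, Complex.add_re]
    simp only [add_zero, add_assoc, add_comm 1]
  have hle : ∀ (m m' : ℕ), m ≤ m' → ∀ y, ‖y‖ < m → Hm m y = Hm m' y := by
    intro m m' hmm y hy
    induction m', hmm using Nat.le_induction with
    | base => rfl
    | succ l hl ih => rw [ih, hstep l y (hy.trans_le (by exact_mod_cast hl))]
  let H : (Fin n → ℝ) → ℝ := fun y => Hm (⌊‖y‖⌋₊ + 1) y
  have hH : ∀ (m : ℕ) y, ‖y‖ < m → H y = Hm m y := by
    intro m y hy
    refine hle _ _ ?_ y (by exact_mod_cast Nat.lt_floor_add_one ‖y‖)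
    exact (Nat.floor_lt (norm_nonneg y)).2 hy
  have hHan : ∀ x, AnalyticAt ℝ H x := by
    intro x
    obtain ⟨m, hm⟩ := exists_nat_gt ‖x‖
    have h1 : AnalyticAt ℝ (Hm m) x :=
      (Finset.analyticAt_fun_prod _ fun k _ => hFan k x).mul (hE m x hm)
    refine h1.congr ?_
    filter_upwards [continuous_norm.continuousAt.eventually_lt_const hm] with y hy
    exact (hH m y hy).symm
  refine ⟨⟨H, hHan⟩, fun y hy => ?_, fun k x => ?_⟩
  · refine mul_ne_zero (Finset.prod_ne_zero_iff.2 fun k _ => ?_) (Real.exp_ne_zero _)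
    exact mul_ne_zero (hy k) (Real.exp_ne_zero _)
  · obtain ⟨m, hm⟩ := exists_nat_gt (max ‖x‖ k)
    have hmx := (le_max_left _ _).trans_lt hm
    have hmk : k < m := by exact_mod_cast (le_max_right _ _).trans_lt hm
    refine ⟨{y | ‖y‖ < m}, isOpen_lt continuous_norm continuous_const, hmx,
      fun y => (∏ l ∈ (Finset.range m).erase k, F l y) * E m y * Real.exp (-u k y),
      fun y hy => ?_, fun y hy => ?_⟩
    · exact ((Finset.analyticAt_fun_prod _ fun l _ => hFan l y).mul (hE m y hy)).mul
        (hu k y).neg.rexp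
    · refine (hH m y hy).trans ?_
      simp only [Hm]
      rw [← Finset.prod_erase_mul _ _ (Finset.mem_range.2 hmk)]
      simp only [F]
      ring

/-- A single analytic function, non-zero at `x`, that lies in all the ideals whose zero set misses
`x`. -/
lemma exists_mem_iInter_ne_zero {ι : Type*} (a : ι → Ideal (ORn n))
    (hsat : ∀ i, saturation n (a i : Set (ORn n)) = (a i : Set (ORn n)))
    (hlf : LocallyFinite fun i => ZR n (a i)) (x : Fin n → ℝ) :
    ∃ H : ORn n, (∀ i, x ∉ ZR n (a i) → H ∈ a i) ∧ (H : (Fin n → ℝ) → ℝ) x ≠ 0 := by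
  let M : ℝ → Set ι := fun r => {i | (ZR n (a i) ∩ Metric.closedBall 0 r).Nonempty}
  have hM : ∀ r, (M r).Finite := fun r =>
    hlf.finite_nonempty_inter_compact (isCompact_closedBall _ _)
  let X : Set ι := {i | x ∉ ZR n (a i)}
  -- The finitely many ideals with zeros in the ball of radius `2` are handled by one factor `g₀`.
  obtain ⟨g₀, hg₀, hg₀x⟩ := exists_common_pos a ((hM 2).inter_of_left X)
    (isCompact_singleton (x := x)) fun i hi y hy => by
      rw [Set.mem_singleton_iff.1 hy]; exact hi.2
  -- The ideals whose zero set first appears between radius `k + 2` and `k + 3`.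
  choose g hga hgp using fun k : ℕ => exists_common_pos a
    (s := (M (k + 3) \ M (k + 2)) ∩ X) (((hM _).sdiff).inter_of_left X)
    (K := Metric.closedBall 0 ((k : ℝ) + 2) ∪ {x})
    ((isCompact_closedBall _ _).union isCompact_singleton) fun i hi y hy hz => by
      rcases hy with hy | hy
      · exact hi.1.2 ⟨y, hz, hy⟩
      · rw [Set.mem_singleton_iff.1 hy] at hz
        exact hi.2 hz
  obtain ⟨H, hHne, hHloc⟩ := exists_infinite_product g fun k y hy => hgp k y (Or.inl hy)
  refine ⟨g₀ * H, fun i hi => ?_,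
    mul_ne_zero (hg₀x x rfl).ne' (hHne x fun k => (hgp k x (Or.inr rfl)).ne')⟩
  by_cases h0 : i ∈ M 2
  · exact (a i).mul_mem_right _ (hg₀ i ⟨h0, hi⟩)
  refine (a i).mul_mem_left _ ?_
  by_cases hZ : ∀ y, y ∉ ZR n (a i)
  · rw [eq_top_of_ZR_empty (hsat i) hZ]
    trivial
  push Not at hZ
  obtain ⟨y, hy⟩ := hZ
  have hex : ∃ m : ℕ, i ∈ M (m + 2) := by
    obtain ⟨m, hm⟩ := exists_nat_ge ‖y‖
    exact ⟨m, y, hy, by rw [mem_closedBall_zero_iff]; linarith⟩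
  classical
  obtain ⟨k, hk⟩ : ∃ k, Nat.find hex = k + 1 := by
    refine Nat.exists_eq_succ_of_ne_zero fun h => h0 ?_
    have := Nat.find_spec hex
    rw [h] at this
    simpa using this
  have h1 : i ∈ M ((k : ℝ) + 3) := by
    have := Nat.find_spec hex
    rw [hk] at this
    convert this using 2
    push_cast
    ring
  have h2 : i ∉ M ((k : ℝ) + 2) := Nat.find_min hex (by omega)
  exact mem_of_local (hsat i) fun z => ⟨g k, hga k i ⟨⟨h1, h2⟩, hi⟩, hHloc k z⟩

end ideals

end Preparation

/-! ### Prime saturated ideals -/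

theorem stmt_10 (n : ℕ) {ι : Type*} (a : ι → Ideal (ORn n))
    (hsat : ∀ i, saturation n (a i : Set (ORn n)) = (a i : Set (ORn n)))
    (hlf : LocallyFinite fun i => ZR n (a i))
    (p : Ideal (ORn n)) (hp : p.IsPrime)
    (hpsat : saturation n (p : Set (ORn n)) = (p : Set (ORn n)))
    (hsub : (⋂ i, (a i : Set (ORn n))) ⊆ (p : Set (ORn n))) :
    ∃ i, a i ≤ p := by
  by_contra! hno
  obtain ⟨x, hx⟩ : ∃ x, x ∈ ZR n p := by
    by_contra! h
    exact hp.ne_top (eq_top_of_ZR_empty hpsat h)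
  have hJ : {i | x ∈ ZR n (a i)}.Finite := hlf.point_finite x
  choose f hfa hfp using fun i => SetLike.not_le_iff_exists.1 (hno i)
  obtain ⟨H, hH, hHx⟩ := exists_mem_iInter_ne_zero a hsat hlf x
  have hmem : (∏ i ∈ hJ.toFinset, f i) * H ∈ p := by
    refine hsub (Set.mem_iInter.2 fun i => ?_)
    by_cases hi : x ∈ ZR n (a i)
    · exact (a i).mul_mem_right _
        ((a i).mem_of_dvd (Finset.dvd_prod_of_mem f (hJ.mem_toFinset.2 hi)) (hfa i))
    · exact (a i).mul_mem_left _ (hH i hi)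
  rcases hp.mem_or_mem hmem with h | h
  · obtain ⟨i, -, hi⟩ := hp.prod_mem_iff.1 h
    exact hfp i hi
  · exact hHx (hx H h)
end

section
/- Let 𝔞 be an ideal of the polynomial ring ℝ[x₁,…,xₙ] and let Z(𝔞) := {x ∈ ℝⁿ : p(x) = 0 for all p ∈ 𝔞}. Let f ∈ ℝ[x₁,…,xₙ] be positive semidefinite (f(x) ≥ 0 for all x ∈ ℝⁿ) with {x : f(x) = 0} = Z(𝔞). Then for every g ∈ ℝ[x₁,…,xₙ], g vanishes identically on Z(𝔞) if and only if there exist integers m ≥ 1, ℓ ≥ 0 and a real constant C > 0 such that C·(1 + ‖x‖²)^ℓ·f(x) − g(x)^{2m} ≥ 0 for all x ∈ ℝⁿ, where ‖x‖² = x₁² + ⋯ + xₙ². -/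
/-!
If the inequality holds and `f x = 0`, then `g x ^ (2 * m) ≤ 0`, so `g x = 0`. The converse is a
global Łojasiewicz inequality, deduced from elimination of real quantifiers.

For `u ≥ 1` the set `K u = {x | |x|² ≤ u, u g(x)² ≥ 1}` is compact and `f > 0` on it, since `g` has
no zero there. Let `T` be the set of `(u, w)` for which some `x ∈ K u` has `w f(x) ≤ 1`. By the
projection theorem (`exists_signs_mv`) membership in `T` depends only on the signs of finitely many
polynomials in `(u, w)`, and for `u` large these signs do not change with `w` on `w ≥ u ^ N`
(`exists_sign_const`). By compactness `(u, w) ∉ T` for `w` large, hence already for `w = u ^ N`: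
this is `exists_lower_bound`, `f > u ^ (-N)` on `K u`. Taking `u` of the order of
`(1 + |x|²) (1 + g(x)²) / g(x)²` and bounding `1 + g²` by a power of `1 + |x|²` gives the claim.

The projection theorem is proved by the Cohen–Hörmander method (`exists_signMatch`). To find the
sign table of a family of one-variable polynomials, take a member `p` of maximal degree. Between
consecutive roots of `p'` and of the other members, `p` is monotone, and at a root of `q` its sign
is that of `q.cancelLeads p`, up to the sign of the leading coefficient of `q`; so the table follows
from that of a family of smaller degrees (`SignMatch.insert`).
-/

/-- The real zero set of an ideal of `ℝ[x₁,…,xₙ]`. -/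
def ZP (n : ℕ) (a : Ideal (MvPolynomial (Fin n) ℝ)) : Set (Fin n → ℝ) :=
  {x | ∀ p ∈ a, MvPolynomial.eval x p = 0}

namespace Lojasiewicz

open Polynomial SignType

/-! ### Monotone polynomials between marked points -/

/-- The points that lie, relative to the values `φ z` for `z ∈ Z`, as `x` lies relative to the
points `z` themselves. For `x ∉ Z` and `φ` increasing on a finite `Z` this is one of the open
intervals into which `φ '' Z` cuts the line. -/
def gap (Z : Set ℝ) (φ : ℝ → ℝ) (x : ℝ) : Set ℝ :=
  {y | ∀ z ∈ Z, (z < x → φ z < y) ∧ (x < z → y < φ z)}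

lemma mem_gap_of_mem_Icc {Z : Set ℝ} {φ : ℝ → ℝ} {x u v y : ℝ} (hu : u ∈ gap Z φ x)
    (hv : v ∈ gap Z φ x) (h1 : u ≤ y) (h2 : y ≤ v) : y ∈ gap Z φ x := fun z hz =>
  ⟨fun h => ((hu z hz).1 h).trans_le h1, fun h => h2.trans_lt ((hv z hz).2 h)⟩

/-- If `p` and `r` are increasing on corresponding gaps and `r` is negative at the marked points
where `p` is, then `r` takes a negative value in its gap as soon as `p` does: at a finite left end
the sign of `p`, hence of `r`, is negative; at `-∞` the polynomial `r` is unbounded. -/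
lemma exists_neg_of_deriv_pos {Z : Set ℝ} (hZ : Z.Finite) {φ : ℝ → ℝ}
    (hmono : ∀ z ∈ Z, ∀ z' ∈ Z, z ≤ z' → φ z ≤ φ z') {p r : Polynomial ℝ} {x w : ℝ}
    (hw : w ∈ gap Z φ x) (hr : 0 < r.degree)
    (hp' : ∀ y ∈ gap Z id x, 0 < p.derivative.eval y)
    (hr' : ∀ y ∈ gap Z φ x, 0 < r.derivative.eval y)
    (hs : ∀ z ∈ Z, p.eval z < 0 → r.eval (φ z) < 0) (hpx : p.eval x < 0) :
    ∃ y ∈ gap Z φ x, r.eval y < 0 := by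
  have hfin : (Z ∩ Set.Iio x).Finite := hZ.subset Set.inter_subset_left
  -- In the first case the gap reaches down to `-∞`, where `|r|` is unbounded; in the second,
  -- `l` is its left end on the side of `p`.
  rcases (Z ∩ Set.Iio x).eq_empty_or_nonempty with he | hne
  · obtain ⟨y, hy, hyw⟩ := (((Polynomial.abs_tendsto_atBot r hr).eventually_gt_atTop
      |r.eval w|).and (Filter.eventually_le_atBot w)).exists
    have hlow : ∀ u ≤ w, u ∈ gap Z φ x := fun u hu z hz =>
      ⟨fun h => absurd (show z ∈ Z ∩ Set.Iio x from ⟨hz, h⟩) (by simp [he]),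
        fun h => hu.trans_lt ((hw z hz).2 h)⟩
    refine ⟨y, hlow y hyw, ?_⟩
    have hm : StrictMonoOn (fun t => r.eval t) (Set.Icc y w) := by
      apply strictMonoOn_of_deriv_pos (convex_Icc _ _) r.continuous.continuousOn
      intro t ht
      rw [interior_Icc] at ht
      rw [Polynomial.deriv]
      exact hr' t (hlow t ht.2.le)
    have hle : r.eval y ≤ r.eval w :=
      hm.monotoneOn ⟨le_rfl, hyw⟩ ⟨hyw, le_rfl⟩ hyw
    by_contra hcon
    push Not at hcon
    rw [abs_of_nonneg hcon, abs_of_nonneg (hcon.trans hle)] at hy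
    linarith
  · obtain ⟨l, ⟨hlZ, hlx⟩, hlmax⟩ := Set.exists_max_image _ id hfin hne
    simp only [id, Set.mem_Iio] at hlmax hlx
    have hm : StrictMonoOn (fun t => p.eval t) (Set.Icc l x) := by
      apply strictMonoOn_of_deriv_pos (convex_Icc _ _) p.continuous.continuousOn
      intro t ht
      rw [interior_Icc] at ht
      rw [Polynomial.deriv]
      refine hp' t fun z hz => ⟨fun h => (hlmax z ⟨hz, h⟩).trans_lt ht.1, fun h => ht.2.trans h⟩
    have hpl : p.eval l < 0 :=
      (hm ⟨le_rfl, hlx.le⟩ ⟨hlx.le, le_rfl⟩ hlx).trans hpx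
    have hlw : φ l < w := (hw l hlZ).1 hlx
    have hev : ∀ᶠ y in nhdsWithin (φ l) (Set.Ioi (φ l)), r.eval y < 0 :=
      (r.continuous.continuousAt.eventually_lt continuousAt_const (hs l hlZ hpl)).filter_mono
        nhdsWithin_le_nhds
    obtain ⟨y, hy, hy1, hy2⟩ := (hev.and (Ioo_mem_nhdsGT hlw)).exists
    exact ⟨y, fun z hz => ⟨fun h => (hmono z hz l hlZ (hlmax z ⟨hz, h⟩)).trans_lt hy1,
      fun h => hy2.trans ((hw z hz).2 h)⟩, hy⟩

/-- The mirror image of `exists_neg_of_deriv_pos` under `x ↦ -x`. -/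
lemma exists_neg_of_deriv_neg {Z : Set ℝ} (hZ : Z.Finite) {φ : ℝ → ℝ}
    (hmono : ∀ z ∈ Z, ∀ z' ∈ Z, z ≤ z' → φ z ≤ φ z') {p r : Polynomial ℝ} {x w : ℝ}
    (hw : w ∈ gap Z φ x) (hr : 0 < r.degree)
    (hp' : ∀ y ∈ gap Z id x, p.derivative.eval y < 0)
    (hr' : ∀ y ∈ gap Z φ x, r.derivative.eval y < 0)
    (hs : ∀ z ∈ Z, p.eval z < 0 → r.eval (φ z) < 0) (hpx : p.eval x < 0) :
    ∃ y ∈ gap Z φ x, r.eval y < 0 := by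
  have key : ∀ (ψ : ℝ → ℝ) (y : ℝ), y ∈ gap (-Z) (fun t => -ψ (-t)) (-x) → -y ∈ gap Z ψ x := by
    intro ψ y hy z hz
    have := hy (-z) (by simpa using hz)
    simp only [neg_neg, neg_lt_neg_iff] at this
    exact ⟨fun h => by linarith [this.2 h], fun h => by linarith [this.1 h]⟩
  obtain ⟨y, hy, hyr⟩ := exists_neg_of_deriv_pos (Z := -Z) (φ := fun t => -φ (-t))
    (p := p.comp (-Polynomial.X)) (r := r.comp (-Polynomial.X)) (x := -x) (w := -w)
    hZ.neg (fun z hz z' hz' h => by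
      simpa using hmono (-z') hz' (-z) hz (by simpa using h))
    (fun z hz => ⟨fun h => neg_lt_neg ((hw (-z) hz).2 (by linarith)),
      fun h => neg_lt_neg ((hw (-z) hz).1 (by linarith))⟩)
    (by simp [hr])
    (fun y hy => by
      have := hp' (-y) (key id y (by simpa [gap] using hy))
      simpa [Polynomial.derivative_comp] using this)
    (fun y hy => by
      have := hr' (-y) (key φ y hy)
      simpa [Polynomial.derivative_comp] using this)
    (fun z hz h => by simpa using hs (-z) hz (by simpa using h))
    (by simpa using hpx)
  exact ⟨-y, key φ y hy, by simpa using hyr⟩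

/-- If the derivatives of `p` and `r` have the same constant nonzero sign on corresponding gaps, and
`p`, `r` have the same signs at the marked points, then every sign taken by `p` in its gap is taken
by `r` in the corresponding one. -/
lemma exists_sign_eq {Z : Set ℝ} (hZ : Z.Finite) {φ : ℝ → ℝ}
    (hmono : ∀ z ∈ Z, ∀ z' ∈ Z, z ≤ z' → φ z ≤ φ z') {p r : Polynomial ℝ} {x w : ℝ}
    (hw : w ∈ gap Z φ x) (hr : 0 < r.degree) {s : SignType} (hs0 : s ≠ 0)
    (hp' : ∀ y ∈ gap Z id x, SignType.sign (p.derivative.eval y) = s)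
    (hr' : ∀ y ∈ gap Z φ x, SignType.sign (r.derivative.eval y) = s)
    (hs : ∀ z ∈ Z, SignType.sign (r.eval (φ z)) = SignType.sign (p.eval z)) (hx : x ∉ Z) :
    ∃ y ∈ gap Z φ x, SignType.sign (r.eval y) = SignType.sign (p.eval x) := by
  have hgap : ∀ x₁ ∈ gap Z id x, ∀ ψ : ℝ → ℝ, gap Z ψ x₁ = gap Z ψ x := by
    intro x₁ h₁ ψ
    have h : ∀ z ∈ Z, (z < x₁ ↔ z < x) ∧ (x₁ < z ↔ x < z) := by
      intro z hz
      have hne : z ≠ x := fun h => hx (h ▸ hz)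
      have := h₁ z hz
      simp only [id] at this
      rcases lt_or_gt_of_ne hne with h | h
      · have := this.1 h
        constructor <;> constructor <;> intro _ <;> linarith
      · have := this.2 h
        constructor <;> constructor <;> intro _ <;> linarith
    ext y
    exact forall₂_congr fun z hz => by rw [(h z hz).1, (h z hz).2]
  have hneg : ∀ x₁ ∈ gap Z id x, p.eval x₁ < 0 → ∃ y ∈ gap Z φ x, r.eval y < 0 := by
    intro x₁ h₁ hneg
    have hsn : ∀ z ∈ Z, p.eval z < 0 → r.eval (φ z) < 0 := fun z hz h => by
      rw [← sign_eq_neg_one_iff, hs z hz, sign_eq_neg_one_iff]; exact h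
    rw [← hgap x₁ h₁ φ] at hw hr' ⊢
    rw [← hgap x₁ h₁ id] at hp'
    cases s with
    | zero => exact absurd rfl hs0
    | pos =>
      exact exists_neg_of_deriv_pos hZ hmono hw hr (fun y hy => sign_eq_one_iff.1 (hp' y hy))
        (fun y hy => sign_eq_one_iff.1 (hr' y hy)) hsn hneg
    | neg =>
      exact exists_neg_of_deriv_neg hZ hmono hw hr (fun y hy => sign_eq_neg_one_iff.1 (hp' y hy))
        (fun y hy => sign_eq_neg_one_iff.1 (hr' y hy)) hsn hneg
  have hpos : ∀ x₁ ∈ gap Z id x, 0 < p.eval x₁ → ∃ y ∈ gap Z φ x, 0 < r.eval y := by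
    intro x₁ h₁ hpos
    have hsn : ∀ z ∈ Z, (-p).eval z < 0 → (-r).eval (φ z) < 0 := fun z hz h => by
      simp only [Polynomial.eval_neg, neg_lt_zero] at h ⊢
      rw [← sign_eq_one_iff, hs z hz, sign_eq_one_iff]; exact h
    rw [← hgap x₁ h₁ φ] at hw hr' ⊢
    rw [← hgap x₁ h₁ id] at hp'
    suffices ∃ y ∈ gap Z φ x₁, (-r).eval y < 0 by simpa using this
    cases s with
    | zero => exact absurd rfl hs0
    | pos =>
      exact exists_neg_of_deriv_neg (p := -p) hZ hmono hw (by simpa using hr)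
        (fun y hy => by simpa using sign_eq_one_iff.1 (hp' y hy))
        (fun y hy => by simpa using sign_eq_one_iff.1 (hr' y hy)) hsn
        (by simpa using hpos)
    | neg =>
      exact exists_neg_of_deriv_pos (p := -p) hZ hmono hw (by simpa using hr)
        (fun y hy => by simpa using sign_eq_neg_one_iff.1 (hp' y hy))
        (fun y hy => by simpa using sign_eq_neg_one_iff.1 (hr' y hy)) hsn
        (by simpa using hpos)
  have hxg : x ∈ gap Z id x := fun z _ => ⟨id, id⟩
  rcases lt_trichotomy (p.eval x) 0 with h | h | h
  · obtain ⟨y, hy, hyr⟩ := hneg x hxg h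
    exact ⟨y, hy, by rw [sign_neg h, sign_neg hyr]⟩
  · have hev : ∀ᶠ u in nhds x, u ∈ gap Z id x := by
      have : ∀ᶠ u in nhds x, ∀ z ∈ Z, (z < x → id z < u) ∧ (x < z → u < id z) := by
        rw [hZ.eventually_all]
        intro z hz
        rcases lt_or_gt_of_ne (show z ≠ x from fun h => hx (h ▸ hz)) with h | h
        · filter_upwards [lt_mem_nhds h] with u hu
          exact ⟨fun _ => hu, fun h' => absurd h' h.not_gt⟩
        · filter_upwards [gt_mem_nhds h] with u hu
          exact ⟨fun h' => absurd h' h.not_gt, fun _ => hu⟩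
      exact this
    have hd : p.derivative.eval x ≠ 0 := by
      intro h0
      have := hp' x hxg
      rw [h0, sign_zero] at this
      exact hs0 this.symm
    -- As `p` is not extremal at its zero `x`, it takes both signs in the gap.
    have h1 : ∃ x₁ ∈ gap Z id x, p.eval x₁ < 0 := by
      by_contra hcon
      push Not at hcon
      have : IsLocalMin (fun t => p.eval t) x := by
        filter_upwards [hev] with u hu
        rw [h]; exact hcon u hu
      exact hd (this.hasDerivAt_eq_zero (p.hasDerivAt x))
    have h2 : ∃ x₁ ∈ gap Z id x, 0 < p.eval x₁ := by
      by_contra hcon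
      push Not at hcon
      have : IsLocalMax (fun t => p.eval t) x := by
        filter_upwards [hev] with u hu
        rw [h]; exact hcon u hu
      exact hd (this.hasDerivAt_eq_zero (p.hasDerivAt x))
    obtain ⟨x₁, hx₁, hn⟩ := h1
    obtain ⟨x₂, hx₂, hq⟩ := h2
    obtain ⟨y₁, hy₁, hr₁⟩ := hneg x₁ hx₁ hn
    obtain ⟨y₂, hy₂, hr₂⟩ := hpos x₂ hx₂ hq
    obtain ⟨y, hy, hy0⟩ := intermediate_value_uIcc (a := y₁) (b := y₂) (f := fun t => r.eval t)
      r.continuous.continuousOn (Set.mem_uIcc.2 (Or.inl ⟨hr₁.le, hr₂.le⟩))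
    refine ⟨y, ?_, by simp only at hy0; rw [hy0, h]⟩
    rcases Set.mem_uIcc.1 hy with ⟨h1, h2⟩ | ⟨h1, h2⟩
    · exact mem_gap_of_mem_Icc hy₁ hy₂ h1 h2
    · exact mem_gap_of_mem_Icc hy₂ hy₁ h1 h2
  · obtain ⟨y, hy, hyr⟩ := hpos x hxg h
    exact ⟨y, hy, by rw [sign_pos h, sign_pos hyr]⟩

/-! ### Sign-preserving correspondences between two families -/

/-- `φ` carries the sign vector of the family `P` at `x` to that of `Q` at `φ x`, and preserves the
order of points with different sign vectors. Two such maps, one each way, say that `P` and `Q` have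
the same sign table. No condition is put on points with equal sign vectors, so that `φ` may be
chosen separately at each point. -/
structure SignMatch {ι : Type*} (H : Set ι) (P Q : ι → ℝ[X]) (φ : ℝ → ℝ) : Prop where
  sign_eq : ∀ i ∈ H, ∀ x, sign ((Q i).eval (φ x)) = sign ((P i).eval x)
  lt : ∀ x x', x < x' → (∃ i ∈ H, sign ((P i).eval x) ≠ sign ((P i).eval x')) → φ x < φ x'

/-- The real roots of the nonzero members of a family. -/
def familyRoots {ι : Type*} (H : Set ι) (P : ι → ℝ[X]) : Set ℝ :=
  {z | ∃ i ∈ H, P i ≠ 0 ∧ (P i).eval z = 0}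

section
variable {ι : Type*} {H : Set ι} {P Q : ι → ℝ[X]} {φ ψ : ℝ → ℝ}

lemma familyRoots_finite (hH : H.Finite) : (familyRoots H P).Finite := by
  refine (hH.biUnion (t := fun i => {z | P i ≠ 0 ∧ (P i).eval z = 0}) fun i _ => ?_).subset ?_
  · by_cases h : P i = 0
    · simp [h]
    · refine ((P i).roots.toFinset.finite_toSet).subset fun z hz => ?_
      simpa [h] using hz.2
  · rintro z ⟨i, hi, h⟩
    exact Set.mem_biUnion hi h

lemma SignMatch.mono {H' : Set ι} (h : SignMatch H P Q φ) (hs : H' ⊆ H) :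
    SignMatch H' P Q φ :=
  ⟨fun i hi => h.sign_eq i (hs hi), fun x x' hx ⟨i, hi, hne⟩ => h.lt x x' hx ⟨i, hs hi, hne⟩⟩

lemma SignMatch.eq_zero (h : SignMatch H P Q φ) {i : ι} (hi : i ∈ H) (h0 : Q i = 0) : P i = 0 := by
  apply Polynomial.funext
  intro x
  have := h.sign_eq i hi x
  simpa [h0, eq_comm (a := (0 : SignType)), sign_eq_zero_iff] using this

lemma sign_ne_of_root {z m : ℝ} (hz : z ∈ familyRoots H P) (hm : m ∉ familyRoots H P) :
    ∃ i ∈ H, sign ((P i).eval z) ≠ sign ((P i).eval m) := by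
  obtain ⟨i, hi, h0, hz⟩ := hz
  refine ⟨i, hi, fun h => hm ⟨i, hi, h0, ?_⟩⟩
  rw [hz, sign_zero] at h
  exact sign_eq_zero_iff.1 h.symm

lemma exists_not_root (hH : H.Finite) {u v : ℝ} (h : u < v) :
    ∃ m, u < m ∧ m < v ∧ m ∉ familyRoots H P := by
  obtain ⟨m, hm, hm'⟩ := (Set.Ioo_infinite h).exists_notMem_finite (familyRoots_finite (P := P) hH)
  exact ⟨m, hm.1, hm.2, hm'⟩

lemma SignMatch.lt_of_root_left (h : SignMatch H P Q φ) (hH : H.Finite) {z x : ℝ}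
    (hz : z ∈ familyRoots H P) (hzx : z < x) : φ z < φ x := by
  obtain ⟨m, h1, h2, hm⟩ := exists_not_root (P := P) hH hzx
  have hzm := sign_ne_of_root hz hm
  by_cases hx : ∃ i ∈ H, sign ((P i).eval m) ≠ sign ((P i).eval x)
  · exact (h.lt z m h1 hzm).trans (h.lt m x h2 hx)
  · push Not at hx
    obtain ⟨i, hi, hne⟩ := hzm
    exact h.lt z x hzx ⟨i, hi, by rwa [← hx i hi]⟩

lemma SignMatch.lt_of_root_right (h : SignMatch H P Q φ) (hH : H.Finite) {z x : ℝ}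
    (hz : z ∈ familyRoots H P) (hzx : x < z) : φ x < φ z := by
  obtain ⟨m, h1, h2, hm⟩ := exists_not_root (P := P) hH hzx
  have hzm := sign_ne_of_root hz hm
  by_cases hx : ∃ i ∈ H, sign ((P i).eval x) ≠ sign ((P i).eval m)
  · exact (h.lt x m h1 hx).trans (h.lt m z h2 (by simpa [ne_comm] using hzm))
  · push Not at hx
    obtain ⟨i, hi, hne⟩ := hzm
    exact h.lt x z hzx ⟨i, hi, by rw [hx i hi]; exact hne.symm⟩

lemma SignMatch.map_root (h : SignMatch H P Q φ) (h' : SignMatch H Q P ψ) {z : ℝ} :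
    φ z ∈ familyRoots H Q ↔ z ∈ familyRoots H P := by
  refine exists_congr fun i => and_congr_right fun hi => and_congr ?_ ?_
  · exact not_congr ⟨h.eq_zero hi, h'.eq_zero hi⟩
  · rw [← sign_eq_zero_iff, h.sign_eq i hi, sign_eq_zero_iff]

/-- A root count: `φ` and `ψ` are injective on roots, so both families have equally many. -/
lemma SignMatch.image_roots (h : SignMatch H P Q φ) (h' : SignMatch H Q P ψ) (hH : H.Finite) :
    φ '' familyRoots H P = familyRoots H Q := by
  have key : ∀ {P Q : ι → ℝ[X]} {φ ψ : ℝ → ℝ}, SignMatch H P Q φ → SignMatch H Q P ψ →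
      φ '' familyRoots H P ⊆ familyRoots H Q ∧
        (φ '' familyRoots H P).ncard = (familyRoots H P).ncard := by
    intro P Q φ ψ h h'
    refine ⟨Set.image_subset_iff.2 fun z hz => (h.map_root h').2 hz, ?_⟩
    refine Set.InjOn.ncard_image (StrictMonoOn.injOn (s := familyRoots H P) ?_)
    exact fun z hz z' _ hlt => h.lt_of_root_left hH hz hlt
  refine Set.eq_of_subset_of_ncard_le (key h h').1 ?_ (familyRoots_finite hH)
  rw [(key h h').2, ← (key h' h).2]
  exact Set.ncard_le_ncard (key h' h).1 (familyRoots_finite hH)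

lemma sign_eq_of_no_root {q : ℝ[X]} {u v : ℝ} (h : ∀ t ∈ Set.uIcc u v, q.eval t ≠ 0) :
    sign (q.eval u) = sign (q.eval v) := by
  have key : (0 : ℝ) ∉ Set.uIcc (q.eval u) (q.eval v) := fun h0 => by
    obtain ⟨t, ht, h0⟩ := intermediate_value_uIcc (f := fun t => q.eval t)
      q.continuous.continuousOn h0
    exact h t ht h0
  rw [Set.mem_uIcc] at key
  push Not at key
  rcases lt_trichotomy (q.eval u) 0 with hu | hu | hu
  · rw [sign_neg hu, sign_neg (key.1 hu.le)]
  · exact absurd hu (h u Set.left_mem_uIcc)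
  · by_cases hv : q.eval v ≤ 0
    · exact absurd hu (key.2 hv).not_gt
    · rw [sign_pos hu, sign_pos (not_le.1 hv)]

lemma sign_eq_of_disjoint_roots {u v : ℝ} (h : ∀ t ∈ Set.uIcc u v, t ∉ familyRoots H P) {i : ι}
    (hi : i ∈ H) : sign ((P i).eval u) = sign ((P i).eval v) := by
  by_cases h0 : P i = 0
  · simp [h0]
  · exact sign_eq_of_no_root fun t ht h1 => h t ht ⟨i, hi, h0, h1⟩

lemma gap_disjoint {Z W : Set ℝ} {x u v : ℝ} (hW : φ '' Z = W) (hx : x ∉ Z) 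
    (hu : u ∈ gap Z φ x) (hv : v ∈ gap Z φ x) : ∀ t ∈ Set.uIcc u v, t ∉ W := by
  rintro t ht htW
  rw [← hW] at htW
  obtain ⟨z, hz, rfl⟩ := htW
  have hmem : φ z ∈ gap Z φ x := by
    rcases Set.mem_uIcc.1 ht with ⟨h1, h2⟩ | ⟨h1, h2⟩
    · exact mem_gap_of_mem_Icc hu hv h1 h2
    · exact mem_gap_of_mem_Icc hv hu h1 h2
  rcases lt_or_gt_of_ne (show z ≠ x from fun h => hx (h ▸ hz)) with h | h
  · exact lt_irrefl _ ((hmem z hz).1 h)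
  · exact lt_irrefl _ ((hmem z hz).2 h)

lemma strictMonoOn_or {r : ℝ[X]} {u v : ℝ} {s : SignType}
    (h : ∀ t ∈ Set.Icc u v, sign (r.derivative.eval t) = s) :
    (s = 1 → StrictMonoOn (fun t => r.eval t) (Set.Icc u v)) ∧
      (s = -1 → StrictAntiOn (fun t => r.eval t) (Set.Icc u v)) := by
  constructor
  · rintro rfl
    apply strictMonoOn_of_deriv_pos (convex_Icc _ _) r.continuous.continuousOn
    intro t ht
    rw [Polynomial.deriv]
    exact sign_eq_one_iff.1 (h t (interior_subset ht))
  · rintro rfl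
    apply strictAntiOn_of_deriv_neg (convex_Icc _ _) r.continuous.continuousOn
    intro t ht
    rw [Polynomial.deriv]
    exact sign_eq_neg_one_iff.1 (h t (interior_subset ht))

/-- A correspondence for a family containing the derivative of `p` extends to `p` itself, if the
signs of `p` match at the roots of the family: between consecutive roots `p` is strictly
monotone, so its sign changes there are dictated by its signs at the ends. -/
lemma SignMatch.insert (h : SignMatch H P Q φ) (h' : SignMatch H Q P ψ) (hH : H.Finite) {p D : ι}
    (hD : D ∈ H) (hPD : P D = derivative (P p)) (hQD : Q D = derivative (Q p))
    (hD0 : P D ≠ 0)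
    (hroot : ∀ x ∈ familyRoots H P, sign ((Q p).eval (φ x)) = sign ((P p).eval x)) :
    ∃ φ', SignMatch (insert p H) P Q φ' := by
  classical
  set Z := familyRoots H P with hZdef
  have hZ : Z.Finite := familyRoots_finite hH
  have himg : φ '' Z = familyRoots H Q := h.image_roots h' hH
  have hQD0 : derivative (Q p) ≠ 0 := hQD ▸ fun h0 => hD0 (h.eq_zero hD h0)
  have hdeg : 0 < (Q p).degree := by
    rw [← natDegree_pos_iff_degree_pos]
    by_contra hcon
    exact hQD0 (derivative_of_natDegree_zero (by omega))
  have hmono : ∀ z ∈ Z, ∀ z' ∈ Z, z ≤ z' → φ z ≤ φ z' := fun z hz z' _ hle =>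
    hle.eq_or_lt.elim (fun h => h ▸ le_rfl) fun hlt => (h.lt_of_root_left hH hz hlt).le
  have hφgap : ∀ x, φ x ∈ gap Z φ x := fun x z hz =>
    ⟨h.lt_of_root_left hH hz, h.lt_of_root_right hH hz⟩
  have hid : id '' Z = Z := Set.image_id Z
  -- All members of the family have constant sign on each gap.
  have hsP : ∀ x ∉ Z, ∀ y ∈ gap Z id x, ∀ i ∈ H, sign ((P i).eval y) = sign ((P i).eval x) :=
    fun x hx y hy i hi => sign_eq_of_disjoint_roots
      (gap_disjoint hid hx hy (fun z _ => ⟨id, id⟩)) hi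
  have hsQ : ∀ x ∉ Z, ∀ y ∈ gap Z φ x, ∀ i ∈ H, sign ((Q i).eval y) = sign ((P i).eval x) :=
    fun x hx y hy i hi => by
      rw [← h.sign_eq i hi x]
      exact sign_eq_of_disjoint_roots (gap_disjoint himg hx hy (hφgap x)) hi
  have hDx : ∀ x ∉ Z, sign ((P D).eval x) ≠ 0 := fun x hx h0 =>
    hx ⟨D, hD, hD0, sign_eq_zero_iff.1 h0⟩
  have hex : ∀ x, ∃ y ∈ gap Z φ x, sign ((Q p).eval y) = sign ((P p).eval x) ∧
      ∀ i ∈ H, sign ((Q i).eval y) = sign ((P i).eval x) := by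
    intro x
    by_cases hx : x ∈ Z
    · exact ⟨φ x, hφgap x, hroot x hx, fun i hi => h.sign_eq i hi x⟩
    · obtain ⟨y, hy, hs⟩ := exists_sign_eq hZ hmono (p := P p) (r := Q p) (hφgap x) hdeg (hDx x hx)
        (fun y hy => by rw [← hPD]; exact hsP x hx y hy D hD)
        (fun y hy => by rw [← hQD]; exact hsQ x hx y hy D hD) hroot hx
      exact ⟨y, hy, hs, hsQ x hx y hy⟩
  choose φ' hgap hp hi using hex
  have hroot' : ∀ z ∈ Z, φ' z = φ z := by
    intro z hz
    obtain ⟨i, hiH, h0, hzi⟩ := id hz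
    have : φ' z ∈ φ '' Z := himg ▸ ⟨i, hiH, fun hQ => h0 (h.eq_zero hiH hQ), by
      rw [← sign_eq_zero_iff, hi z i hiH, sign_eq_zero_iff]; exact hzi⟩
    obtain ⟨z', hz', he⟩ := this
    rcases lt_trichotomy z' z with hlt | rfl | hlt
    · exact absurd ((hgap z z' hz').1 hlt) (he ▸ lt_irrefl _)
    · exact he.symm
    · exact absurd ((hgap z z' hz').2 hlt) (he ▸ lt_irrefl _)
  refine ⟨φ', ⟨fun i hiH x => ?_, fun x x' hlt hne => ?_⟩⟩
  · rcases hiH with rfl | hiH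
    · exact hp x
    · exact hi x i hiH
  by_cases hz : ∃ z ∈ Z, x ≤ z ∧ z ≤ x'
  · obtain ⟨z, hz, h1, h2⟩ := hz
    rcases h1.eq_or_lt with rfl | h1
    · rw [hroot' x hz]
      exact (hgap x' x hz).1 hlt
    · have h1' := (hgap x z hz).2 h1
      rcases h2.eq_or_lt with rfl | h2
      · rwa [hroot' z hz]
      · exact h1'.trans ((hgap x' z hz).1 h2)
  · push Not at hz
    have hx : x ∉ Z := fun hx => absurd (hz x hx le_rfl) hlt.le.not_gt
    have hx'g : x' ∈ gap Z id x := fun z hzZ =>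
      ⟨fun h => h.trans hlt, fun h => hz z hzZ h.le⟩
    have hx'eq : φ' x' ∈ gap Z φ x := fun z hzZ =>
      ⟨fun h => (hgap x' z hzZ).1 (h.trans hlt), fun h => (hgap x' z hzZ).2 (hz z hzZ h.le)⟩
    obtain ⟨i, hiH, hne⟩ := hne
    have hnep : sign ((P p).eval x) ≠ sign ((P p).eval x') := by
      rcases hiH with rfl | hiH
      · exact hne
      · exact absurd (hsP x hx x' hx'g i hiH).symm hne
    have hmP := strictMonoOn_or (r := P p) (u := x) (v := x') (s := sign ((P D).eval x))
      fun t ht => by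
        rw [← hPD]
        exact hsP x hx t (mem_gap_of_mem_Icc (fun z _ => ⟨id, id⟩) hx'g ht.1 ht.2) D hD
    have hmQ := strictMonoOn_or (r := Q p) (u := φ' x') (v := φ' x) (s := sign ((P D).eval x))
      fun t ht => by
        rw [← hQD]
        exact hsQ x hx t (mem_gap_of_mem_Icc hx'eq (hgap x) ht.1 ht.2) D hD
    by_contra hcon
    push Not at hcon
    have hmx : x ∈ Set.Icc x x' := ⟨le_rfl, hlt.le⟩
    have hmx' : x' ∈ Set.Icc x x' := ⟨hlt.le, le_rfl⟩
    have hmy' : φ' x' ∈ Set.Icc (φ' x') (φ' x) := ⟨le_rfl, hcon⟩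
    have hmy : φ' x ∈ Set.Icc (φ' x') (φ' x) := ⟨hcon, le_rfl⟩
    have hmono_sign : Monotone (sign : ℝ → SignType) := SignType.sign.monotone
    rcases hs : sign ((P D).eval x) with _ | _ | _
    · exact hDx x hx hs
    · have h1 := hmono_sign ((hmP.2 hs).antitoneOn hmx hmx' hlt.le)
      have h2 := hmono_sign ((hmQ.2 hs).antitoneOn hmy' hmy hcon)
      rw [hp x, hp x'] at h2
      exact hnep (le_antisymm h2 h1)
    · have h1 := hmono_sign ((hmP.1 hs).monotoneOn hmx hmx' hlt.le)
      have h2 := hmono_sign ((hmQ.1 hs).monotoneOn hmy' hmy hcon)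
      rw [hp x, hp x'] at h2
      exact hnep (le_antisymm h1 h2)

end

/-! ### Elimination of real variables -/

/-- `a` and `b` give the same sign to every member of `G`. Here `a` and `b` play the role of two
values of the parameters on which the coefficients in `A` depend. -/
def SignAgree {A : Type*} [CommRing A] (G : Set A) (a b : A →+* ℝ) : Prop :=
  ∀ c ∈ G, sign (a c) = sign (b c)

lemma map_eraseLead_of_leadingCoeff {A : Type*} [CommRing A] (a : A →+* ℝ) {q : A[X]}
    (h : a q.leadingCoeff = 0) : q.eraseLead.map a = q.map a := by
  conv_rhs => rw [← q.eraseLead_add_C_mul_X_pow]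
  rw [Polynomial.map_add, Polynomial.map_mul, map_C, h, C_0, zero_mul, add_zero]

/-- At a root of `q`, one step of the division of `p` by `q` computes `p` up to the factor
`q.leadingCoeff`. -/
lemma eval_cancelLeads {A : Type*} [CommRing A] (a : A →+* ℝ) {p q : A[X]}
    (h : q.natDegree ≤ p.natDegree) {x : ℝ} (hx : (q.map a).eval x = 0) :
    ((q.cancelLeads p).map a).eval x = a q.leadingCoeff * (p.map a).eval x := by
  simp [cancelLeads, Nat.sub_eq_zero_of_le h, hx]

/-- Elimination of one variable (Cohen–Hörmander): the sign table of a finite family of polynomials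
is determined by the signs of finitely many polynomial expressions in the coefficients. The
induction is on the multiset of degrees: a member of maximal degree is traded for its derivative
and its reductions by the others, or, where a leading coefficient vanishes, that leading term is
dropped. -/
theorem exists_signMatch {A : Type*} [CommRing A] (F : Multiset A[X]) :
    ∃ G : Set A, G.Finite ∧ ∀ a b : A →+* ℝ, SignAgree G a b →
      ∃ φ, SignMatch {p | p ∈ F} (fun p => p.map a) (fun p => p.map b) φ := by
  classical
  induction F using (InvImage.wf (fun F : Multiset A[X] => F.map natDegree)
    (Multiset.wellFounded_isDershowitzMannaLT (α := ℕ))).induction with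
  | _ F ih =>
  by_cases hconst : ∀ p ∈ F, p.natDegree = 0
  · refine ⟨{c | c ∈ F.map fun p => p.coeff 0}, Multiset.finite_toSet _, fun a b hab =>
      ⟨id, fun p hp x => ?_, fun _ _ h _ => h⟩⟩
    rw [eq_C_of_natDegree_eq_zero (hconst p hp)]
    simpa using (hab _ (Multiset.mem_map_of_mem _ hp)).symm
  push Not at hconst
  obtain ⟨p₀, hp₀, hd₀⟩ := hconst
  obtain ⟨p, hpF, hmax⟩ := Set.exists_max_image {p | p ∈ F} natDegree F.finite_toSet ⟨p₀, hp₀⟩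
  have hd : p.natDegree ≠ 0 := by have := hmax p₀ hp₀; omega
  obtain ⟨F', rfl⟩ := Multiset.exists_cons_of_mem hpF
  -- The family in which `p` is replaced by its derivative and its reductions.
  set E : Multiset A[X] := derivative p ::ₘ F' with hE
  have hEdeg : ∀ q ∈ E, q.natDegree ≤ p.natDegree := by
    intro q hq
    rcases Multiset.mem_cons.1 hq with rfl | hq
    · exact (natDegree_derivative_lt hd).le
    · exact hmax q (Multiset.mem_cons_of_mem hq)
  obtain ⟨G₁, hG₁, h₁⟩ := ih (E + E.map fun q => q.cancelLeads p) (by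
    refine ⟨F'.map natDegree, ((derivative p) ::ₘ E.map fun q => q.cancelLeads p).map natDegree,
      {p.natDegree}, by simp, ?_, ?_, ?_⟩
    · simp only [hE, Multiset.map_add, Multiset.map_singleton, ← Multiset.singleton_add]
      abel
    · simp only [Multiset.map_add, Multiset.map_singleton, ← Multiset.singleton_add]
      abel
    · intro y hy
      refine ⟨p.natDegree, by simp, ?_⟩
      obtain ⟨q, hq, rfl⟩ := Multiset.mem_map.1 hy
      rcases Multiset.mem_cons.1 hq with rfl | hq
      · exact natDegree_derivative_lt hd
      · obtain ⟨q', hq', rfl⟩ := Multiset.mem_map.1 hq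
        exact natDegree_cancelLeads_lt_of_natDegree_le_natDegree (hEdeg q' hq')
          (Nat.pos_of_ne_zero hd))
  -- The families in which one member loses its leading term.
  have h₂ : ∀ q ∈ p ::ₘ F', ∃ G : Set A, G.Finite ∧ (q.natDegree ≠ 0 → ∀ a b : A →+* ℝ,
      SignAgree G a b → ∃ φ, SignMatch {r | r ∈ q.eraseLead ::ₘ (p ::ₘ F').erase q}
        (fun p => p.map a) (fun p => p.map b) φ) := by
    intro q hq
    by_cases hq0 : q.natDegree = 0
    · exact ⟨∅, Set.finite_empty, fun h => absurd hq0 h⟩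
    obtain ⟨G, hG, h⟩ := ih (q.eraseLead ::ₘ (p ::ₘ F').erase q) (by
      refine ⟨((p ::ₘ F').erase q).map natDegree, {q.eraseLead.natDegree}, {q.natDegree},
        by simp, ?_, ?_, ?_⟩
      · simp only [Multiset.map_add, Multiset.map_singleton, ← Multiset.singleton_add]
        abel
      · conv_lhs => rw [← Multiset.cons_erase hq]
        simp only [Multiset.map_add, Multiset.map_singleton, ← Multiset.singleton_add]
        abel
      · have := q.eraseLead_natDegree_le
        simp only [Multiset.mem_singleton, forall_eq, exists_eq_left]
        omega)
    exact ⟨G, hG, fun _ => h⟩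
  choose! G₂ hG₂ h₂ using h₂
  refine ⟨G₁ ∪ ((⋃ q ∈ {q | q ∈ p ::ₘ F'}, G₂ q) ∪ leadingCoeff '' {q | q ∈ E + p ::ₘ F'}),
    hG₁.union (((Multiset.finite_toSet _).biUnion hG₂).union
      ((Multiset.finite_toSet _).image _)), fun a b hab => ?_⟩
  have hlc : ∀ q ∈ E + p ::ₘ F', sign (a q.leadingCoeff) = sign (b q.leadingCoeff) :=
    fun q hq => hab _ (Or.inr (Or.inr ⟨q, hq, rfl⟩))
  by_cases hz : ∃ q ∈ p ::ₘ F', q.natDegree ≠ 0 ∧ a q.leadingCoeff = 0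
  · obtain ⟨q, hq, hq0, hqa⟩ := hz
    have hqb : b q.leadingCoeff = 0 := by
      rw [← sign_eq_zero_iff, ← hlc q (Multiset.mem_add.2 (Or.inr hq)), hqa, sign_zero]
    obtain ⟨φ, hφ⟩ := h₂ q hq hq0 a b
      fun c hc => hab c (Or.inr (Or.inl (Set.mem_biUnion (x := q) hq hc)))
    have hrep : ∀ r ∈ p ::ₘ F', ∃ r' ∈ q.eraseLead ::ₘ (p ::ₘ F').erase q,
        r'.map a = r.map a ∧ r'.map b = r.map b := by
      intro r hr
      by_cases hrq : r = q
      · subst hrq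
        exact ⟨r.eraseLead, Multiset.mem_cons_self _ _, map_eraseLead_of_leadingCoeff a hqa,
          map_eraseLead_of_leadingCoeff b hqb⟩
      · exact ⟨r, Multiset.mem_cons_of_mem ((Multiset.mem_erase_of_ne hrq).2 hr), rfl, rfl⟩
    refine ⟨φ, fun r hr x => ?_, fun x x' hlt ⟨r, hr, hne⟩ => ?_⟩
    · obtain ⟨r', hr', ha, hb⟩ := hrep r hr
      simpa only [ha, hb] using hφ.sign_eq r' hr' x
    · obtain ⟨r', hr', ha, hb⟩ := hrep r hr
      exact hφ.lt x x' hlt ⟨r', hr', by simpa only [ha] using hne⟩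
  push Not at hz
  have hpa : a p.leadingCoeff ≠ 0 := hz p (Multiset.mem_cons_self _ _) hd
  have hab₁ : SignAgree G₁ a b := fun c hc => hab c (Or.inl hc)
  obtain ⟨φ, hφ⟩ := h₁ a b hab₁
  obtain ⟨ψ, hψ⟩ := h₁ b a fun c hc => (hab₁ c hc).symm
  have hsub : {q | q ∈ E} ⊆ {q | q ∈ E + E.map fun q => q.cancelLeads p} :=
    fun q hq => Multiset.mem_add.2 (Or.inl hq)
  have hDa : (derivative p).map a ≠ 0 := by
    rw [← derivative_map]
    intro h0
    have := derivative_eq_zero.1 h0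
    rw [natDegree_map_of_leadingCoeff_ne_zero a hpa] at this
    exact hd this
  obtain ⟨φ', hφ'⟩ := (hφ.mono hsub).insert (hψ.mono hsub) (Multiset.finite_toSet _) (p := p)
    (D := derivative p) (Multiset.mem_cons_self _ _) (derivative_map p a).symm
    (derivative_map p b).symm hDa (by
      rintro x ⟨q, hq, hq0, hqx⟩
      have hq : q ∈ E := hq
      have hqbx : (q.map b).eval (φ x) = 0 := by
        rw [← sign_eq_zero_iff, hφ.sign_eq q (hsub hq), sign_eq_zero_iff]; exact hqx
      have hqa : a q.leadingCoeff ≠ 0 := by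
        rcases Multiset.mem_cons.1 hq with rfl | hqF
        · have hc : a ((derivative p).coeff (p.natDegree - 1)) ≠ 0 := by
            rw [coeff_derivative, Nat.sub_add_cancel (Nat.one_le_iff_ne_zero.2 hd)]
            simp only [map_mul, map_add, map_natCast, map_one]
            exact mul_ne_zero hpa (by positivity)
          have hdeg : (derivative p).natDegree = p.natDegree - 1 :=
            le_antisymm (Nat.le_sub_one_of_lt (natDegree_derivative_lt hd))
              (le_natDegree_of_ne_zero fun h0 => hc (by rw [h0, map_zero]))
          rwa [leadingCoeff, hdeg]
        · by_cases hq1 : q.natDegree = 0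
          · intro h0
            rw [leadingCoeff, hq1] at h0
            refine hq0 ?_
            rw [eq_C_of_natDegree_eq_zero hq1]
            simp [h0]
          · exact hz q (Multiset.mem_cons_of_mem hqF) hq1
      have hs := hφ.sign_eq (q.cancelLeads p)
        (Multiset.mem_add.2 (Or.inr (Multiset.mem_map_of_mem _ hq))) x
      rw [eval_cancelLeads a (hEdeg q hq) hqx, eval_cancelLeads b (hEdeg q hq) hqbx, sign_mul,
        sign_mul, ← hlc q (Multiset.mem_add.2 (Or.inl hq))] at hs
      exact mul_left_cancel₀ (by simpa [sign_eq_zero_iff] using hqa) hs)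
  refine ⟨φ', hφ'.mono fun q hq => ?_⟩
  rcases Multiset.mem_cons.1 hq with rfl | hq
  · exact Set.mem_insert _ _
  · exact Set.mem_insert_of_mem _ (Multiset.mem_cons_of_mem hq)

/-- Projection theorem (Tarski–Seidenberg): which sign vectors a finite family of polynomials in `n`
variables realizes on `ℝⁿ` depends only on the signs of finitely many elements of the coefficient
ring. -/
theorem exists_signs_mv (n : ℕ) : ∀ {A : Type} [CommRing A] (F : Set (MvPolynomial (Fin n) A)),
    F.Finite → ∃ G : Set A, G.Finite ∧ ∀ a b : A →+* ℝ, SignAgree G a b →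
      ∀ x : Fin n → ℝ, ∃ y : Fin n → ℝ, ∀ p ∈ F,
        sign (MvPolynomial.eval₂ b y p) = sign (MvPolynomial.eval₂ a x p) := by
  induction n with
  | zero =>
    intro A _ F hF
    refine ⟨MvPolynomial.constantCoeff '' F, hF.image _, fun a b hab x => ⟨x, ?_⟩⟩
    intro p hp
    have := hab _ ⟨p, hp, rfl⟩
    obtain ⟨c, rfl⟩ := MvPolynomial.C_surjective (R := A) (Fin 0) p
    simpa using this.symm
  | succ n ihn =>
    intro A _ F hF
    obtain ⟨G', hG', h'⟩ := exists_signMatch (hF.toFinset.val.map (MvPolynomial.finSuccEquiv A n))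
    obtain ⟨G, hG, h⟩ := ihn G' hG'
    refine ⟨G, hG, fun a b hab x => ?_⟩
    obtain ⟨y', hy'⟩ := h a b hab (fun i => x i.succ)
    obtain ⟨φ, hφ⟩ := h' (MvPolynomial.eval₂Hom a fun i => x i.succ) (MvPolynomial.eval₂Hom b y')
      fun c hc => (hy' c hc).symm
    have key : ∀ (c : A →+* ℝ) (t : ℝ) (s : Fin n → ℝ) (p : MvPolynomial (Fin (n + 1)) A),
        ((MvPolynomial.finSuccEquiv A n p).map (MvPolynomial.eval₂Hom c s)).eval t =
          MvPolynomial.eval₂ c (Fin.cons t s : Fin (n + 1) → ℝ) p := by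
      intro c t s p
      induction p using MvPolynomial.induction_on with
      | C r => simp [MvPolynomial.finSuccEquiv_apply]
      | add p q hp hq => simp only [map_add, Polynomial.map_add, eval_add, hp, hq,
          MvPolynomial.eval₂_add]
      | mul_X p i hp =>
        rw [map_mul, Polynomial.map_mul, eval_mul, hp, MvPolynomial.eval₂_mul]
        congr 1
        refine Fin.cases ?_ (fun j => ?_) i
        · simp [MvPolynomial.finSuccEquiv_X_zero]
        · simp [MvPolynomial.finSuccEquiv_X_succ]
    refine ⟨Fin.cons (φ (x 0)) y', fun p hp => ?_⟩
    have := hφ.sign_eq (MvPolynomial.finSuccEquiv A n p)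
      (Multiset.mem_map_of_mem _ (by simpa using hp)) (x 0)
    simp only [key] at this
    rwa [show (Fin.cons (x 0) fun i => x i.succ : Fin (n + 1) → ℝ) = x from
      Fin.cons_self_tail x] at this

/-! ### Polynomial growth and the inequality -/

/-- Evaluation of a polynomial in two variables, the inner one at `u` and the outer one at `w`. -/
noncomputable def evalAt (u w : ℝ) : ℝ[X][X] →+* ℝ := eval₂RingHom (evalRingHom u) w

lemma evalAt_eq (u w : ℝ) (c : ℝ[X][X]) : evalAt u w c = (c.map (evalRingHom u)).eval w := by
  simp [evalAt, eval_map]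

/-- For large `u`, the roots `w` of `c(u, w)` are smaller than a fixed power of `u`: beyond it the
term of highest degree in `w` dominates. -/
lemma exists_no_root_beyond (c : ℝ[X][X]) (hc : c ≠ 0) : ∃ N : ℕ, ∀ M ≥ N, ∀ᶠ u in Filter.atTop,
    ∀ w, u ^ M ≤ w → evalAt u w c ≠ 0 := by
  set d := c.natDegree with hd
  set e := c.leadingCoeff with he
  have he0 : e ≠ 0 := leadingCoeff_ne_zero.2 hc
  refine ⟨(Finset.range d).sup (fun i => (c.coeff i).natDegree) + 1, fun N hN => ?_⟩
  have hlead : ∀ i ∈ Finset.range d, ∀ᶠ u : ℝ in Filter.atTop,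
      |(c.coeff i).eval u| ≤ (1 / (d + 1 : ℝ)) * (|e.eval u| * |u ^ N|) := by
    intro i hi
    have hlt : (c.coeff i).degree < (e * X ^ N).degree := by
      rw [degree_mul, degree_X_pow, degree_eq_natDegree he0]
      refine degree_le_natDegree.trans_lt ?_
      have := Finset.le_sup (f := fun i => (c.coeff i).natDegree) hi
      exact_mod_cast (by omega : (c.coeff i).natDegree < e.natDegree + N)
    have := (isLittleO_atTop_of_degree_lt _ _ hlt).bound (c := 1 / (d + 1 : ℝ)) (by positivity)
    filter_upwards [this] with u hu
    simpa [abs_mul] using hu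
  filter_upwards [(Finset.eventually_all _).2 hlead, eventually_atTop_not_isRoot e he0,
    Filter.eventually_ge_atTop 1] with u hu hroot hu1 w hw h0
  have hw1 : 1 ≤ w := (one_le_pow₀ hu1).trans hw
  have hepos : 0 < |e.eval u| := abs_pos.2 hroot
  have huN : 0 < u ^ N := by positivity
  rw [evalAt_eq, eval_map, eval₂_eq_sum_range, Finset.sum_range_succ] at h0
  simp only [coe_evalRingHom] at h0
  have hsum : |e.eval u * w ^ d| ≤ ∑ i ∈ Finset.range d, |(c.coeff i).eval u * w ^ i| := by
    rw [show e.eval u * w ^ d = -∑ i ∈ Finset.range d, (c.coeff i).eval u * w ^ i from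
      eq_neg_of_add_eq_zero_right h0, abs_neg]
    exact Finset.abs_sum_le_sum_abs _ _
  have hterm : ∀ i ∈ Finset.range d, |(c.coeff i).eval u * w ^ i| ≤
      (1 / (d + 1 : ℝ)) * (|e.eval u| * w ^ d) := by
    intro i hi
    have h1 := hu i hi
    have hid : i + 1 ≤ d := Finset.mem_range.1 hi
    rw [abs_of_pos huN] at h1
    rw [abs_mul, abs_of_nonneg (by positivity : 0 ≤ w ^ i)]
    calc |(c.coeff i).eval u| * w ^ i
        ≤ (1 / (d + 1 : ℝ)) * (|e.eval u| * w) * w ^ i := by gcongr; exact h1.trans (by gcongr)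
      _ = (1 / (d + 1 : ℝ)) * (|e.eval u| * w ^ (i + 1)) := by ring
      _ ≤ _ := by gcongr
  have h2 := hsum.trans (Finset.sum_le_sum hterm)
  rw [Finset.sum_const, Finset.card_range, nsmul_eq_mul, abs_mul,
    abs_of_nonneg (by positivity : 0 ≤ w ^ d)] at h2
  have hpos : 0 < |e.eval u| * w ^ d := by positivity
  have : (d : ℝ) * (1 / (d + 1 : ℝ) * (|e.eval u| * w ^ d)) < |e.eval u| * w ^ d := by
    rw [← mul_assoc, mul_one_div]
    apply mul_lt_of_lt_one_left hpos
    rw [div_lt_one (by positivity)]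
    linarith
  linarith

lemma exists_sign_const (G : Set ℝ[X][X]) (hG : G.Finite) : ∃ N : ℕ, 1 ≤ N ∧
    ∃ u₀ : ℝ, 1 ≤ u₀ ∧ ∀ u ≥ u₀, ∀ w ≥ u ^ N, ∀ w' ≥ u ^ N,
      SignAgree G (evalAt u w) (evalAt u w') := by
  have h : ∀ c : ℝ[X][X], ∃ N : ℕ, c ≠ 0 → ∀ M ≥ N, ∀ᶠ u in Filter.atTop,
      ∀ w, u ^ M ≤ w → evalAt u w c ≠ 0 := by
    intro c
    by_cases hc : c = 0
    · exact ⟨0, fun h => absurd hc h⟩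
    · obtain ⟨N, hN⟩ := exists_no_root_beyond c hc
      exact ⟨N, fun _ => hN⟩
  choose N hN using h
  set M := hG.toFinset.sup N + 1 with hM
  have hev : ∀ᶠ u : ℝ in Filter.atTop, ∀ c ∈ G, c ≠ 0 → ∀ w, u ^ M ≤ w → evalAt u w c ≠ 0 := by
    rw [hG.eventually_all]
    intro c hc
    by_cases h0 : c = 0
    · simp [h0]
    · have := Finset.le_sup (f := N) (hG.mem_toFinset.2 hc)
      filter_upwards [hN c h0 M (by omega)] with u hu _
      exact hu
  obtain ⟨u₀, hu₀⟩ := Filter.eventually_atTop.1 hev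
  refine ⟨M, by omega, max u₀ 1, le_max_right _ _, fun u hu w hw w' hw' c hc => ?_⟩
  by_cases h0 : c = 0
  · simp [h0]
  simp only [evalAt_eq]
  refine sign_eq_of_no_root fun t ht => ?_
  rw [← evalAt_eq]
  refine hu₀ u ((le_max_left _ _).trans hu) c hc h0 t ?_
  rcases Set.mem_uIcc.1 ht with ⟨h1, -⟩ | ⟨h1, -⟩
  · exact hw.trans h1
  · exact hw'.trans h1

lemma exists_growth_bound {n : ℕ} (g : MvPolynomial (Fin n) ℝ) : ∃ (C : ℝ) (k : ℕ), 0 ≤ C ∧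
    ∀ x : Fin n → ℝ, |MvPolynomial.eval x g| ≤ C * (1 + ∑ i, x i ^ 2) ^ k := by
  have h1 : ∀ x : Fin n → ℝ, 1 ≤ 1 + ∑ i, x i ^ 2 := fun x =>
    le_add_of_nonneg_right (Finset.sum_nonneg fun i _ => sq_nonneg _)
  induction g using MvPolynomial.induction_on with
  | C r => exact ⟨|r|, 0, abs_nonneg _, fun x => by simp⟩
  | add p q hp hq =>
    obtain ⟨C₁, k₁, h₁, hp⟩ := hp
    obtain ⟨C₂, k₂, h₂, hq⟩ := hq
    refine ⟨C₁ + C₂, k₁ + k₂, by positivity, fun x => ?_⟩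
    rw [map_add, add_mul]
    refine (abs_add_le _ _).trans (add_le_add ((hp x).trans ?_) ((hq x).trans ?_))
    · exact mul_le_mul_of_nonneg_left (pow_le_pow_right₀ (h1 x) (by omega)) h₁
    · exact mul_le_mul_of_nonneg_left (pow_le_pow_right₀ (h1 x) (by omega)) h₂
  | mul_X p i hp =>
    obtain ⟨C₁, k₁, h₁, hp⟩ := hp
    refine ⟨C₁, k₁ + 1, h₁, fun x => ?_⟩
    rw [map_mul, abs_mul, MvPolynomial.eval_X, pow_succ, ← mul_assoc]
    refine mul_le_mul (hp x) ?_ (abs_nonneg _)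
      (mul_nonneg h₁ (pow_nonneg (zero_le_one.trans (h1 x)) _))
    have := Finset.single_le_sum (f := fun i => x i ^ 2) (fun i _ => sq_nonneg _)
      (Finset.mem_univ i)
    nlinarith [sq_abs (x i), sq_nonneg (|x i| - 1)]

/-- On the compact sets `{|x|² ≤ u, u g(x)² ≥ 1}` the polynomial `f` is bounded below by a negative
power of `u`. -/
lemma exists_lower_bound {n : ℕ} {f g : MvPolynomial (Fin n) ℝ}
    (hf0 : ∀ x : Fin n → ℝ, 0 ≤ MvPolynomial.eval x f)
    (hg : ∀ x : Fin n → ℝ, MvPolynomial.eval x f = 0 → MvPolynomial.eval x g = 0) :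
    ∃ N : ℕ, 1 ≤ N ∧ ∃ u₀ : ℝ, 1 ≤ u₀ ∧ ∀ u ≥ u₀, ∀ x : Fin n → ℝ, ∑ i, x i ^ 2 ≤ u →
      1 ≤ u * MvPolynomial.eval x g ^ 2 → 1 < u ^ N * MvPolynomial.eval x f := by
  -- The conditions `|x|² ≤ u`, `u g(x)² ≥ 1`, `w f(x) ≤ 1` say that these three polynomials, with
  -- coefficients in `ℝ[u][w]`, are nonnegative.
  set U : ℝ[X][X] := C X
  set ι : ℝ →+* ℝ[X][X] := C.comp C
  set e₁ : MvPolynomial (Fin n) ℝ[X][X] := MvPolynomial.C U - ∑ i, MvPolynomial.X i ^ 2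
  set e₂ : MvPolynomial (Fin n) ℝ[X][X] := MvPolynomial.C U * MvPolynomial.map ι g ^ 2 - 1
  set e₃ : MvPolynomial (Fin n) ℝ[X][X] := 1 - MvPolynomial.C X * MvPolynomial.map ι f
  have hι : ∀ u w, (evalAt u w).comp ι = RingHom.id ℝ := fun u w => by
    ext; simp [evalAt, ι]
  have hmap : ∀ u w x (h : MvPolynomial (Fin n) ℝ),
      MvPolynomial.eval₂ (evalAt u w) x (MvPolynomial.map ι h) = MvPolynomial.eval x h := by
    intro u w x h
    rw [MvPolynomial.eval₂_map, hι, MvPolynomial.eval₂_id]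
  have hU : ∀ u w, evalAt u w U = u := fun u w => by simp [evalAt, U]
  have hW : ∀ u w, evalAt u w X = w := fun u w => by simp [evalAt]
  have he₁ : ∀ u w x, MvPolynomial.eval₂ (evalAt u w) x e₁ = u - ∑ i, x i ^ 2 := by
    intro u w x
    simp [e₁, MvPolynomial.eval₂_sum, MvPolynomial.eval₂_pow, hU]
  have he₂ : ∀ u w x, MvPolynomial.eval₂ (evalAt u w) x e₂ =
      u * MvPolynomial.eval x g ^ 2 - 1 := by
    intro u w x
    simp [e₂, MvPolynomial.eval₂_pow, hU, hmap]
  have he₃ : ∀ u w x, MvPolynomial.eval₂ (evalAt u w) x e₃ = 1 - w * MvPolynomial.eval x f := by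
    intro u w x
    simp [e₃, hW, hmap]
  obtain ⟨G, hG, hproj⟩ := exists_signs_mv n {e₁, e₂, e₃} (by simp)
  obtain ⟨N, hN, u₀, hu₀, hsign⟩ := exists_sign_const G hG
  refine ⟨N, hN, u₀, hu₀, fun u hu x hx hgx => ?_⟩
  by_contra hcon
  push Not at hcon
  -- For fixed `u`, `f` has a positive minimum on `K`, so the three conditions are contradictory for
  -- `w'` large, while they hold at `x` for `w = u ^ N`; the two sign patterns are the same.
  set K : Set (Fin n → ℝ) := {y | ∑ i, y i ^ 2 ≤ u ∧ 1 ≤ u * MvPolynomial.eval y g ^ 2}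
  have hgc : Continuous fun y : Fin n → ℝ => MvPolynomial.eval y g := MvPolynomial.continuous_eval g
  have hKcl : IsClosed K := by
    have h1 : Continuous fun y : Fin n → ℝ => ∑ i, y i ^ 2 := by fun_prop
    have h2 : Continuous fun y : Fin n → ℝ => u * MvPolynomial.eval y g ^ 2 := by fun_prop
    exact (isClosed_le h1 continuous_const).inter (isClosed_le continuous_const h2)
  have hKc : IsCompact K := by
    refine (isCompact_Icc (a := fun _ : Fin n => -(1 + u)) (b := fun _ => 1 + u)).of_isClosed_subset
      hKcl ?_
    rintro y ⟨hy, -⟩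
    have : ∀ i, |y i| ≤ 1 + u := fun i => by
      have := Finset.single_le_sum (f := fun i => y i ^ 2) (fun i _ => sq_nonneg _)
        (Finset.mem_univ i)
      nlinarith [sq_abs (y i), sq_nonneg (|y i| - 1)]
    exact ⟨fun i => (abs_le.1 (this i)).1, fun i => (abs_le.1 (this i)).2⟩
  obtain ⟨y₀, hy₀, hmin⟩ := hKc.exists_isMinOn ⟨x, hx, hgx⟩
    (MvPolynomial.continuous_eval f).continuousOn
  have hpos : 0 < MvPolynomial.eval y₀ f := by
    refine (hf0 y₀).lt_of_ne' fun h => ?_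
    have := hy₀.2
    rw [hg y₀ h] at this
    norm_num at this
  set w' := max (u ^ N) (2 / MvPolynomial.eval y₀ f)
  obtain ⟨y, hy⟩ := hproj (evalAt u (u ^ N)) (evalAt u w')
    (hsign u hu _ le_rfl _ (le_max_left _ _)) x
  have h₁ := hy e₁ (by simp)
  have h₂ := hy e₂ (by simp)
  have h₃ := hy e₃ (by simp)
  have hnn : ∀ {s t : ℝ}, sign s = sign t → 0 ≤ t → 0 ≤ s := fun h ht => by
    rw [← sign_nonneg_iff, h, sign_nonneg_iff]; exact ht
  have h₁ := hnn h₁ (by rw [he₁]; linarith)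
  have h₂ := hnn h₂ (by rw [he₂]; linarith)
  have h₃ := hnn h₃ (by rw [he₃]; linarith)
  rw [he₁] at h₁
  rw [he₂] at h₂
  rw [he₃] at h₃
  have hyK : y ∈ K := ⟨by linarith, by linarith⟩
  have hle : MvPolynomial.eval y₀ f ≤ MvPolynomial.eval y f := hmin hyK
  have hw' : 2 / MvPolynomial.eval y₀ f ≤ w' := le_max_right _ _
  rw [div_le_iff₀ hpos] at hw'
  have hw0 : 0 ≤ w' := le_trans (by positivity) (le_max_right _ _)
  nlinarith [mul_le_mul_of_nonneg_left hle hw0]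

end Lojasiewicz

theorem stmt_11 (n : ℕ) (a : Ideal (MvPolynomial (Fin n) ℝ))
    (f : MvPolynomial (Fin n) ℝ)
    (hf0 : ∀ x : Fin n → ℝ, 0 ≤ MvPolynomial.eval x f)
    (hfz : {x : Fin n → ℝ | MvPolynomial.eval x f = 0} = ZP n a)
    (g : MvPolynomial (Fin n) ℝ) :
    (∀ x ∈ ZP n a, MvPolynomial.eval x g = 0) ↔
      ∃ (m : ℕ) (_ : 1 ≤ m) (l : ℕ) (C : ℝ), 0 < C ∧
        ∀ x : Fin n → ℝ,
          0 ≤ C * (1 + ∑ i, (x i) ^ 2) ^ l * MvPolynomial.eval x f -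
              (MvPolynomial.eval x g) ^ (2 * m) := by
  rw [← hfz]
  constructor
  · intro hg
    obtain ⟨N, hN, u₀, hu₀, hlow⟩ := Lojasiewicz.exists_lower_bound hf0 hg
    obtain ⟨B, k, hB, hbound⟩ := Lojasiewicz.exists_growth_bound g
    refine ⟨N, hN, N + 2 * k * N, (u₀ * (1 + B ^ 2)) ^ N, by positivity, fun x => ?_⟩
    rw [sub_nonneg]
    set F := MvPolynomial.eval x f
    set c := MvPolynomial.eval x g
    have hS : 0 ≤ ∑ i, x i ^ 2 := Finset.sum_nonneg fun i _ => sq_nonneg _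
    set S := ∑ i, x i ^ 2
    have hF : 0 ≤ F := hf0 x
    by_cases hc : c = 0
    · rw [hc, zero_pow (by omega)]
      positivity
    have hc2 : 0 < c ^ 2 := by positivity
    -- A scale `u ≥ u₀` with `|x|² ≤ u` and `u g(x)² ≥ 1`.
    set u := u₀ * (1 + S) * (1 + c ^ 2) / c ^ 2 with hu
    have huc : u * c ^ 2 = u₀ * (1 + S) * (1 + c ^ 2) := by
      rw [hu]; field_simp
    have h1c : 1 ≤ (1 + c ^ 2) / c ^ 2 := by rw [one_le_div hc2]; linarith
    have hue : u = u₀ * (1 + S) * ((1 + c ^ 2) / c ^ 2) := by rw [hu, mul_div_assoc]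
    have hSu : u₀ * (1 + S) ≤ u := by
      rw [hue]; exact le_mul_of_one_le_right (by positivity) h1c
    have key := hlow u (by nlinarith) x (by nlinarith) (by
      rw [huc]
      exact one_le_mul_of_one_le_of_one_le
        (one_le_mul_of_one_le_of_one_le hu₀ (by linarith)) (by linarith))
    have hcb : 1 + c ^ 2 ≤ (1 + B ^ 2) * (1 + S) ^ (2 * k) := by
      have h1 : c ^ 2 ≤ (B * (1 + S) ^ k) ^ 2 := by
        rw [← sq_abs]; exact pow_le_pow_left₀ (abs_nonneg _) (hbound x) 2
      have h2 : 1 ≤ (1 + S) ^ (2 * k) := one_le_pow₀ (by linarith)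
      calc 1 + c ^ 2 ≤ (1 + S) ^ (2 * k) + (B * (1 + S) ^ k) ^ 2 := add_le_add h2 h1
        _ = _ := by ring
    calc c ^ (2 * N) = (c ^ 2) ^ N * 1 := by rw [pow_mul, mul_one]
      _ ≤ (c ^ 2) ^ N * (u ^ N * F) := by gcongr
      _ = (u * c ^ 2) ^ N * F := by rw [mul_pow]; ring
      _ = (u₀ * (1 + S) * (1 + c ^ 2)) ^ N * F := by rw [huc]
      _ ≤ (u₀ * (1 + S) * ((1 + B ^ 2) * (1 + S) ^ (2 * k))) ^ N * F := by gcongr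
      _ = _ := by
        rw [pow_add, pow_mul (1 + S) (2 * k) N]
        simp only [mul_pow]
        ring
  · rintro ⟨m, hm, l, C, -, h⟩ x hx
    have h0 := h x
    rw [show MvPolynomial.eval x f = 0 from hx, mul_zero, zero_sub, neg_nonneg, pow_mul] at h0
    have h1 : (MvPolynomial.eval x g ^ 2) ^ m = 0 := le_antisymm h0 (by positivity)
    exact pow_eq_zero_iff two_ne_zero |>.1 (pow_eq_zero_iff (by omega) |>.1 h1)
end
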